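/- The number α₈ = √17 · ln((√17 − 1)/(√17 + 1)) has irrationality measure at most 3.47835; that is, for every real κ > 3.47835, there exist only finitely many pairs (p, q) with p ∈ ℤ and q a positive integer such that |α₈ − p/q| < q^(−κ). -/

import Mathlib

/-!
Put `r = (√17 - 1) / 4`, so that the number is `α = √17 * (2 * log r)`, and let `R_j` be the product
of `X.choose (7n)`, `(X - n).choose (5n)`, `(X - 2n).choose (3n)` and the `j`-th power of a linear
factor, symmetric or antisymmetric about `(7n - 1) / 2`. Since `R_j` has double zeros at
`n, …, 6n - 1`, the series `∑ d/dν (R_j(ν) * r ^ (2ν))` over `ν ≥ k` does not depend on the start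
`k` in this range, and the symmetry makes it a multiple of `A + B * α` with `A, B` rational with
denominator dividing `lcm (1, …, 7n)`. Many primes can moreover be cancelled from that denominator;
the prime number theorem, here deduced from a Wiener–Ikehara argument, measures the gain.

The size of `B` is read off from its positive series. For the size of `A + B * α`, take `n = 17N`
and write the series as an integral of `R_j(s) * r ^ (2s)` against `cosh⁻²` on the line
`Re s = 64N - 1/2`; there the binomials are quotients of Gamma functions, estimated by rotating
Euler's integrals. For each `p / q` one of the forms `j = 0, 1, 2` has `A * q + B * p ≠ 0`:
otherwise a linear form in the two series would vanish on `R_0 * G` for all `G` with `deg G < 3`,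
hence for all `G` by the shift `ν ↦ ν + 1`, which the `2πi`-periodicity of the exponential forbids.
The bound then follows from the usual criterion for linear forms.
-/

section FejerKernel

open Real Set Filter Topology MeasureTheory

/-- The triangle function `t ↦ (1 - |t|)⁺`, the inverse Fourier transform of the Fejér kernel. -/
noncomputable def triangle (t : ℝ) : ℝ := max 0 (1 - |t|)

/-- The Fejér kernel `v ↦ (sin (v / 2) / (v / 2)) ^ 2` on the real line, normalised to be `1` at
the origin. -/
noncomputable def fejerKernel (v : ℝ) : ℝ := sinc (v / 2) ^ 2

lemma continuous_triangle : Continuous triangle := by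
  unfold triangle
  fun_prop

lemma triangle_neg (t : ℝ) : triangle (-t) = triangle t := by
  simp only [triangle, abs_neg]

lemma triangle_of_mem_Icc {t : ℝ} (ht : t ∈ Icc 0 1) : triangle t = 1 - t := by
  rw [triangle, abs_of_nonneg ht.1, max_eq_right (by linarith [ht.2])]

lemma triangle_of_notMem_Icc {t : ℝ} (ht : t ∉ Icc (-1) 1) : triangle t = 0 := by
  refine max_eq_left ?_
  contrapose! ht
  exact abs_le.1 (by linarith)

lemma integrable_triangle : Integrable triangle :=
  continuous_triangle.integrable_of_hasCompactSupport <|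
    HasCompactSupport.of_support_subset_isCompact isCompact_Icc fun _ ht => by
      by_contra h
      exact ht (triangle_of_notMem_Icc h)

lemma fejerKernel_zero : fejerKernel 0 = 1 := by simp [fejerKernel]

lemma fejerKernel_eq_of_ne_zero {v : ℝ} (hv : v ≠ 0) :
    fejerKernel v = 2 * (1 - cos v) / v ^ 2 := by
  have hcos : cos v = 1 - 2 * sin (v / 2) ^ 2 := by
    rw [sin_sq_eq_half_sub, mul_div_cancel₀ v two_ne_zero]
    ring
  rw [fejerKernel, sinc_of_ne_zero (by positivity), hcos]
  field_simp
  ring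

lemma continuous_fejerKernel : Continuous fejerKernel := by
  unfold fejerKernel
  fun_prop

lemma fejerKernel_nonneg (v : ℝ) : 0 ≤ fejerKernel v := sq_nonneg _

lemma fejerKernel_le (v : ℝ) : fejerKernel v ≤ 8 * (1 + v ^ 2)⁻¹ := by
  rw [← div_eq_mul_inv, le_div_iff₀ (by positivity)]
  have hsinc : fejerKernel v ≤ 1 := (sq_le_one_iff_abs_le_one _).2 (abs_sinc_le_one _)
  have hsin : fejerKernel v * v ^ 2 ≤ 4 := by
    rcases eq_or_ne v 0 with rfl | hv
    · simp
    · rw [fejerKernel_eq_of_ne_zero hv, div_mul_cancel₀ _ (by positivity)]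
      linarith [neg_one_le_cos v]
  linarith

lemma integrable_fejerKernel : Integrable fejerKernel :=
  (integrable_inv_one_add_sq.const_mul 8).mono' continuous_fejerKernel.aestronglyMeasurable <|
    Eventually.of_forall fun v => by
      rw [norm_of_nonneg (fejerKernel_nonneg v)]
      exact fejerKernel_le v

lemma integral_fejerKernel_pos : 0 < ∫ v, fejerKernel v :=
  integral_pos_of_integrable_nonneg_nonzero (x := 0) continuous_fejerKernel
    integrable_fejerKernel fejerKernel_nonneg (by simp [fejerKernel_zero])

lemma integral_one_sub_mul_cos (v : ℝ) :
    ∫ t in (0 : ℝ)..1, (1 - t) * (2 * cos (t * v)) = fejerKernel v := by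
  rcases eq_or_ne v 0 with rfl | hv
  · simp only [mul_zero, cos_zero, fejerKernel_zero]
    rw [intervalIntegral.integral_mul_const, intervalIntegral.integral_sub (by simp) (by simp)]
    norm_num
  · have hderiv (t : ℝ) : HasDerivAt
        (fun t => 2 * ((1 - t) * sin (t * v) / v - cos (t * v) / v ^ 2))
        ((1 - t) * (2 * cos (t * v))) t := by
      have hlin : HasDerivAt (fun t : ℝ => t * v) v t := hasDerivAt_mul_const v
      have := ((((hasDerivAt_id t).const_sub 1).mul hlin.sin).div_const v).sub
        (hlin.cos.div_const (v ^ 2)) |>.const_mul 2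
      refine this.congr_deriv ?_
      simp only [id]
      field_simp
      ring
    rw [intervalIntegral.integral_eq_sub_of_hasDerivAt (fun t _ => hderiv t)
      (Continuous.intervalIntegrable (by fun_prop) _ _), fejerKernel_eq_of_ne_zero hv]
    simp only [one_mul, zero_mul, sin_zero, cos_zero]
    ring

lemma integral_triangle_mul_cexp (v : ℝ) :
    ∫ t, (triangle t : ℂ) * Complex.exp (t * v * Complex.I) = fejerKernel v := by
  set g : ℝ → ℂ := fun t => triangle t * Complex.exp (t * v * Complex.I) with hg
  have hcont : Continuous g := by
    have := continuous_triangle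
    fun_prop
  have hsupp : ∫ t, g t = ∫ t in (-1 : ℝ)..1, g t := by
    rw [intervalIntegral.integral_of_le (by norm_num), ← integral_Icc_eq_integral_Ioc,
      setIntegral_eq_integral_of_forall_compl_eq_zero]
    intro t ht
    simp only [hg, triangle_of_notMem_Icc ht, Complex.ofReal_zero, zero_mul]
  have heven : ∀ t ∈ uIcc (0 : ℝ) 1, g (-t) + g t = ((1 - t) * (2 * cos (t * v)) : ℝ) := by
    intro t ht
    rw [uIcc_of_le zero_le_one] at ht
    simp only [hg, triangle_neg, triangle_of_mem_Icc ht]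
    push_cast
    rw [Complex.two_cos]
    ring_nf
  have hreflect : ∫ t in (-1 : ℝ)..0, g t = ∫ t in (0 : ℝ)..1, g (-t) := by
    rw [intervalIntegral.integral_comp_neg, neg_zero]
  rw [hsupp, ← intervalIntegral.integral_add_adjacent_intervals (b := 0)
    (hcont.intervalIntegrable _ _) (hcont.intervalIntegrable _ _), hreflect,
    ← intervalIntegral.integral_add (Continuous.intervalIntegrable (by fun_prop) _ _)
    (hcont.intervalIntegrable _ _), intervalIntegral.integral_congr heven,
    intervalIntegral.integral_ofReal, integral_one_sub_mul_cos]

end FejerKernel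

section Tauberian

open Real Set Filter Topology MeasureTheory

/-- The average of `b` around `y` against the Fejér kernel, rescaled to concentrate at scale
`1 / lam`. The total mass of the averaging kernel is `∫ v, fejerKernel v`, not `1`. -/
noncomputable def fejerMean (lam : ℝ) (b : ℝ → ℝ) (y : ℝ) : ℝ :=
  ∫ v, b (y - v / lam) * fejerKernel v

lemma fejerMean_eq_integral_fourier {lam : ℝ} (hlam : 0 < lam) {g : ℝ → ℝ} (hg : Integrable g)
    (y : ℝ) :
    (fejerMean lam g y : ℂ) = lam * ∫ t : ℝ, (triangle t : ℂ) *
      (Complex.exp (t * (lam * y) * Complex.I) *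
        ∫ u : ℝ, (g u : ℂ) * Complex.exp (-(lam * t * Complex.I) * u)) := by
  have hscale : fejerMean lam g y = lam * ∫ u, g u * fejerKernel (lam * (y - u)) := by
    have hdiv := Measure.integral_comp_div (fun x => g (y - x) * fejerKernel (lam * x)) lam
    have hshift := integral_sub_left_eq_self (fun u => g u * fejerKernel (lam * (y - u))) volume y
    simp only [sub_sub_cancel, smul_eq_mul, abs_of_pos hlam, mul_div_cancel₀ _ hlam.ne']
      at hdiv hshift
    rw [fejerMean, hdiv, hshift]
  have hprod : Integrable (Function.uncurry fun u t : ℝ =>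
      ((g u : ℂ) * triangle t) * Complex.exp (t * (lam * (y - u)) * Complex.I)) := by
    refine (hg.ofReal (𝕜 := ℂ)).mul_prod (integrable_triangle.ofReal (𝕜 := ℂ)) |>.mul_bdd (c := 1)
      (Continuous.aestronglyMeasurable (by fun_prop)) (Eventually.of_forall fun z => ?_)
    rw [← Complex.norm_exp_ofReal_mul_I (z.2 * (lam * (y - z.1)))]
    push_cast
    rfl
  have hexp (u t : ℝ) : Complex.exp (t * (lam * (y - u)) * Complex.I) =
      Complex.exp (t * (lam * y) * Complex.I) * Complex.exp (-(lam * t * Complex.I) * u) := by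
    rw [← Complex.exp_add]
    ring_nf
  calc (fejerMean lam g y : ℂ)
      = lam * ∫ u : ℝ, (g u : ℂ) * fejerKernel (lam * (y - u)) := by
        rw [hscale, Complex.ofReal_mul, ← integral_complex_ofReal]
        simp only [Complex.ofReal_mul]
    _ = lam * ∫ u : ℝ, ∫ t : ℝ,
          ((g u : ℂ) * triangle t) * Complex.exp (t * (lam * (y - u)) * Complex.I) := by
        congr 2 with u
        rw [← integral_triangle_mul_cexp, ← integral_const_mul]
        push_cast
        simp only [mul_assoc]
    _ = _ := by
        rw [integral_integral_swap hprod]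
        congr 2 with t
        rw [← integral_const_mul, ← integral_const_mul]
        congr 1 with u
        rw [hexp]
        ring

section BoundedFunctions

variable {b : ℝ → ℝ} {B : ℝ}

lemma integrable_comp_mul_fejerKernel (hbm : Measurable b) (hB : ∀ u, |b u| ≤ B) (lam y : ℝ) :
    Integrable fun v => b (y - v / lam) * fejerKernel v :=
  integrable_fejerKernel.bdd_mul (c := B) (hbm.comp (by fun_prop)).aestronglyMeasurable
    (Eventually.of_forall fun _ => hB _)

lemma abs_mul_exp_neg_le (hb0 : ∀ u ≤ 0, b u = 0) (hB : ∀ u, |b u| ≤ B) {s : ℝ} (hs : 0 ≤ s)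
    (u : ℝ) : |b u * exp (-s * u)| ≤ B := by
  rcases le_or_gt u 0 with hu | hu
  · rw [hb0 u hu, zero_mul, abs_zero]
    exact (abs_nonneg _).trans (hB 0)
  · rw [abs_mul, abs_exp]
    have hexp : exp (-s * u) ≤ 1 := exp_le_one_iff.2 (by nlinarith)
    exact (mul_le_of_le_one_right (abs_nonneg _) hexp).trans (hB u)

lemma integrable_mul_exp_neg (hbm : Measurable b) (hb0 : ∀ u ≤ 0, b u = 0) (hB : ∀ u, |b u| ≤ B)
    {s : ℝ} (hs : 0 < s) : Integrable fun u => b u * exp (-s * u) := by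
  have hdom : Integrable ((Ioi 0).indicator fun u => B * exp (-s * u)) :=
    (integrable_indicator_iff measurableSet_Ioi).2 ((exp_neg_integrableOn_Ioi 0 hs).const_mul B)
  refine hdom.mono' (by fun_prop) (Eventually.of_forall fun u => ?_)
  rcases le_or_gt u 0 with hu | hu
  · rw [hb0 u hu, indicator_of_notMem (notMem_Ioi.2 hu), zero_mul, norm_zero]
  · rw [indicator_of_mem (mem_Ioi.2 hu), norm_mul, norm_eq_abs, norm_of_nonneg (exp_pos _).le]
    gcongr
    exact hB u

lemma tendsto_fejerMean_mul_exp_neg (hbm : Measurable b) (hb0 : ∀ u ≤ 0, b u = 0)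
    (hB : ∀ u, |b u| ≤ B) (lam y : ℝ) :
    Tendsto (fun s => fejerMean lam (fun u => b u * exp (-s * u)) y) (𝓝[>] 0)
      (𝓝 (fejerMean lam b y)) := by
  refine tendsto_integral_filter_of_dominated_convergence (fun v => B * fejerKernel v)
    (Eventually.of_forall fun s => ?_) ?_ (integrable_fejerKernel.const_mul B)
    (Eventually.of_forall fun v => ?_)
  · have := continuous_fejerKernel.measurable
    exact Measurable.aestronglyMeasurable (by fun_prop)
  · filter_upwards [self_mem_nhdsWithin] with s hs
    refine Eventually.of_forall fun v => ?_
    rw [norm_mul, norm_of_nonneg (fejerKernel_nonneg v)]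
    gcongr
    · exact fejerKernel_nonneg v
    · exact abs_mul_exp_neg_le hb0 hB (le_of_lt hs) _
  · have hcont : Continuous fun s : ℝ =>
        b (y - v / lam) * exp (-s * (y - v / lam)) * fejerKernel v := by fun_prop
    simpa using (hcont.tendsto 0).mono_left nhdsWithin_le_nhds

lemma tendsto_integral_triangle_mul {F : ℝ → ℝ → ℂ}
    (hF : ContinuousOn (Function.uncurry F) (Ici 0 ×ˢ univ)) :
    Tendsto (fun s => ∫ t, (triangle t : ℂ) * F s t) (𝓝[>] 0)
      (𝓝 (∫ t, (triangle t : ℂ) * F 0 t)) := by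
  have hcont : ContinuousOn (fun s => ∫ t, (triangle t : ℂ) * F s t) (Ici 0) := by
    refine continuousOn_integral_of_compact_support (isCompact_Icc (a := -1) (b := 1)) ?_ ?_
    · have := continuous_triangle
      exact ContinuousOn.mul (by fun_prop) hF
    · intro s t _ ht
      rw [triangle_of_notMem_Icc ht, Complex.ofReal_zero, zero_mul]
  exact (hcont 0 self_mem_Ici).mono_left (nhdsWithin_mono _ Ioi_subset_Ici_self)

variable {H : ℂ → ℂ}

lemma fejerMean_eq_integral_boundary (hbm : Measurable b) (hb0 : ∀ u ≤ 0, b u = 0)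
    (hB : ∀ u, |b u| ≤ B) (hH : ContinuousOn H {w | 0 ≤ w.re})
    (hL : ∀ w : ℂ, 0 < w.re → ∫ u : ℝ, (b u : ℂ) * Complex.exp (-w * u) = H w)
    {lam : ℝ} (hlam : 0 < lam) (y : ℝ) :
    (fejerMean lam b y : ℂ) = lam * ∫ t : ℝ, (triangle t : ℂ) *
      (Complex.exp (t * (lam * y) * Complex.I) * H (lam * t * Complex.I)) := by
  have hF : ContinuousOn (Function.uncurry fun s t : ℝ =>
      Complex.exp (t * (lam * y) * Complex.I) * H (s + lam * t * Complex.I)) (Ici 0 ×ˢ univ) :=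
    ContinuousOn.mul (by fun_prop) (hH.comp (by fun_prop) fun z hz => by simpa using hz.1)
  have hright := (tendsto_integral_triangle_mul hF).const_mul (lam : ℂ)
  simp only [Complex.ofReal_zero, zero_add] at hright
  have hleft := (Complex.continuous_ofReal.tendsto _).comp
    (tendsto_fejerMean_mul_exp_neg hbm hb0 hB lam y)
  refine tendsto_nhds_unique (hleft.congr' ?_) hright
  filter_upwards [self_mem_nhdsWithin] with s (hs : 0 < s)
  have hfourier (t : ℝ) : ∫ u : ℝ, ((b u * exp (-s * u) : ℝ) : ℂ) *
      Complex.exp (-(lam * t * Complex.I) * u) = H (s + lam * t * Complex.I) := by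
    rw [← hL _ (by simpa using hs)]
    congr 1 with u
    push_cast
    rw [mul_assoc, ← Complex.exp_add]
    ring_nf
  simp only [Function.comp_apply,
    fejerMean_eq_integral_fourier hlam (integrable_mul_exp_neg hbm hb0 hB hs), hfourier]

theorem tendsto_fejerMean_zero (hbm : Measurable b) (hb0 : ∀ u ≤ 0, b u = 0)
    (hB : ∀ u, |b u| ≤ B) (hH : ContinuousOn H {w | 0 ≤ w.re})
    (hL : ∀ w : ℂ, 0 < w.re → ∫ u : ℝ, (b u : ℂ) * Complex.exp (-w * u) = H w)
    {lam : ℝ} (hlam : 0 < lam) : Tendsto (fejerMean lam b) atTop (𝓝 0) := by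
  have hfreq : Tendsto (fun y : ℝ => -(lam * y / (2 * π))) atTop (cocompact ℝ) :=
    (tendsto_neg_atTop_atBot.comp
      ((tendsto_id.const_mul_atTop hlam).atTop_div_const two_pi_pos)).mono_right atBot_le_cocompact
  have hlim := ((Real.tendsto_integral_exp_smul_cocompact
    fun t : ℝ => (triangle t : ℂ) * H (lam * t * Complex.I)).comp hfreq).const_mul (lam : ℂ)
  rw [mul_zero] at hlim
  have hcomplex : Tendsto (fun y => (fejerMean lam b y : ℂ)) atTop (𝓝 0) := by
    refine hlim.congr fun y => ?_
    rw [fejerMean_eq_integral_boundary hbm hb0 hB hH hL hlam]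
    simp only [Function.comp_apply]
    congr 2 with t
    have hphase : 2 * π * -(t * -(lam * y / (2 * π))) = t * (lam * y) := by field_simp
    rw [Circle.smul_def, Real.fourierChar_apply, smul_eq_mul, hphase]
    push_cast
    ring
  exact (Complex.continuous_re.tendsto 0).comp hcomplex

end BoundedFunctions

lemma abs_indicator_one_le (S : Set ℝ) (u : ℝ) : |S.indicator (1 : ℝ → ℝ) u| ≤ 1 := by
  simpa using norm_indicator_le_norm_self (1 : ℝ → ℝ) u

lemma tendsto_fejerMean_indicator_Ioi (lam : ℝ) :
    Tendsto (fejerMean lam ((Ioi 0).indicator 1)) atTop (𝓝 (∫ v, fejerKernel v)) := by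
  refine tendsto_integral_filter_of_dominated_convergence fejerKernel
    (Eventually.of_forall fun y => (integrable_comp_mul_fejerKernel
      (measurable_one.indicator measurableSet_Ioi) (abs_indicator_one_le _)
      lam y).aestronglyMeasurable)
    (Eventually.of_forall fun y => Eventually.of_forall fun v => ?_) integrable_fejerKernel
    (Eventually.of_forall fun v => ?_)
  · rw [norm_mul, norm_of_nonneg (fejerKernel_nonneg v)]
    exact mul_le_of_le_one_left (fejerKernel_nonneg v) (abs_indicator_one_le _ _)
  · refine tendsto_const_nhds.congr' ?_
    filter_upwards [eventually_gt_atTop (v / lam)] with y hy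
    rw [indicator_of_mem (mem_Ioi.2 (sub_pos.2 hy)), Pi.one_apply, one_mul]

lemma tendsto_setIntegral_fejerKernel :
    Tendsto (fun δ : ℝ => ∫ v in Icc (-δ⁻¹) δ⁻¹, fejerKernel v) (𝓝[>] 0)
      (𝓝 (∫ v, fejerKernel v)) := by
  have hlim := (intervalIntegral_tendsto_integral integrable_fejerKernel tendsto_neg_atTop_atBot
    tendsto_id).comp tendsto_inv_nhdsGT_zero
  refine hlim.congr' ?_
  filter_upwards [self_mem_nhdsWithin] with δ (hδ : 0 < δ)
  rw [Function.comp_apply, id, intervalIntegral.integral_of_le (by linarith [inv_pos.2 hδ]),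
    integral_Icc_eq_integral_Ioc]

lemma abs_div_div_le {δ V v : ℝ} (hδ : 0 < δ) (hV : 0 < V) (hv : v ∈ Icc (-V) V) :
    |v / (V / δ)| ≤ δ := by
  rw [abs_div, abs_of_pos (div_pos hV hδ), div_le_iff₀ (div_pos hV hδ), mul_div_cancel₀ _ hδ.ne']
  exact abs_le.2 hv

section SlowDecrease

variable {a : ℝ → ℝ} {B : ℝ}

theorem tendsto_fejerMean_of_laplace (ham : Measurable a) (ha0 : ∀ u ≤ 0, a u = 0)
    (hB : ∀ u, |a u| ≤ B) {H : ℂ → ℂ} (hH : ContinuousOn H {w | 0 ≤ w.re})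
    (hL : ∀ w : ℂ, 0 < w.re →
      ∫ u in Ioi (0 : ℝ), ((a u - 1 : ℝ) : ℂ) * Complex.exp (-w * u) = H w)
    {lam : ℝ} (hlam : 0 < lam) :
    Tendsto (fejerMean lam a) atTop (𝓝 (∫ v, fejerKernel v)) := by
  set b : ℝ → ℝ := (Ioi 0).indicator fun u => a u - 1 with hb
  have hsplit : a = fun u => b u + (Ioi 0).indicator 1 u := by
    ext u
    rcases le_or_gt u 0 with hu | hu
    · simp [hb, hu, ha0 u hu]
    · simp [hb, hu]
  have hbm : Measurable b := (ham.sub_const 1).indicator measurableSet_Ioi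
  have hbB : ∀ u, |b u| ≤ B + 1 := fun u => by
    refine (norm_indicator_le_norm_self (fun u => a u - 1) u).trans ?_
    exact (norm_sub_le _ _).trans (by simpa using hB u)
  have hlaplace : ∀ w : ℂ, 0 < w.re → ∫ u : ℝ, (b u : ℂ) * Complex.exp (-w * u) = H w := by
    intro w hw
    rw [← hL w hw, ← integral_indicator measurableSet_Ioi]
    congr 1 with u
    by_cases hu : u ∈ Ioi (0 : ℝ) <;> simp [hb, hu]
  have hzero := tendsto_fejerMean_zero hbm
    (fun u hu => indicator_of_notMem (notMem_Ioi.2 hu) _) hbB hH hlaplace hlam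
  have hsum := hzero.add (tendsto_fejerMean_indicator_Ioi lam)
  rw [zero_add] at hsum
  refine hsum.congr fun y => ?_
  rw [fejerMean, fejerMean, ← integral_add (integrable_comp_mul_fejerKernel hbm hbB _ _)
    (integrable_comp_mul_fejerKernel (measurable_one.indicator measurableSet_Ioi)
      (abs_indicator_one_le _) _ _),
    fejerMean, hsplit]
  simp only [add_mul]

variable (ham : Measurable a) (ha : ∀ u, 0 ≤ a u) (hB : ∀ u, a u ≤ B)
  (hmono : Monotone fun u => a u * exp u)

include hmono

lemma le_mul_exp_sub_of_monotone {u v : ℝ} (huv : u ≤ v) : a u ≤ a v * exp (v - u) := by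
  rw [exp_sub, ← mul_div_assoc, le_div_iff₀ (exp_pos u)]
  exact hmono huv

include ham ha hB

lemma mul_exp_mul_setIntegral_le_fejerMean {δ V : ℝ} (hδ : 0 < δ) (hV : 0 < V) (y : ℝ) :
    a y * exp (-(2 * δ)) * ∫ v in Icc (-V) V, fejerKernel v ≤ fejerMean (V / δ) a (y + δ) := by
  have habs : ∀ u, |a u| ≤ B := fun u => (abs_of_nonneg (ha u)).trans_le (hB u)
  have hint := integrable_comp_mul_fejerKernel ham habs (V / δ) (y + δ)
  rw [← integral_const_mul]
  refine (setIntegral_mono_on (integrable_fejerKernel.integrableOn.const_mul _) hint.integrableOn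
    measurableSet_Icc fun v hv => ?_).trans
    (setIntegral_le_integral hint (Eventually.of_forall fun v =>
      mul_nonneg (ha _) (fejerKernel_nonneg v)))
  obtain ⟨hlo, hhi⟩ := abs_le.1 (abs_div_div_le hδ hV hv)
  refine mul_le_mul_of_nonneg_right ?_ (fejerKernel_nonneg v)
  rw [exp_neg, ← div_eq_mul_inv, div_le_iff₀ (exp_pos _)]
  refine (le_mul_exp_sub_of_monotone hmono (v := y + δ - v / (V / δ)) (by linarith)).trans ?_
  gcongr
  · exact ha _
  · linarith

lemma fejerMean_le_mul_exp_mul_setIntegral_add {δ V : ℝ} (hδ : 0 < δ) (hV : 0 < V) (y : ℝ) :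
    fejerMean (V / δ) a (y - δ) ≤ a y * exp (2 * δ) * (∫ v in Icc (-V) V, fejerKernel v) +
      B * ((∫ v, fejerKernel v) - ∫ v in Icc (-V) V, fejerKernel v) := by
  have habs : ∀ u, |a u| ≤ B := fun u => (abs_of_nonneg (ha u)).trans_le (hB u)
  have hint := integrable_comp_mul_fejerKernel ham habs (V / δ) (y - δ)
  have hcompl := integral_add_compl (μ := volume) (measurableSet_Icc (a := -V) (b := V))
    integrable_fejerKernel
  rw [fejerMean, ← integral_add_compl measurableSet_Icc hint, ← hcompl, add_sub_cancel_left,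
    ← integral_const_mul, ← integral_const_mul]
  refine add_le_add
    (setIntegral_mono_on hint.integrableOn (integrable_fejerKernel.integrableOn.const_mul _)
      measurableSet_Icc fun v hv => ?_)
    (setIntegral_mono hint.integrableOn (integrable_fejerKernel.integrableOn.const_mul _)
      fun v => mul_le_mul_of_nonneg_right (hB _) (fejerKernel_nonneg v))
  obtain ⟨hlo, hhi⟩ := abs_le.1 (abs_div_div_le hδ hV hv)
  refine mul_le_mul_of_nonneg_right ?_ (fejerKernel_nonneg v)
  refine (le_mul_exp_sub_of_monotone hmono (v := y) (by linarith)).trans ?_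
  gcongr
  · exact ha _
  · linarith

theorem tendsto_one_of_tendsto_fejerMean
    (hmean : ∀ lam > 0, Tendsto (fejerMean lam a) atTop (𝓝 (∫ v, fejerKernel v))) :
    Tendsto a atTop (𝓝 1) := by
  set I := ∫ v, fejerKernel v
  have hI : 0 < I := integral_fejerKernel_pos
  have hexp (c : ℝ) : Tendsto (fun δ : ℝ => exp (c * δ)) (𝓝[>] 0) (𝓝 1) := by
    have : Continuous fun δ : ℝ => exp (c * δ) := by fun_prop
    simpa using (this.tendsto 0).mono_left nhdsWithin_le_nhds
  have htrunc := tendsto_setIntegral_fejerKernel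
  have hpos := htrunc.eventually_const_lt hI
  refine tendsto_order.2 ⟨fun l hl => ?_, fun u hu => ?_⟩
  · have hlim := (((hexp 2).const_mul l).mul htrunc).add ((htrunc.const_sub I).const_mul B)
    have hlt : l * 1 * I + B * (I - I) < I := by nlinarith
    obtain ⟨δ, hδlt, hδpos, hδ⟩ :=
      ((hlim.eventually_lt_const hlt).and (hpos.and self_mem_nhdsWithin)).exists
    have hV : 0 < δ⁻¹ := inv_pos.2 hδ
    filter_upwards [((hmean _ (div_pos hV hδ)).comp
      (tendsto_atTop_add_const_right _ (-δ) tendsto_id)).eventually_const_lt hδlt] with y hy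
    have hsand := hy.trans_le
      (fejerMean_le_mul_exp_mul_setIntegral_add ham ha hB hmono hδ hV y)
    have hcancel := lt_of_mul_lt_mul_right (lt_of_add_lt_add_right hsand) hδpos.le
    exact lt_of_mul_lt_mul_right hcancel (exp_pos _).le
  · have hlim := ((hexp (-2)).const_mul u).mul htrunc
    have hlt : I < u * 1 * I := by nlinarith
    obtain ⟨δ, hδlt, hδpos, hδ⟩ :=
      ((hlim.eventually_const_lt hlt).and (hpos.and self_mem_nhdsWithin)).exists
    have hV : 0 < δ⁻¹ := inv_pos.2 hδ
    filter_upwards [((hmean _ (div_pos hV hδ)).comp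
      (tendsto_atTop_add_const_right _ δ tendsto_id)).eventually_lt_const hδlt] with y hy
    have hsand := (mul_exp_mul_setIntegral_le_fejerMean ham ha hB hmono hδ hV y).trans_lt hy
    rw [neg_mul] at hsand
    have hcancel := lt_of_mul_lt_mul_right hsand hδpos.le
    exact lt_of_mul_lt_mul_right hcancel (exp_pos _).le

end SlowDecrease

end Tauberian

section PrimeNumberTheorem

open Real Set Filter Topology MeasureTheory
open ArithmeticFunction hiding log

/-- The normalised Chebyshev function `ψ(eᵘ) e⁻ᵘ` in the logarithmic variable `u`. -/
noncomputable def psiExp (u : ℝ) : ℝ := Chebyshev.psi (exp u) * exp (-u)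

/-- The continuous extension to `0 ≤ re w` of `w ↦ ∫₀^∞ (ψ(eᵘ) e⁻ᵘ - 1) e^(-wu) du`; the residue
class function is `w ↦ -ζ'/ζ(1 + w) - 1 / w` for the trivial modulus. -/
noncomputable def psiLaplace (w : ℂ) : ℂ :=
  (vonMangoldt.LFunctionResidueClassAux (1 : ZMod 1) (1 + w) - 1) / (1 + w)

lemma measurable_psiExp : Measurable psiExp :=
  (Chebyshev.psi_mono.measurable.comp measurable_exp).mul (by fun_prop)

lemma psiExp_nonneg (u : ℝ) : 0 ≤ psiExp u :=
  mul_nonneg (Chebyshev.psi_nonneg _) (exp_pos _).le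

lemma psiExp_le (u : ℝ) : psiExp u ≤ log 4 + 4 := by
  rw [psiExp, exp_neg, ← div_eq_mul_inv, div_le_iff₀ (exp_pos u)]
  exact Chebyshev.psi_le_const_mul_self (exp_pos u).le

lemma psiExp_of_nonpos {u : ℝ} (hu : u ≤ 0) : psiExp u = 0 := by
  rw [psiExp, Chebyshev.psi_eq_zero_of_le_one (exp_le_one_iff.2 hu), zero_mul]

lemma abs_psiExp_le (u : ℝ) : |psiExp u| ≤ log 4 + 4 :=
  (abs_of_nonneg (psiExp_nonneg u)).trans_le (psiExp_le u)

lemma psiExp_mul_exp (u : ℝ) : psiExp u * exp u = Chebyshev.psi (exp u) := by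
  rw [psiExp, mul_assoc, ← exp_add, neg_add_cancel, exp_zero, mul_one]

lemma integral_psi_mul_cpow (w : ℂ) :
    ∫ t in Ioi (1 : ℝ), (Chebyshev.psi t : ℂ) * (t : ℂ) ^ (-(1 + w + 1)) =
      ∫ u in Ioi (0 : ℝ), (psiExp u : ℂ) * Complex.exp (-w * u) := by
  have himage : exp '' Ioi (0 : ℝ) = Ioi 1 := by
    ext x
    constructor
    · rintro ⟨u, hu, rfl⟩
      exact one_lt_exp_iff.2 hu
    · intro hx
      exact ⟨log x, log_pos hx, exp_log (zero_lt_one.trans hx)⟩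
  rw [← himage, integral_image_eq_integral_abs_deriv_smul measurableSet_Ioi
    (fun x _ => (hasDerivAt_exp x).hasDerivWithinAt) exp_injective.injOn]
  refine setIntegral_congr_fun measurableSet_Ioi fun u _ => ?_
  have hexp : Complex.exp u * Complex.exp (u * (-(1 + w + 1))) =
      Complex.exp (-u) * Complex.exp (-w * u) := by
    rw [← Complex.exp_add, ← Complex.exp_add]
    ring_nf
  simp only [abs_of_pos (exp_pos u), psiExp, Complex.real_smul]
  rw [Complex.cpow_def_of_ne_zero (by exact_mod_cast (exp_pos u).ne'),
    ← Complex.ofReal_log (exp_pos u).le, log_exp]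
  push_cast
  linear_combination (Chebyshev.psi (exp u) : ℂ) * hexp

lemma isBigO_psi_natCast : (fun n : ℕ => Chebyshev.psi n) =O[atTop] fun n : ℕ => (n : ℝ) := by
  refine Asymptotics.IsBigO.of_bound (log 4 + 4) (Eventually.of_forall fun n => ?_)
  rw [norm_of_nonneg (Chebyshev.psi_nonneg _), norm_of_nonneg n.cast_nonneg]
  exact Chebyshev.psi_le_const_mul_self n.cast_nonneg

lemma LSeries_vonMangoldt_eq_mul_integral {w : ℂ} (hw : 0 < w.re) :
    LSeries (fun n => (Λ n : ℂ)) (1 + w) =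
      (1 + w) * ∫ u in Ioi (0 : ℝ), (psiExp u : ℂ) * Complex.exp (-w * u) := by
  rw [LSeries_eq_mul_integral_of_nonneg (fun n => Λ n) zero_le_one (by simpa using hw)
    (by simpa [Chebyshev.psi, ← Finset.Icc_add_one_left_eq_Ioc] using isBigO_psi_natCast)
    fun n => vonMangoldt_nonneg, ← integral_psi_mul_cpow]
  simp [Chebyshev.psi, ← Finset.Icc_add_one_left_eq_Ioc]

lemma LFunctionResidueClassAux_one_eq {w : ℂ} (hw : 0 < w.re) :
    vonMangoldt.LFunctionResidueClassAux (1 : ZMod 1) (1 + w) =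
      LSeries (fun n => (Λ n : ℂ)) (1 + w) - 1 / w := by
  have hresidue : ∀ n, vonMangoldt.residueClass (1 : ZMod 1) n = Λ n := fun n => by
    simp [vonMangoldt.residueClass, Set.indicator, eq_iff_true_of_subsingleton]
  have heq := vonMangoldt.eqOn_LFunctionResidueClassAux (q := 1) (a := 1) isUnit_one
    (show 1 < (1 + w).re by simpa using hw)
  simpa only [hresidue, Nat.totient_one, Nat.cast_one, inv_one, add_sub_cancel_left] using heq

lemma continuousOn_psiLaplace : ContinuousOn psiLaplace {w | 0 ≤ w.re} := by
  refine ContinuousOn.div (((vonMangoldt.continuousOn_LFunctionResidueClassAux (1 : ZMod 1)).comp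
    (f := fun w => 1 + w) (by fun_prop) fun w hw => ?_).sub continuousOn_const) (by fun_prop)
    fun w hw h => ?_
  · simpa using hw
  · have hre := congrArg Complex.re h
    rw [Complex.add_re, Complex.one_re, Complex.zero_re] at hre
    linarith [show 0 ≤ w.re from hw]

lemma integral_psiExp_sub_one_mul_cexp {w : ℂ} (hw : 0 < w.re) :
    ∫ u in Ioi (0 : ℝ), ((psiExp u - 1 : ℝ) : ℂ) * Complex.exp (-w * u) = psiLaplace w := by
  have hw0 : w ≠ 0 := by
    rintro rfl
    simp at hw
  have hw1 : 1 + w ≠ 0 := fun h => by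
    have hre := congrArg Complex.re h
    rw [Complex.add_re, Complex.one_re, Complex.zero_re] at hre
    linarith
  have hneg : (-w).re < 0 := by simpa using hw
  have hexp := integrableOn_exp_mul_complex_Ioi hneg 0
  have hpsi : IntegrableOn (fun u : ℝ => (psiExp u : ℂ) * Complex.exp (-w * u)) (Ioi 0) :=
    hexp.bdd_mul (c := log 4 + 4)
      (Complex.measurable_ofReal.comp measurable_psiExp).aestronglyMeasurable
      (Eventually.of_forall fun u => by simpa using abs_psiExp_le u)
  simp only [Complex.ofReal_sub, Complex.ofReal_one, sub_mul, one_mul]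
  rw [integral_sub hpsi hexp, integral_exp_mul_complex_Ioi hneg 0, psiLaplace,
    LFunctionResidueClassAux_one_eq hw, LSeries_vonMangoldt_eq_mul_integral hw]
  simp only [Complex.ofReal_zero, mul_zero, Complex.exp_zero]
  field_simp
  ring

theorem tendsto_psiExp : Tendsto psiExp atTop (𝓝 1) := by
  refine tendsto_one_of_tendsto_fejerMean measurable_psiExp psiExp_nonneg psiExp_le ?_
    fun lam hlam => tendsto_fejerMean_of_laplace measurable_psiExp (fun u => psiExp_of_nonpos)
      abs_psiExp_le continuousOn_psiLaplace (fun w => integral_psiExp_sub_one_mul_cexp) hlam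
  simp only [psiExp_mul_exp]
  exact Chebyshev.psi_mono.comp exp_monotone

theorem tendsto_psi_div_self : Tendsto (fun x => Chebyshev.psi x / x) atTop (𝓝 1) := by
  refine (tendsto_psiExp.comp tendsto_log_atTop).congr' ?_
  filter_upwards [eventually_gt_atTop 0] with x hx
  rw [Function.comp_apply, psiExp, exp_log hx, exp_neg, exp_log hx, div_eq_mul_inv]

lemma isLittleO_sqrt_id : sqrt =o[atTop] fun x : ℝ => x := by
  refine Asymptotics.isLittleO_of_tendsto'
    ((eventually_ne_atTop 0).mono fun x hx h => absurd h hx)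
    (tendsto_sqrt_atTop.inv_tendsto_atTop.congr fun x => ?_)
  rw [sqrt_div_self, Pi.inv_apply]

theorem tendsto_theta_div_self : Tendsto (fun x => Chebyshev.theta x / x) atTop (𝓝 1) := by
  have hdiff := (Chebyshev.isBigO_psi_sub_theta_sqrt.trans_isLittleO
    isLittleO_sqrt_id).tendsto_div_nhds_zero
  have hlim := tendsto_psi_div_self.sub hdiff
  rw [sub_zero] at hlim
  refine hlim.congr fun x => ?_
  rw [Pi.sub_apply]
  ring

end PrimeNumberTheorem

section IrrationalityCriterion

open Real Set Filter Topology

lemma finite_setOf_abs_sub_div_lt_of_denom_le (α κ : ℝ) (hκ : 0 ≤ κ) {M : ℕ}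
    (hM : ∀ (p : ℤ) (q : ℕ+), |α - p / (q : ℕ)| < ((q : ℕ) : ℝ) ^ (-κ) → (q : ℕ) ≤ M) :
    {pq : ℤ × ℕ+ | |α - pq.1 / (pq.2 : ℕ)| < ((pq.2 : ℕ) : ℝ) ^ (-κ)}.Finite := by
  set W : ℤ := ⌈(|α| + 1) * M⌉
  have hbox : (Icc (-W) W ×ˢ {q : ℕ+ | (q : ℕ) ≤ M}).Finite :=
    (finite_Icc _ _).prod ((finite_Iic M).preimage PNat.coe_injective.injOn)
  refine hbox.subset ?_
  rintro ⟨p, q⟩ hpq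
  have hpq : |α - p / (q : ℕ)| < ((q : ℕ) : ℝ) ^ (-κ) := hpq
  refine ⟨abs_le.1 ?_, hM p q hpq⟩
  have hq_one : (1 : ℝ) ≤ (q : ℕ) := by exact_mod_cast q.pos
  have hq_le : ((q : ℕ) : ℝ) ≤ M := by exact_mod_cast hM p q hpq
  have hpow : ((q : ℕ) : ℝ) ^ (-κ) ≤ 1 :=
    rpow_le_one_of_one_le_of_nonpos hq_one (neg_nonpos.2 hκ)
  have hdiv : |(p : ℝ) / (q : ℕ)| ≤ |α| + 1 := by
    have htri := abs_sub_abs_le_abs_sub ((p : ℝ) / (q : ℕ)) α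
    rw [abs_sub_comm] at htri
    linarith
  rw [abs_div, abs_of_pos (zero_lt_one.trans_le hq_one),
    div_le_iff₀ (zero_lt_one.trans_le hq_one)] at hdiv
  have hp : |(p : ℝ)| ≤ W := hdiv.trans <| (by gcongr : _ ≤ (|α| + 1) * M).trans (Int.le_ceil _)
  exact_mod_cast hp

lemma one_le_of_ne_zero_linear_form {A B p : ℤ} {q : ℕ+} (h : A * (q : ℤ) + B * p ≠ 0) (α : ℝ) :
    1 ≤ (q : ℕ) * |A + B * α| + (q : ℕ) * |(B : ℝ)| * |α - p / (q : ℕ)| := by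
  have hq : (0 : ℝ) < (q : ℕ) := by exact_mod_cast q.pos
  have hint : (1 : ℝ) ≤ |(A : ℝ) * (q : ℕ) + B * p| := by exact_mod_cast Int.one_le_abs h
  have hid : (A : ℝ) * (q : ℕ) + B * p =
      (q : ℕ) * (A + B * α) - (q : ℕ) * B * (α - p / (q : ℕ)) := by
    field_simp
    ring
  rw [hid] at hint
  refine hint.trans ((abs_sub _ _).trans_eq ?_)
  rw [abs_mul, abs_mul, abs_mul, abs_of_pos hq]

lemma eventually_denom_growth_bound {σ τ κ : ℝ} (hκ : 1 + σ / τ < κ) :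
    ∀ᶠ Q : ℝ in atTop, Q * (exp σ * (2 * Q) ^ (σ / τ)) * Q ^ (-κ) ≤ 1 / 2 := by
  have hlim :
      Tendsto (fun Q : ℝ => exp σ * 2 ^ (σ / τ) * Q ^ (-(κ - (1 + σ / τ)))) atTop (𝓝 0) := by
    simpa using (tendsto_rpow_neg_atTop (sub_pos.2 hκ)).const_mul (exp σ * 2 ^ (σ / τ))
  filter_upwards [hlim.eventually_le_const (by norm_num : (0 : ℝ) < 1 / 2),
    eventually_gt_atTop 0] with Q hQ hQ_pos
  refine le_of_eq_of_le ?_ hQ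
  rw [mul_rpow zero_le_two hQ_pos.le,
    show -(κ - (1 + σ / τ)) = 1 + σ / τ + -κ by ring, rpow_add hQ_pos, rpow_add hQ_pos, rpow_one]
  ring

lemma exists_nat_exp_mul_bounds {σ τ X : ℝ} (hσ : 0 < σ) (hτ : 0 < τ) (hX : 1 ≤ X) :
    ∃ N : ℕ, X ≤ exp (τ * N) ∧ exp (σ * N) ≤ exp σ * X ^ (σ / τ) := by
  have hX_pos : 0 < X := zero_lt_one.trans_le hX
  refine ⟨⌈log X / τ⌉₊, ?_, ?_⟩
  · rw [← log_le_iff_le_exp hX_pos, ← div_le_iff₀' hτ]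
    exact Nat.le_ceil _
  · rw [rpow_def_of_pos hX_pos, ← exp_add, exp_le_exp]
    calc σ * ⌈log X / τ⌉₊ ≤ σ * (log X / τ + 1) := by
          gcongr
          exact (Nat.ceil_lt_add_one (div_nonneg (log_nonneg hX) hτ.le)).le
      _ = σ + log X * (σ / τ) := by ring

theorem finite_setOf_abs_sub_div_lt_of_linear_forms {α σ τ κ : ℝ} (hσ : 0 < σ) (hτ : 0 < τ)
    (hκ : 1 + σ / τ < κ)
    (h : ∀ᶠ N : ℕ in atTop, ∀ (p : ℤ) (q : ℕ+), ∃ A B : ℤ, A * (q : ℤ) + B * p ≠ 0 ∧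
      |(B : ℝ)| ≤ exp (σ * N) ∧ |A + B * α| ≤ exp (-(τ * N))) :
    {pq : ℤ × ℕ+ | |α - pq.1 / (pq.2 : ℕ)| < ((pq.2 : ℕ) : ℝ) ^ (-κ)}.Finite := by
  obtain ⟨N₀, hN₀⟩ := eventually_atTop.1 h
  have hlog : Tendsto (fun Q : ℝ => log (2 * Q) / τ) atTop atTop :=
    (tendsto_log_atTop.comp (tendsto_id.const_mul_atTop zero_lt_two)).atTop_div_const hτ
  obtain ⟨M, hM⟩ := eventually_atTop.1 (tendsto_natCast_atTop_atTop.eventually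
    ((eventually_denom_growth_bound hκ).and (hlog.eventually_ge_atTop (N₀ : ℝ))))
  refine finite_setOf_abs_sub_div_lt_of_denom_le α κ (by linarith [div_pos hσ hτ]) (M := M)
    fun p q hpq => ?_
  by_contra! hMq
  obtain ⟨hgrowth, hN₀_le⟩ := hM q hMq.le
  set Q : ℝ := ((q : ℕ) : ℝ)
  have hQ_one : 1 ≤ Q := Nat.one_le_cast.2 q.pos
  have hQ : 0 < Q := zero_lt_one.trans_le hQ_one
  obtain ⟨N, hQN, hNQ⟩ :=
    exists_nat_exp_mul_bounds hσ hτ (show (1 : ℝ) ≤ 2 * Q by linarith)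
  have hN₀N : N₀ ≤ N := by
    have hlogN : log (2 * Q) / τ ≤ N := by
      rwa [div_le_iff₀' hτ, log_le_iff_le_exp (by positivity)]
    exact_mod_cast hN₀_le.trans hlogN
  obtain ⟨A, B, hne, hB, hform⟩ := hN₀ N hN₀N p q
  have hsmall : Q * |A + B * α| ≤ 1 / 2 := by
    refine (mul_le_mul_of_nonneg_left hform hQ.le).trans ?_
    rw [exp_neg, ← div_eq_mul_inv, div_le_iff₀ (exp_pos _)]
    linarith
  have happrox : Q * |(B : ℝ)| * |α - p / Q| < 1 / 2 :=
    calc Q * |(B : ℝ)| * |α - p / Q|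
        ≤ Q * (exp σ * (2 * Q) ^ (σ / τ)) * |α - p / Q| := by gcongr; exact hB.trans hNQ
      _ < Q * (exp σ * (2 * Q) ^ (σ / τ)) * Q ^ (-κ) := by gcongr
      _ ≤ 1 / 2 := hgrowth
  linarith [one_le_of_ne_zero_linear_form hne α]

end IrrationalityCriterion

section BinomialPolynomial

open Polynomial Finset

/-- The binomial coefficient `X.choose m` as a polynomial over `ℚ`. -/
noncomputable def binomPoly (m : ℕ) : ℚ[X] := C (m.factorial : ℚ)⁻¹ * descPochhammer ℚ m

lemma eval_binomPoly (m : ℕ) (x : ℚ) :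
    (binomPoly m).eval x = (m.factorial : ℚ)⁻¹ * ∏ i ∈ range m, (x - i) := by
  rw [binomPoly, eval_mul, eval_C, descPochhammer_eval_eq_prod_range]

@[simp]
lemma eval_natCast_binomPoly (m ν : ℕ) : (binomPoly m).eval (ν : ℚ) = ν.choose m := by
  rw [binomPoly, eval_mul, eval_C, descPochhammer_eval_eq_descFactorial,
    Nat.descFactorial_eq_factorial_mul_choose, Nat.cast_mul,
    inv_mul_cancel_left₀ (Nat.cast_ne_zero.2 m.factorial_ne_zero)]

lemma eval_binomPoly_of_eq_sub {m a b : ℕ} {x : ℚ} (hba : b ≤ a) (hx : x = a - b) :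
    (binomPoly m).eval x = (a - b).choose m := by
  rw [hx, ← Nat.cast_sub hba, eval_natCast_binomPoly]

lemma eval_reflect_binomPoly (m : ℕ) (x : ℚ) :
    (binomPoly m).eval (m - 1 - x) = (-1) ^ m * (binomPoly m).eval x := by
  rw [binomPoly, eval_mul, eval_mul, eval_C, eval_C, descPochhammer_eval_eq_ascPochhammer,
    show (m : ℚ) - 1 - x - m + 1 = -x by ring, ascPochhammer_eval_neg_eq_descPochhammer]
  ring

lemma natDegree_binomPoly_le (m : ℕ) : (binomPoly m).natDegree ≤ m :=
  (natDegree_C_mul_le _ _).trans (descPochhammer_natDegree ℚ m).le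

lemma binomPoly_succ_comp_X_add_one (m : ℕ) :
    (binomPoly (m + 1)).comp (X + 1) = binomPoly (m + 1) + binomPoly m := by
  have hm : (m.factorial : ℚ) ≠ 0 := Nat.cast_ne_zero.2 m.factorial_ne_zero
  refine Polynomial.funext fun x => ?_
  simp only [eval_comp, eval_add, eval_X, eval_one, eval_binomPoly]
  rw [prod_range_succ', prod_range_succ, Nat.factorial_succ]
  simp only [Nat.cast_add, Nat.cast_one, Nat.cast_zero, add_sub_add_right_eq_sub]
  push_cast
  field_simp
  ring

lemma eval_zero_derivative_binomPoly_succ (m : ℕ) :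
    (derivative (binomPoly (m + 1))).eval 0 = (-1) ^ m / (m + 1) := by
  have hm : (m.factorial : ℚ) ≠ 0 := Nat.cast_ne_zero.2 m.factorial_ne_zero
  have hprod : (descPochhammer ℚ m).eval (-1) = (-1) ^ m * m.factorial := by
    rw [← ascPochhammer_eval_one ℚ m, ← neg_neg (1 : ℚ),
      ascPochhammer_eval_neg_eq_descPochhammer, ← mul_assoc, ← mul_pow]
    simp
  rw [binomPoly, derivative_C_mul, descPochhammer_succ_left, derivative_mul]
  simp only [derivative_X, one_mul, eval_mul, eval_C, eval_add, eval_X, zero_mul, add_zero,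
    eval_comp, eval_sub, eval_one, zero_sub, hprod, Nat.factorial_succ]
  push_cast
  field_simp

lemma eval_natCast_derivative_binomPoly (m ν : ℕ) :
    (derivative (binomPoly m)).eval (ν : ℚ) =
      ∑ i ∈ range m, (-1) ^ i / ((i : ℚ) + 1) * ν.choose (m - 1 - i) := by
  induction ν generalizing m with
  | zero =>
    rcases m with _ | m
    · simp [binomPoly]
    · rw [Nat.cast_zero, eval_zero_derivative_binomPoly_succ, sum_range_succ, sum_eq_zero]
      · simp
      · intro i hi
        rw [mem_range] at hi
        rw [Nat.choose_eq_zero_of_lt (by lia), Nat.cast_zero, mul_zero]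
  | succ ν ih =>
    rcases m with _ | m
    · simp [binomPoly]
    · have hpascal := congrArg (fun p => eval (ν : ℚ) (derivative p))
        (binomPoly_succ_comp_X_add_one m)
      simp only [derivative_comp, derivative_add, derivative_X, derivative_one, add_zero, one_mul,
        eval_comp, eval_add, eval_X, eval_one] at hpascal
      rw [Nat.cast_succ, hpascal, ih, ih, sum_range_succ, sum_range_succ, add_right_comm,
        ← sum_add_distrib]
      congr 1
      · refine sum_congr rfl fun i hi => ?_
        rw [mem_range] at hi
        rw [show m + 1 - 1 - i = (m - 1 - i) + 1 by lia, Nat.choose_succ_succ]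
        push_cast
        ring
      · simp

lemma dvd_choose_of_mod_lt {p ν m : ℕ} (hp : p.Prime) (hlt : ν % p < m % p) : p ∣ ν.choose m := by
  have : Fact p.Prime := ⟨hp⟩
  have hlucas := Choose.choose_modEq_choose_mod_mul_choose_div_nat (n := ν) (k := m) (p := p)
  rw [Nat.choose_eq_zero_of_lt hlt, zero_mul] at hlucas
  exact (Nat.modEq_zero_iff_dvd).1 hlucas

lemma exists_int_mul_derivative_binomPoly {D m : ℕ} (ν : ℕ) (hD : ∀ i, 1 ≤ i → i ≤ m → i ∣ D) :
    ∃ a : ℤ, D * (derivative (binomPoly m)).eval (ν : ℚ) = a ∧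
      ∀ p : ℕ, p.Prime → p ∣ D → ν % p < m % p → (p : ℤ) ∣ a := by
  have hdvd {i : ℕ} (hi : i ∈ range m) : i + 1 ∣ D := hD (i + 1) (by lia) (mem_range.1 hi)
  refine ⟨∑ i ∈ range m, (-1) ^ i * (D / (i + 1) : ℕ) * ν.choose (m - 1 - i), ?_, ?_⟩
  · rw [eval_natCast_derivative_binomPoly, mul_sum, Int.cast_sum]
    refine sum_congr rfl fun i hi => ?_
    rw [Int.cast_mul, Int.cast_mul, Int.cast_natCast, Int.cast_natCast,
      Nat.cast_div (hdvd hi) (by positivity)]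
    push_cast
    field_simp
  · intro p hp hpD hlt
    refine dvd_sum fun i hi => ?_
    by_cases hpi : p ∣ i + 1
    · refine Dvd.dvd.mul_left (Int.natCast_dvd_natCast.2 (dvd_choose_of_mod_lt hp ?_)) _
      have hmod : (m - 1 - i) % p = m % p := by
        obtain ⟨c, hc⟩ := hpi
        have := mem_range.1 hi
        conv_rhs => rw [show m = (m - 1 - i) + p * c by lia, Nat.add_mul_mod_self_left]
      rwa [hmod]
    · refine Dvd.dvd.mul_right (Dvd.dvd.mul_left (Int.natCast_dvd_natCast.2 ?_) _) _
      rw [← Nat.mul_div_cancel' (hdvd hi)] at hpD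
      exact (hp.dvd_mul.1 hpD).resolve_left hpi

end BinomialPolynomial

section ReflectiveSums

open Polynomial Finset

/-- A rational polynomial `T`, integral on `ℕ`, that vanishes at `-1, …, -m` and is even or odd
about `-(m + 1) / 2`, the parity being that of `m` for `δ = 1` and the opposite one for `δ = -1`.
It makes `∑ j, T(j) r ^ (2j + m + 1)` an integral multiple of a number depending only on `r`, `m`
and `δ`. -/
structure IsReflective (δ : ℚ) (m : ℕ) (T : ℚ[X]) : Prop where
  reflect : ∀ x : ℚ, T.eval (-(m + 1) - x) = δ * (-1) ^ m * T.eval x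
  eval_neg : ∀ i : ℕ, 1 ≤ i → i ≤ m → T.eval (-(i : ℚ)) = 0
  integral : ∀ j : ℕ, ∃ a : ℤ, T.eval (j : ℚ) = a

/-- The polynomial `(X + m).choose m`, the reflective polynomial of smallest degree for `δ = 1`. -/
noncomputable def evenBinom (m : ℕ) : ℚ[X] := (binomPoly m).comp (X + C (m : ℚ))

/-- The polynomial `(X + m + 1).choose (m + 1) + (X + m).choose (m + 1)`, the reflective polynomial
of smallest degree for `δ = -1`. -/
noncomputable def oddBinom (m : ℕ) : ℚ[X] :=
  (binomPoly (m + 1)).comp (X + C ((m : ℚ) + 1)) + (binomPoly (m + 1)).comp (X + C (m : ℚ))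

namespace IsReflective

variable {δ : ℚ} {m : ℕ} {T U : ℚ[X]}

lemma sub_C_mul (hT : IsReflective δ m T) (hU : IsReflective δ m U) (a : ℤ) :
    IsReflective δ m (T - C (a : ℚ) * U) where
  reflect x := by
    simp only [eval_sub, eval_mul, eval_C, hT.reflect, hU.reflect]
    ring
  eval_neg i h1 hm := by simp [hT.eval_neg i h1 hm, hU.eval_neg i h1 hm]
  integral j := by
    obtain ⟨u, hu⟩ := hT.integral j
    obtain ⟨v, hv⟩ := hU.integral j
    exact ⟨u - a * v, by simp [hu, hv]⟩

lemma comp_X_add_one (hT : IsReflective δ m T) (hT0 : T.eval 0 = 0) :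
    IsReflective δ (m + 2) (T.comp (X + 1)) where
  reflect x := by
    have hreflect := hT.reflect (x + 1)
    rw [show -((m : ℚ) + 1) - (x + 1) = -(((m + 2 : ℕ) : ℚ) + 1) - x + 1 by push_cast; ring]
      at hreflect
    simp only [eval_comp, eval_add, eval_X, eval_one, hreflect]
    ring
  eval_neg i h1 hm := by
    simp only [eval_comp, eval_add, eval_X, eval_one]
    rcases eq_or_ne i 1 with rfl | hi1
    · simpa using hT0
    rcases eq_or_ne i (m + 2) with rfl | him
    · rw [show -((m + 2 : ℕ) : ℚ) + 1 = -(m + 1) - 0 by push_cast; ring, hT.reflect, hT0, mul_zero]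
    · rw [show -(i : ℚ) + 1 = -((i - 1 : ℕ) : ℚ) by rw [Nat.cast_sub h1]; push_cast; ring]
      exact hT.eval_neg _ (by lia) (by lia)
  integral j := by
    obtain ⟨a, ha⟩ := hT.integral (j + 1)
    exact ⟨a, by simpa using ha⟩

lemma eq_zero_of_natDegree_lt (hT : IsReflective δ m T) (hdeg : T.natDegree < m) : T = 0 := by
  refine eq_zero_of_natDegree_lt_card_of_eval_eq_zero T (f := fun i : Fin m => -((i + 1 : ℕ) : ℚ))
    (fun i j hij => Fin.ext (by simpa using hij))
    (fun i => hT.eval_neg _ (by lia) (by lia)) (by simpa using hdeg)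

/- If `T` is reflective for `m` and `T 0 = a`, then `T - a * b m` vanishes at `0` and its translate
is reflective for `m + 2`; the degree is unchanged, so the descent stops. -/
theorem exists_hasSum_of_basis {b : ℕ → ℚ[X]} {r t : ℝ} {c : ℤ} (hb : ∀ m, IsReflective δ m (b m))
    (hb0 : ∀ m, (b m).eval 0 = 1) (hbdeg : ∀ m, (b m).natDegree ≤ m + 1)
    (hbsum : ∀ m, HasSum (fun j : ℕ => (((b m).eval (j : ℚ) : ℚ) : ℝ) * r ^ (2 * j + m + 1))
      (t * c ^ (m + 1)))
    {f : ℕ} (hT : IsReflective δ m T) (hdeg : T.natDegree < m + 2 * f) :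
    ∃ A : ℤ, HasSum (fun j : ℕ => ((T.eval (j : ℚ) : ℚ) : ℝ) * r ^ (2 * j + m + 1))
      (t * c ^ (m + 1) * A) := by
  induction f generalizing m T with
  | zero => exact ⟨0, by simp [hT.eq_zero_of_natDegree_lt (by simpa using hdeg), hasSum_zero]⟩
  | succ f ih =>
    obtain ⟨a, ha⟩ := hT.integral 0
    rw [Nat.cast_zero] at ha
    set V := T - C (a : ℚ) * b m with hV
    have hV0 : V.eval 0 = 0 := by simp [hV, ha, hb0]
    have hVdeg : (V.comp (X + 1)).natDegree < m + 2 + 2 * f := by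
      have hle : V.natDegree ≤ max T.natDegree (m + 1) :=
        (natDegree_sub_le _ _).trans
          (max_le_max le_rfl ((natDegree_C_mul_le _ _).trans (hbdeg m)))
      rw [natDegree_comp, ← C_1, natDegree_X_add_C, mul_one]
      lia
    obtain ⟨A, hA⟩ := ih ((hT.sub_C_mul (hb m) a).comp_X_add_one hV0) hVdeg
    have hVsum : HasSum (fun j : ℕ => ((V.eval (j : ℚ) : ℚ) : ℝ) * r ^ (2 * j + m + 1))
        (t * c ^ (m + 2 + 1) * A) := by
      rw [← hasSum_nat_add_iff' 1]
      simp only [range_one, sum_singleton, Nat.cast_zero, hV0, Rat.cast_zero, zero_mul, sub_zero]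
      refine hA.congr_fun fun j => ?_
      rw [show 2 * (j + 1) + m + 1 = 2 * j + (m + 2) + 1 by ring]
      simp [V]
    refine ⟨a + c ^ 2 * A, ?_⟩
    convert hVsum.add ((hbsum m).mul_left (a : ℝ)) using 1
    · ext j
      simp only [hV, eval_sub, eval_mul, eval_C]
      push_cast
      ring
    · push_cast
      ring

end IsReflective

lemma eval_natCast_evenBinom (m j : ℕ) : (evenBinom m).eval (j : ℚ) = (j + m).choose m := by
  rw [evenBinom, eval_comp, eval_add, eval_X, eval_C, ← Nat.cast_add, eval_natCast_binomPoly]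

lemma eval_natCast_oddBinom (m j : ℕ) :
    (oddBinom m).eval (j : ℚ) = (j + (m + 1)).choose (m + 1) + (j + m).choose (m + 1) := by
  simp only [oddBinom, eval_add, eval_comp, eval_X, eval_C]
  rw [← Nat.cast_add_one, ← Nat.cast_add, ← Nat.cast_add, eval_natCast_binomPoly,
    eval_natCast_binomPoly]

lemma isReflective_evenBinom (m : ℕ) : IsReflective 1 m (evenBinom m) where
  reflect x := by
    simp only [evenBinom, eval_comp, eval_add, eval_X, eval_C]
    rw [show -((m : ℚ) + 1) - x + m = m - 1 - (x + m) by ring, eval_reflect_binomPoly, one_mul]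
  eval_neg i h1 hm := by
    rw [evenBinom, eval_comp, eval_add, eval_X, eval_C,
      eval_binomPoly_of_eq_sub hm (neg_add_eq_sub _ _), Nat.choose_eq_zero_of_lt (by lia),
      Nat.cast_zero]
  integral j := ⟨(j + m).choose m, by rw [eval_natCast_evenBinom, Int.cast_natCast]⟩

lemma isReflective_oddBinom (m : ℕ) : IsReflective (-1) m (oddBinom m) where
  reflect x := by
    have h (y : ℚ) := eval_reflect_binomPoly (m + 1) y
    simp only [oddBinom, eval_add, eval_comp, eval_X, eval_C]
    rw [show -((m : ℚ) + 1) - x + (m + 1) = (m + 1 : ℕ) - 1 - (x + m) by push_cast; ring,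
      show -((m : ℚ) + 1) - x + m = (m + 1 : ℕ) - 1 - (x + (m + 1)) by push_cast; ring, h, h]
    ring
  eval_neg i h1 hm := by
    simp only [oddBinom, eval_add, eval_comp, eval_X, eval_C]
    rw [eval_binomPoly_of_eq_sub (a := m + 1) (b := i) (by lia) (by push_cast; ring),
      eval_binomPoly_of_eq_sub hm (neg_add_eq_sub _ _),
      Nat.choose_eq_zero_of_lt (by lia), Nat.choose_eq_zero_of_lt (by lia)]
    simp
  integral j := ⟨(j + (m + 1)).choose (m + 1) + (j + m).choose (m + 1), by
    rw [eval_natCast_oddBinom]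
    push_cast
    ring⟩

lemma natDegree_evenBinom_le (m : ℕ) : (evenBinom m).natDegree ≤ m := by
  rw [evenBinom, natDegree_comp, natDegree_X_add_C, mul_one]
  exact natDegree_binomPoly_le m

lemma natDegree_oddBinom_le (m : ℕ) : (oddBinom m).natDegree ≤ m + 1 := by
  refine (natDegree_add_le _ _).trans (max_le ?_ ?_) <;>
  · rw [natDegree_comp, natDegree_X_add_C, mul_one]
    exact natDegree_binomPoly_le (m + 1)

section Sums

variable {r s : ℝ} {c : ℤ} (hr1 : r ^ 2 < 1) (hrc : r / (1 - r ^ 2) = c)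
include hr1 hrc

lemma hasSum_evenBinom (m : ℕ) :
    HasSum (fun j : ℕ => (((evenBinom m).eval (j : ℚ) : ℚ) : ℝ) * r ^ (2 * j + m + 1))
      (c ^ (m + 1)) := by
  have hr : ‖r ^ 2‖ < 1 := by rwa [Real.norm_of_nonneg (sq_nonneg r)]
  have hsum := (hasSum_choose_mul_geometric_of_norm_lt_one m hr).mul_right (r ^ (m + 1))
  rw [one_div_mul_eq_div, ← div_pow, hrc] at hsum
  refine hsum.congr_fun fun j => ?_
  rw [eval_natCast_evenBinom, Rat.cast_natCast]
  ring

lemma hasSum_oddBinom (hrs : (1 + r ^ 2) / (1 - r ^ 2) = s) (m : ℕ) :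
    HasSum (fun j : ℕ => (((oddBinom m).eval (j : ℚ) : ℚ) : ℝ) * r ^ (2 * j + m + 1))
      (s * c ^ (m + 1)) := by
  have hr : ‖r ^ 2‖ < 1 := by rwa [Real.norm_of_nonneg (sq_nonneg r)]
  have hupper := hasSum_choose_mul_geometric_of_norm_lt_one (m + 1) hr
  have hlower : HasSum (fun j : ℕ => ((j + m).choose (m + 1) : ℝ) * (r ^ 2) ^ j)
      (r ^ 2 * (1 / (1 - r ^ 2) ^ (m + 1 + 1))) := by
    rw [← hasSum_nat_add_iff' 1]
    simp only [range_one, sum_singleton, zero_add, Nat.choose_succ_self, Nat.cast_zero, zero_mul,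
      sub_zero]
    refine (hupper.mul_left (r ^ 2)).congr_fun fun j => ?_
    rw [add_right_comm, add_assoc, pow_succ]
    ring
  have hval : (1 / (1 - r ^ 2) ^ (m + 1 + 1) + r ^ 2 * (1 / (1 - r ^ 2) ^ (m + 1 + 1))) *
      r ^ (m + 1) = s * c ^ (m + 1) := by
    have hne : 1 - r ^ 2 ≠ 0 := (sub_pos.2 hr1).ne'
    rw [← hrs, ← hrc, div_pow]
    field_simp
    ring
  rw [← hval]
  refine ((hupper.add hlower).mul_right (r ^ (m + 1))).congr_fun fun j => ?_
  rw [eval_natCast_oddBinom]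
  push_cast
  ring

theorem IsReflective.exists_hasSum_of_even {m : ℕ} {T : ℚ[X]} (hT : IsReflective 1 m T) :
    ∃ A : ℤ, HasSum (fun j : ℕ => ((T.eval (j : ℚ) : ℚ) : ℝ) * r ^ (2 * j + m + 1))
      (c ^ (m + 1) * A) := by
  simpa only [one_mul] using exists_hasSum_of_basis (t := 1) (f := T.natDegree + 1)
    isReflective_evenBinom
    (fun m => by simpa using eval_natCast_evenBinom m 0)
    (fun m => (natDegree_evenBinom_le m).trans (Nat.le_succ m))
    (fun m => by simpa only [one_mul] using hasSum_evenBinom hr1 hrc m) hT (by lia)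

theorem IsReflective.exists_hasSum_of_odd (hrs : (1 + r ^ 2) / (1 - r ^ 2) = s) {m : ℕ} {T : ℚ[X]}
    (hT : IsReflective (-1) m T) :
    ∃ A : ℤ, HasSum (fun j : ℕ => ((T.eval (j : ℚ) : ℚ) : ℝ) * r ^ (2 * j + m + 1))
      (s * c ^ (m + 1) * A) :=
  exists_hasSum_of_basis (f := T.natDegree + 1) isReflective_oddBinom
    (fun m => by simpa using eval_natCast_oddBinom m 0) natDegree_oddBinom_le
    (hasSum_oddBinom hr1 hrc hrs) hT (by lia)

end Sums

end ReflectiveSums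

section SavedPrimes

open Finset

lemma exists_emod_eq_sub_mul {p x a b : ℤ} (hp : 0 < p) (ha : a * p ≤ x) (hb : x < b * p) :
    ∃ k, a ≤ k ∧ k < b ∧ x % p = x - p * k :=
  ⟨x / p, (Int.le_ediv_iff_mul_le hp).2 ha, (Int.ediv_lt_iff_lt_mul hp).2 hb, Int.emod_def x p⟩

/- Modulo `p`, the residues violating the three inequalities are the complements of the arcs
`[0, 7t)`, `[t, 6t)` and `[2t, 5t)`, and in each of the three cases these arcs cover the circle. -/
lemma emod_lt_of_mem_arcs {p t v : ℤ} (ht₀ : 0 ≤ t) (ht : t < p) (hv₀ : 0 ≤ v) (hv : v < p)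
    (h : p ≤ 6 * t ∧ 7 * t < 3 * p ∨ p ≤ 2 * t ∧ 7 * t < 5 * p ∨ 3 * p ≤ 4 * t ∧ 7 * t < 6 * p) :
    v < 7 * t % p ∨ (v - t) % p < 5 * t % p ∨ (v - 2 * t) % p < 3 * t % p := by
  have hp : 0 < p := ht₀.trans_lt ht
  have hbound (x : ℤ) : 0 ≤ x % p ∧ x % p < p :=
    ⟨Int.emod_nonneg x hp.ne', Int.emod_lt_of_pos x hp⟩
  obtain ⟨h7, h5, h3⟩ := And.intro (hbound (7 * t)) (And.intro (hbound (5 * t)) (hbound (3 * t)))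
  obtain ⟨h1, h2⟩ := And.intro (hbound (v - t)) (hbound (v - 2 * t))
  clear hbound
  obtain ⟨c₁, hl₁, hu₁, e₁⟩ :=
    exists_emod_eq_sub_mul (x := v - t) (a := -1) (b := 1) hp (by linarith) (by linarith)
  obtain ⟨c₂, hl₂, hu₂, e₂⟩ :=
    exists_emod_eq_sub_mul (x := v - 2 * t) (a := -2) (b := 1) hp (by linarith) (by linarith)
  rcases h with h | h | h
  · obtain ⟨k₇, hl₇, hu₇, e₇⟩ :=
      exists_emod_eq_sub_mul (x := 7 * t) (a := 1) (b := 3) hp (by linarith) (by linarith)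
    obtain ⟨k₅, hl₅, hu₅, e₅⟩ :=
      exists_emod_eq_sub_mul (x := 5 * t) (a := 0) (b := 3) hp (by linarith) (by linarith)
    obtain ⟨k₃, hl₃, hu₃, e₃⟩ :=
      exists_emod_eq_sub_mul (x := 3 * t) (a := 0) (b := 2) hp (by linarith) (by linarith)
    interval_cases k₇ <;> interval_cases c₁ <;> interval_cases k₅ <;> interval_cases c₂ <;>
      interval_cases k₃ <;> omega
  · obtain ⟨k₇, hl₇, hu₇, e₇⟩ :=
      exists_emod_eq_sub_mul (x := 7 * t) (a := 3) (b := 5) hp (by linarith) (by linarith)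
    obtain ⟨k₅, hl₅, hu₅, e₅⟩ :=
      exists_emod_eq_sub_mul (x := 5 * t) (a := 2) (b := 4) hp (by linarith) (by linarith)
    obtain ⟨k₃, hl₃, hu₃, e₃⟩ :=
      exists_emod_eq_sub_mul (x := 3 * t) (a := 1) (b := 3) hp (by linarith) (by linarith)
    interval_cases k₇ <;> interval_cases c₁ <;> interval_cases k₅ <;> interval_cases c₂ <;>
      interval_cases k₃ <;> omega
  · obtain ⟨k₇, hl₇, hu₇, e₇⟩ :=
      exists_emod_eq_sub_mul (x := 7 * t) (a := 5) (b := 6) hp (by linarith) (by linarith)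
    obtain ⟨k₅, hl₅, hu₅, e₅⟩ :=
      exists_emod_eq_sub_mul (x := 5 * t) (a := 3) (b := 5) hp (by linarith) (by linarith)
    obtain ⟨k₃, hl₃, hu₃, e₃⟩ :=
      exists_emod_eq_sub_mul (x := 3 * t) (a := 2) (b := 3) hp (by linarith) (by linarith)
    interval_cases k₇
    interval_cases c₁ <;> interval_cases k₅ <;> interval_cases c₂ <;>
      interval_cases k₃ <;> omega

/-- The congruence condition `1/6 ≤ t < 3/7`, `1/2 ≤ t < 5/7` or `3/4 ≤ t < 6/7` on the fractional
part `t` of `n / p`. A prime `p` satisfying it divides all the coefficients of the linear forms. -/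
def IsSaved (n p : ℕ) : Prop :=
  p ≤ 6 * (n % p) ∧ 7 * (n % p) < 3 * p ∨ p ≤ 2 * (n % p) ∧ 7 * (n % p) < 5 * p ∨
    3 * p ≤ 4 * (n % p) ∧ 7 * (n % p) < 6 * p

instance (n p : ℕ) : Decidable (IsSaved n p) :=
  inferInstanceAs (Decidable (_ ∨ _ ∨ _))

lemma IsSaved.le {n p : ℕ} (h : IsSaved n p) : p ≤ 7 * n := by
  have := Nat.mod_le n p
  unfold IsSaved at h
  lia

lemma IsSaved.mod_lt {n p ν : ℕ} (hp : 0 < p) (h : IsSaved n p) (hν : 2 * n ≤ ν) :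
    ν % p < 7 * n % p ∨ (ν - n) % p < 5 * n % p ∨ (ν - 2 * n) % p < 3 * n % p := by
  have hmul (c : ℤ) : c * n % p = c * (n % p : ℤ) % p :=
    (Int.ModEq.mul_left c (Int.mod_modEq ..)).symm
  have hsub (c : ℤ) : (ν - c * n) % p = ((ν % p : ℤ) - c * (n % p : ℤ)) % p :=
    Int.ModEq.sub (Int.mod_modEq ..).symm ((Int.mod_modEq ..).symm.mul_left c)
  have key := emod_lt_of_mem_arcs (p := p) (t := n % p) (v := ν % p)
    (by exact_mod_cast (n % p).zero_le) (by exact_mod_cast Nat.mod_lt n hp)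
    (by exact_mod_cast (ν % p).zero_le) (by exact_mod_cast Nat.mod_lt ν hp) (by exact_mod_cast h)
  have h1 := hsub 1
  simp only [one_mul] at h1
  rw [← hmul, ← hmul, ← hmul, ← hsub, ← h1] at key
  zify [show n ≤ ν by lia, hν]
  exact key

/-- The primes saved for the parameter `n`. -/
def savedPrimes (n : ℕ) : Finset ℕ :=
  {p ∈ range (7 * n + 1) | p.Prime ∧ IsSaved n p}

lemma mem_savedPrimes {n p : ℕ} : p ∈ savedPrimes n ↔ p.Prime ∧ IsSaved n p := by
  rw [savedPrimes, mem_filter, mem_range, and_iff_right_iff_imp]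
  exact fun h => Nat.lt_succ_of_le h.2.le

/-- The common denominator of the linear forms: `lcm (1, …, 7n)` freed from the saved primes. -/
noncomputable def reducedDenom (n : ℕ) : ℕ := Nat.lcmUpto (7 * n) / ∏ p ∈ savedPrimes n, p

lemma prod_savedPrimes_ne_zero (n : ℕ) : ∏ p ∈ savedPrimes n, p ≠ 0 :=
  prod_ne_zero_iff.2 fun _ hp => (mem_savedPrimes.1 hp).1.ne_zero

lemma prod_savedPrimes_dvd {n : ℕ} {a : ℤ} (h : ∀ p ∈ savedPrimes n, (p : ℤ) ∣ a) :
    ((∏ p ∈ savedPrimes n, p : ℕ) : ℤ) ∣ a := by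
  rw [Nat.cast_prod]
  refine prod_dvd_of_coprime (fun p hp q hq hpq => Nat.isCoprime_iff_coprime.2 ?_) h
  exact (Nat.coprime_primes (mem_savedPrimes.1 hp).1 (mem_savedPrimes.1 hq).1).2 hpq

lemma dvd_lcmUpto {m i : ℕ} (h1 : 1 ≤ i) (hm : i ≤ m) : i ∣ Nat.lcmUpto m :=
  Finset.dvd_lcm (f := id) (mem_Icc.2 ⟨h1, hm⟩)

lemma dvd_lcmUpto_of_mem_savedPrimes {n p : ℕ} (hp : p ∈ savedPrimes n) :
    p ∣ Nat.lcmUpto (7 * n) :=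
  dvd_lcmUpto (mem_savedPrimes.1 hp).1.one_le (mem_savedPrimes.1 hp).2.le

lemma reducedDenom_mul_prod (n : ℕ) :
    reducedDenom n * ∏ p ∈ savedPrimes n, p = Nat.lcmUpto (7 * n) :=
  Nat.div_mul_cancel (Int.natCast_dvd_natCast.1
    (prod_savedPrimes_dvd fun _ hp =>
      Int.natCast_dvd_natCast.2 (dvd_lcmUpto_of_mem_savedPrimes hp)))

end SavedPrimes

section AuxiliaryPolynomial

open Polynomial

/-- The product `X.choose (7n) * (X - n).choose (5n) * (X - 2n).choose (3n)`, the numerator of the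
hypergeometric construction. -/
noncomputable def binomTriple (n : ℕ) : ℚ[X] :=
  binomPoly (7 * n) * (binomPoly (5 * n)).comp (X - C (n : ℚ)) *
    (binomPoly (3 * n)).comp (X - C (2 * n : ℚ))

/-- A linear polynomial, odd about the centre of symmetry `(7n - 1) / 2` of `binomTriple n`. -/
noncomputable def centeredLinear (n : ℕ) : ℚ[X] := C 2 * X - C (7 * n - 1 : ℚ)

/-- The polynomial whose values and derivatives give the `k`-th linear form of index `n`; the power
of `centeredLinear n` provides the additional forms needed for non-vanishing. -/
noncomputable def auxPoly (n k : ℕ) : ℚ[X] := binomTriple n * centeredLinear n ^ k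

lemma eval_natCast_binomTriple {n ν : ℕ} (hν : 2 * n ≤ ν) :
    (binomTriple n).eval (ν : ℚ) =
      ν.choose (7 * n) * (ν - n).choose (5 * n) * (ν - 2 * n).choose (3 * n) := by
  simp only [binomTriple, eval_mul, eval_comp, eval_sub, eval_X, eval_C, eval_natCast_binomPoly]
  rw [eval_binomPoly_of_eq_sub (show n ≤ ν by lia) rfl,
    eval_binomPoly_of_eq_sub hν (by push_cast; ring)]

lemma eval_natCast_derivative_binomTriple {n ν : ℕ} (hν : 2 * n ≤ ν) :
    (derivative (binomTriple n)).eval (ν : ℚ) =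
      (derivative (binomPoly (7 * n))).eval (ν : ℚ) * (ν - n).choose (5 * n) *
          (ν - 2 * n).choose (3 * n) +
        (derivative (binomPoly (5 * n))).eval ((ν - n : ℕ) : ℚ) * ν.choose (7 * n) *
          (ν - 2 * n).choose (3 * n) +
        (derivative (binomPoly (3 * n))).eval ((ν - 2 * n : ℕ) : ℚ) * ν.choose (7 * n) *
          (ν - n).choose (5 * n) := by
  simp only [binomTriple, derivative_mul, derivative_comp, derivative_sub, derivative_X,
    derivative_C, sub_zero, one_mul, eval_add, eval_mul, eval_comp, eval_sub, eval_X, eval_C,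
    eval_natCast_binomPoly]
  rw [eval_binomPoly_of_eq_sub (show n ≤ ν by lia) rfl,
    eval_binomPoly_of_eq_sub hν (by push_cast; ring), Nat.cast_sub (show n ≤ ν by lia),
    Nat.cast_sub hν]
  push_cast
  ring

lemma dvd_of_mem_savedPrimes {n ν p : ℕ} (hν : 2 * n ≤ ν) (hp : p ∈ savedPrimes n) {a₇ a₅ a₃ : ℤ}
    (h₇ : ν % p < 7 * n % p → (p : ℤ) ∣ a₇) (h₅ : (ν - n) % p < 5 * n % p → (p : ℤ) ∣ a₅)
    (h₃ : (ν - 2 * n) % p < 3 * n % p → (p : ℤ) ∣ a₃) :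
    (p : ℤ) ∣ a₇ * (ν - n).choose (5 * n) * (ν - 2 * n).choose (3 * n) +
      a₅ * ν.choose (7 * n) * (ν - 2 * n).choose (3 * n) +
      a₃ * ν.choose (7 * n) * (ν - n).choose (5 * n) := by
  obtain ⟨hprime, hsaved⟩ := mem_savedPrimes.1 hp
  have hchoose {a m : ℕ} (h : a % p < m % p) : (p : ℤ) ∣ a.choose m :=
    Int.natCast_dvd_natCast.2 (dvd_choose_of_mod_lt hprime h)
  rcases hsaved.mod_lt hprime.pos hν with h | h | h
  · exact dvd_add (dvd_add (((h₇ h).mul_right _).mul_right _)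
      (((hchoose h).mul_left _).mul_right _)) (((hchoose h).mul_left _).mul_right _)
  · exact dvd_add (dvd_add (((hchoose h).mul_left _).mul_right _)
      (((h₅ h).mul_right _).mul_right _)) ((hchoose h).mul_left _)
  · exact dvd_add (dvd_add ((hchoose h).mul_left _) ((hchoose h).mul_left _))
      (((h₃ h).mul_right _).mul_right _)

theorem exists_int_reducedDenom_mul_derivative_binomTriple {n ν : ℕ} (hν : 2 * n ≤ ν) :
    ∃ a : ℤ, reducedDenom n * (derivative (binomTriple n)).eval (ν : ℚ) = a := by
  have hD {c : ℕ} (hc : c ≤ 7) (i : ℕ) (h1 : 1 ≤ i) (hi : i ≤ c * n) : i ∣ Nat.lcmUpto (7 * n) :=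
    dvd_lcmUpto h1 (hi.trans (Nat.mul_le_mul_right n hc))
  obtain ⟨a₇, ha₇, hd₇⟩ := exists_int_mul_derivative_binomPoly ν (hD (c := 7) le_rfl)
  obtain ⟨a₅, ha₅, hd₅⟩ := exists_int_mul_derivative_binomPoly (ν - n) (hD (c := 5) (by simp))
  obtain ⟨a₃, ha₃, hd₃⟩ := exists_int_mul_derivative_binomPoly (ν - 2 * n) (hD (c := 3) (by simp))
  obtain ⟨c, hc⟩ := prod_savedPrimes_dvd fun p hp =>
    have hprime := (mem_savedPrimes.1 hp).1
    have hdvd := dvd_lcmUpto_of_mem_savedPrimes hp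
    dvd_of_mem_savedPrimes hν hp (hd₇ p hprime hdvd) (hd₅ p hprime hdvd) (hd₃ p hprime hdvd)
  refine ⟨c, mul_left_cancel₀ (Nat.cast_ne_zero.2 (prod_savedPrimes_ne_zero n)) ?_⟩
  calc ((∏ p ∈ savedPrimes n, p : ℕ) : ℚ) *
        (reducedDenom n * (derivative (binomTriple n)).eval (ν : ℚ))
      = Nat.lcmUpto (7 * n) * (derivative (binomTriple n)).eval (ν : ℚ) := by
        rw [← reducedDenom_mul_prod, Nat.cast_mul]
        ring
    _ = ((∏ p ∈ savedPrimes n, p : ℕ) : ℚ) * c := by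
        rw [eval_natCast_derivative_binomTriple hν, ← Int.cast_natCast (R := ℚ) (∏ p ∈ _, p),
          ← Int.cast_mul, ← hc]
        push_cast
        rw [← ha₇, ← ha₅, ← ha₃]
        ring

lemma eval_centeredLinear (n : ℕ) (x : ℚ) :
    (centeredLinear n).eval x = 2 * x - (7 * n - 1) := by
  simp [centeredLinear]

lemma exists_int_reducedDenom_mul_auxPoly {n ν : ℕ} (k : ℕ) (hν : 2 * n ≤ ν) :
    ∃ a : ℤ, reducedDenom n * (auxPoly n k).eval (ν : ℚ) = a := by
  refine ⟨reducedDenom n * (ν.choose (7 * n) * (ν - n).choose (5 * n) *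
    (ν - 2 * n).choose (3 * n)) * (2 * ν - (7 * n - 1)) ^ k, ?_⟩
  rw [auxPoly, eval_mul, eval_pow, eval_natCast_binomTriple hν, eval_centeredLinear]
  push_cast
  ring

lemma exists_int_reducedDenom_mul_derivative_auxPoly {n ν : ℕ} (k : ℕ) (hν : 2 * n ≤ ν) :
    ∃ a : ℤ, reducedDenom n * (derivative (auxPoly n k)).eval (ν : ℚ) = a := by
  obtain ⟨a, ha⟩ := exists_int_reducedDenom_mul_derivative_binomTriple hν
  refine ⟨a * (2 * ν - (7 * n - 1)) ^ k + reducedDenom n * (ν.choose (7 * n) *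
    (ν - n).choose (5 * n) * (ν - 2 * n).choose (3 * n)) *
      (2 * k * (2 * ν - (7 * n - 1)) ^ (k - 1)), ?_⟩
  have hlin : derivative (centeredLinear n) = C 2 := by
    simp [centeredLinear]
  rw [auxPoly, derivative_mul, derivative_pow, hlin]
  simp only [eval_add, eval_mul, eval_pow, eval_natCast_binomTriple hν, eval_centeredLinear,
    eval_C]
  push_cast
  rw [← ha]
  ring

lemma eval_reflect_binomTriple (n : ℕ) (x : ℚ) :
    (binomTriple n).eval (7 * n - 1 - x) = (-1) ^ n * (binomTriple n).eval x := by
  have h7 := eval_reflect_binomPoly (7 * n) x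
  have h5 := eval_reflect_binomPoly (5 * n) (x - n)
  have h3 := eval_reflect_binomPoly (3 * n) (x - 2 * n)
  have hsign : (-1 : ℚ) ^ (7 * n) * (-1) ^ (5 * n) * (-1) ^ (3 * n) = (-1) ^ n := by
    rw [← pow_add, ← pow_add, show 7 * n + 5 * n + 3 * n = 2 * (7 * n) + n by ring, pow_add,
      pow_mul, neg_one_sq, one_pow, one_mul]
  push_cast at h7 h5 h3
  simp only [binomTriple, eval_mul, eval_comp, eval_sub, eval_X, eval_C]
  rw [show (7 * n - 1 - x - n : ℚ) = 5 * n - 1 - (x - n) by ring,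
    show (7 * n - 1 - x - 2 * n : ℚ) = 3 * n - 1 - (x - 2 * n) by ring, h7, h5, h3, ← hsign]
  ring

lemma eval_reflect_auxPoly (n k : ℕ) (x : ℚ) :
    (auxPoly n k).eval (7 * n - 1 - x) = (-1) ^ (n + k) * (auxPoly n k).eval x := by
  simp only [auxPoly, eval_mul, eval_pow, eval_reflect_binomTriple, eval_centeredLinear]
  rw [show (2 * (7 * n - 1 - x) - (7 * n - 1) : ℚ) = -1 * (2 * x - (7 * n - 1)) by ring, mul_pow]
  ring

lemma eval_reflect_derivative_auxPoly (n k : ℕ) (x : ℚ) :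
    (derivative (auxPoly n k)).eval (7 * n - 1 - x) =
      -(-1) ^ (n + k) * (derivative (auxPoly n k)).eval x := by
  have hreflect : (auxPoly n k).comp (C (7 * n - 1 : ℚ) - X) = C ((-1) ^ (n + k)) * auxPoly n k :=
    Polynomial.funext fun x => by
      simpa only [eval_comp, eval_sub, eval_C, eval_X, eval_mul] using eval_reflect_auxPoly n k x
  have hderiv := congrArg (fun p => eval x (derivative p)) hreflect
  simp only [derivative_comp, derivative_C_mul, derivative_sub, derivative_C, derivative_X,
    eval_mul, eval_comp, eval_sub, eval_C, eval_X, eval_zero, eval_one] at hderiv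
  linarith

lemma eval_natCast_auxPoly_eq_zero {n ν : ℕ} (k : ℕ) (h1 : n ≤ ν) (h2 : ν < 6 * n) :
    (auxPoly n k).eval (ν : ℚ) = 0 ∧ (derivative (auxPoly n k)).eval (ν : ℚ) = 0 := by
  have h7 : (binomPoly (7 * n)).eval (ν : ℚ) = 0 := by
    rw [eval_natCast_binomPoly, Nat.choose_eq_zero_of_lt (by lia), Nat.cast_zero]
  have h5 : (binomPoly (5 * n)).eval ((ν : ℚ) - n) = 0 := by
    rw [eval_binomPoly_of_eq_sub h1 rfl, Nat.choose_eq_zero_of_lt (by lia), Nat.cast_zero]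
  constructor
  · simp [auxPoly, binomTriple, h7]
  · simp only [auxPoly, binomTriple, derivative_mul, eval_add, eval_mul, eval_comp, eval_sub,
      eval_X, eval_C, h7, h5]
    ring

lemma isReflective_C_mul_comp {n : ℕ} {a δ : ℚ} {T : ℚ[X]}
    (hreflect : ∀ x : ℚ, T.eval (7 * n - 1 - x) = δ * (-1) ^ n * T.eval x)
    (hzero : ∀ ν : ℕ, n ≤ ν → ν < 6 * n → T.eval (ν : ℚ) = 0)
    (hint : ∀ ν : ℕ, 2 * n ≤ ν → ∃ b : ℤ, a * T.eval (ν : ℚ) = b) :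
    IsReflective δ (5 * n) (C a * T.comp (X + C (6 * n : ℚ))) where
  reflect x := by
    have hsign : (-1 : ℚ) ^ (5 * n) = (-1) ^ n := by
      rw [show 5 * n = 2 * (2 * n) + n by ring, pow_add, pow_mul, neg_one_sq, one_pow, one_mul]
    simp only [eval_mul, eval_C, eval_comp, eval_add, eval_X]
    rw [show (-((5 * n : ℕ) + 1) - x + 6 * n : ℚ) = 7 * n - 1 - (x + 6 * n) by push_cast; ring,
      hreflect, hsign]
    ring
  eval_neg i h1 hi := by
    simp only [eval_mul, eval_C, eval_comp, eval_add, eval_X]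
    rw [show -(i : ℚ) + 6 * n = ((6 * n - i : ℕ) : ℚ) by
      rw [Nat.cast_sub (by lia)]; push_cast; ring, hzero _ (by lia) (by lia), mul_zero]
  integral j := by
    simp only [eval_mul, eval_C, eval_comp, eval_add, eval_X]
    rw [show (j : ℚ) + 6 * n = ((6 * n + j : ℕ) : ℚ) by push_cast; ring]
    exact hint _ (by lia)

lemma isReflective_auxPoly (n k : ℕ) :
    IsReflective ((-1) ^ k) (5 * n)
      (C (reducedDenom n : ℚ) * (auxPoly n k).comp (X + C (6 * n : ℚ))) :=
  isReflective_C_mul_comp (fun x => by rw [eval_reflect_auxPoly]; ring)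
    (fun _ h1 h2 => (eval_natCast_auxPoly_eq_zero k h1 h2).1)
    fun _ hν => exists_int_reducedDenom_mul_auxPoly k hν

lemma isReflective_derivative_auxPoly (n k : ℕ) :
    IsReflective (-(-1) ^ k) (5 * n)
      (C (reducedDenom n : ℚ) * (derivative (auxPoly n k)).comp (X + C (6 * n : ℚ))) :=
  isReflective_C_mul_comp (fun x => by rw [eval_reflect_derivative_auxPoly]; ring)
    (fun _ h1 h2 => (eval_natCast_auxPoly_eq_zero k h1 h2).2)
    fun _ hν => exists_int_reducedDenom_mul_derivative_auxPoly k hν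

theorem exists_hasSum_auxPoly {r s : ℝ} {c : ℤ} (hr1 : r ^ 2 < 1) (hrc : r / (1 - r ^ 2) = c)
    (hrs : (1 + r ^ 2) / (1 - r ^ 2) = s) (n k : ℕ) :
    ∃ A B : ℤ,
      HasSum (fun j : ℕ =>
        ((reducedDenom n * (auxPoly n k).eval ((6 * n + j : ℕ) : ℚ) : ℚ) : ℝ) *
          r ^ (2 * j + 5 * n + 1)) ((if Even k then 1 else s) * c ^ (5 * n + 1) * B) ∧
      HasSum (fun j : ℕ =>
        ((reducedDenom n * (derivative (auxPoly n k)).eval ((6 * n + j : ℕ) : ℚ) : ℚ) : ℝ) *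
          r ^ (2 * j + 5 * n + 1)) ((if Even k then s else 1) * c ^ (5 * n + 1) * A) := by
  have hval := isReflective_auxPoly n k
  have hder := isReflective_derivative_auxPoly n k
  have heval (T : ℚ[X]) (j : ℕ) : (C (reducedDenom n : ℚ) * T.comp (X + C (6 * n : ℚ))).eval (j : ℚ)
      = reducedDenom n * T.eval ((6 * n + j : ℕ) : ℚ) := by
    simp [add_comm]
  simp only [← heval]
  rcases k.even_or_odd with hk | hk
  · rw [hk.neg_one_pow] at hval hder
    obtain ⟨B, hB⟩ := hval.exists_hasSum_of_even hr1 hrc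
    obtain ⟨A, hA⟩ := hder.exists_hasSum_of_odd hr1 hrc hrs
    exact ⟨A, B, by simpa [hk] using hB, by simpa [hk] using hA⟩
  · rw [hk.neg_one_pow] at hval hder
    rw [neg_neg] at hder
    obtain ⟨B, hB⟩ := hval.exists_hasSum_of_odd hr1 hrc hrs
    obtain ⟨A, hA⟩ := hder.exists_hasSum_of_even hr1 hrc
    have hk' := Nat.not_even_iff_odd.2 hk
    exact ⟨A, B, by simpa [hk'] using hB, by simpa [hk'] using hA⟩

end AuxiliaryPolynomial

section DenominatorAsymptotics

open Real Filter Topology Finset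

lemma theta_sub_theta_eq_sum_Ioc {x y : ℝ} (hxy : y ≤ x) :
    Chebyshev.theta x - Chebyshev.theta y = ∑ p ∈ Ioc ⌊y⌋₊ ⌊x⌋₊ with p.Prime, log p := by
  have hunion : Ioc 0 ⌊x⌋₊ = Ioc 0 ⌊y⌋₊ ∪ Ioc ⌊y⌋₊ ⌊x⌋₊ :=
    (Ioc_union_Ioc_eq_Ioc (Nat.zero_le _) (Nat.floor_mono hxy)).symm
  rw [Chebyshev.theta, Chebyshev.theta, hunion, filter_union,
    sum_union (disjoint_filter_filter (Ioc_disjoint_Ioc_of_le le_rfl)), add_sub_cancel_left]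

lemma div_eq_and_mod_mem_arc {n j p : ℕ} {a b : ℝ} (hp : 0 < p) (ha : 0 ≤ a) (hb : b ≤ 1)
    (hle : p * (j + a) ≤ n) (hlt : n < p * (j + b)) :
    n / p = j ∧ a * p ≤ (n % p : ℕ) ∧ ((n % p : ℕ) : ℝ) < b * p := by
  have : (0 : ℝ) < p := Nat.cast_pos.2 hp
  have hquot : n / p = j := by
    refine Nat.div_eq_of_lt_le ?_ ?_
    · have : (j * p : ℝ) ≤ n := by nlinarith
      exact_mod_cast this
    · have : (n : ℝ) < (j + 1) * p := by nlinarith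
      exact_mod_cast this
  have hmod : ((n % p : ℕ) : ℝ) + p * j = n := by
    rw [← hquot]
    exact_mod_cast Nat.mod_add_div n p
  exact ⟨hquot, by linarith, by linarith⟩

/-- The contribution of the primes `p > n / K` for which the fractional part of `n / p` lies in
the arc `[a, b)`, written through Chebyshev's function. -/
noncomputable def arcTheta (K : ℕ) (a b : ℝ) (n : ℕ) : ℝ :=
  ∑ j ∈ range K, (Chebyshev.theta (n / (j + a)) - Chebyshev.theta (n / (j + b)))

lemma arcTheta_le_sum_log {n : ℕ} (K : ℕ) {a b : ℝ} {P : Finset ℕ} (ha : 0 < a) (hab : a ≤ b)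
    (hb : b ≤ 1)
    (hP : ∀ p : ℕ, p.Prime → a * p ≤ (n % p : ℕ) → ((n % p : ℕ) : ℝ) < b * p → p ∈ P) :
    arcTheta K a b n ≤ ∑ p ∈ P, log p := by
  have hpos (j : ℕ) : 0 < j + a ∧ 0 < j + b := ⟨by positivity, by linarith [j.cast_nonneg (α := ℝ)]⟩
  calc arcTheta K a b n
      ≤ ∑ j ∈ range K, ∑ p ∈ P with n / p < K ∧ n / p = j, log p := by
        refine sum_le_sum fun j hj => ?_
        rw [theta_sub_theta_eq_sum_Ioc
          (div_le_div_of_nonneg_left n.cast_nonneg (hpos j).1 (by gcongr))]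
        refine sum_le_sum_of_subset_of_nonneg (fun p hp => ?_) fun p _ _ => log_natCast_nonneg p
        obtain ⟨hIoc, hprime⟩ := mem_filter.1 hp
        obtain ⟨hlt, hle⟩ := mem_Ioc.1 hIoc
        rw [Nat.floor_lt (div_nonneg n.cast_nonneg (hpos j).2.le), div_lt_iff₀ (hpos j).2] at hlt
        rw [Nat.le_floor_iff (div_nonneg n.cast_nonneg (hpos j).1.le),
          le_div_iff₀ (hpos j).1] at hle
        obtain ⟨hquot, hmod⟩ := div_eq_and_mod_mem_arc hprime.pos ha.le hb hle hlt
        exact mem_filter.2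
          ⟨hP p hprime hmod.1 hmod.2, hquot.trans_lt (mem_range.1 hj), hquot⟩
    _ = ∑ p ∈ P with n / p < K, log p := by
        simp_rw [← filter_filter]
        exact sum_fiberwise_of_maps_to (fun p hp => mem_range.2 (mem_filter.1 hp).2) _
    _ ≤ ∑ p ∈ P, log p :=
        sum_le_sum_of_subset_of_nonneg (filter_subset _ _) fun p _ _ => log_natCast_nonneg p

open Classical in
/-- The saved primes for which the fractional part of `n / p` lies in the arc `[a, b)`. -/
noncomputable def arcPrimes (n : ℕ) (a b : ℝ) : Finset ℕ :=
  {p ∈ savedPrimes n | a * p ≤ (n % p : ℕ) ∧ ((n % p : ℕ) : ℝ) < b * p}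

lemma disjoint_arcPrimes {n : ℕ} {a b c d : ℝ} (hbc : b ≤ c) :
    Disjoint (arcPrimes n a b) (arcPrimes n c d) := by
  refine disjoint_left.2 fun p hp hq => ?_
  have hlt := (mem_filter.1 hp).2.2
  have hle := (mem_filter.1 hq).2.1
  have := mul_le_mul_of_nonneg_right hbc p.cast_nonneg
  linarith

lemma arcTheta_add_le_sum_log_savedPrimes (n K : ℕ) :
    arcTheta K (1 / 6) (3 / 7) n + arcTheta K (1 / 2) (5 / 7) n + arcTheta K (3 / 4) (6 / 7) n ≤
      ∑ p ∈ savedPrimes n, log p := by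
  have hsub (a b : ℝ) : arcPrimes n a b ⊆ savedPrimes n := filter_subset _ _
  have harc {a b : ℝ} (ha : 0 < a) (hab : a ≤ b) (hb : b ≤ 1)
      (h : ∀ p : ℕ, a * p ≤ (n % p : ℕ) → ((n % p : ℕ) : ℝ) < b * p → IsSaved n p) :
      arcTheta K a b n ≤ ∑ p ∈ arcPrimes n a b, log p :=
    arcTheta_le_sum_log K ha hab hb fun p hp hle hlt =>
      mem_filter.2 ⟨mem_savedPrimes.2 ⟨hp, h p hle hlt⟩, hle, hlt⟩
  have h₁ := harc (a := 1 / 6) (b := 3 / 7) (by norm_num) (by norm_num) (by norm_num)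
    fun p hle hlt => Or.inl ⟨by exact_mod_cast (by linarith : (p : ℝ) ≤ 6 * (n % p : ℕ)),
      by exact_mod_cast (by linarith : 7 * ((n % p : ℕ) : ℝ) < 3 * p)⟩
  have h₂ := harc (a := 1 / 2) (b := 5 / 7) (by norm_num) (by norm_num) (by norm_num)
    fun p hle hlt => Or.inr (Or.inl
      ⟨by exact_mod_cast (by linarith : (p : ℝ) ≤ 2 * (n % p : ℕ)),
        by exact_mod_cast (by linarith : 7 * ((n % p : ℕ) : ℝ) < 5 * p)⟩)
  have h₃ := harc (a := 3 / 4) (b := 6 / 7) (by norm_num) (by norm_num) (by norm_num)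
    fun p hle hlt => Or.inr (Or.inr
      ⟨by exact_mod_cast (by linarith : 3 * (p : ℝ) ≤ 4 * (n % p : ℕ)),
        by exact_mod_cast (by linarith : 7 * ((n % p : ℕ) : ℝ) < 6 * p)⟩)
  refine (add_le_add (add_le_add h₁ h₂) h₃).trans ?_
  rw [← sum_union (disjoint_arcPrimes (by norm_num)), ← sum_union (disjoint_union_left.2
    ⟨disjoint_arcPrimes (by norm_num), disjoint_arcPrimes (by norm_num)⟩)]
  exact sum_le_sum_of_subset_of_nonneg
    (union_subset (union_subset (hsub _ _) (hsub _ _)) (hsub _ _)) fun p _ _ => log_natCast_nonneg p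

lemma reducedDenom_ne_zero (n : ℕ) : reducedDenom n ≠ 0 := fun h =>
  (Nat.lcmUpto_pos (7 * n)).ne' (by rw [← reducedDenom_mul_prod, h, zero_mul])

lemma log_reducedDenom (n : ℕ) :
    log (reducedDenom n) = Chebyshev.psi (7 * n : ℕ) - ∑ p ∈ savedPrimes n, log p := by
  have hprod := prod_savedPrimes_ne_zero n
  rw [Chebyshev.psi_eq_log_lcmUpto, ← reducedDenom_mul_prod, Nat.cast_mul,
    log_mul (Nat.cast_ne_zero.2 (reducedDenom_ne_zero n)) (Nat.cast_ne_zero.2 hprod),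
    Nat.cast_prod, log_prod fun p hp => Nat.cast_ne_zero.2 (prod_ne_zero_iff.1 hprod p hp),
    add_sub_cancel_right]

/-- The density of the primes `p`, relative to `n`, for which `n / p` lies in `[x + a, x + b)`. -/
noncomputable def arcDensity (a b x : ℝ) : ℝ := 1 / (x + a) - 1 / (x + b)

lemma tendsto_arcTheta_div (K : ℕ) {a b : ℝ} (ha : 0 < a) (hb : 0 < b) :
    Tendsto (fun n : ℕ => arcTheta K a b n / n) atTop (𝓝 (∑ j ∈ range K, arcDensity a b j)) := by
  have htheta {c : ℝ} (hc : 0 < c) :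
      Tendsto (fun n : ℕ => Chebyshev.theta (n / c) / n) atTop (𝓝 (1 / c)) := by
    have h := (tendsto_theta_div_self.comp
      (tendsto_natCast_atTop_atTop.atTop_div_const hc)).mul_const (1 / c)
    rw [one_mul] at h
    refine h.congr fun n => ?_
    rw [Function.comp_apply]
    field_simp
  simp only [arcTheta, sum_div, sub_div]
  exact tendsto_finsetSum _ fun j _ => (htheta (by positivity)).sub (htheta (by positivity))

/-- The density of the saved primes `p` with `⌊n / p⌋ = x`. -/
noncomputable def savingDensity (x : ℝ) : ℝ :=
  arcDensity (1 / 6) (3 / 7) x + arcDensity (1 / 2) (5 / 7) x + arcDensity (3 / 4) (6 / 7) x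

theorem eventually_log_reducedDenom_le_sum (K : ℕ) {ε : ℝ} (hε : 0 < ε) :
    ∀ᶠ n : ℕ in atTop,
      log (reducedDenom n) ≤ (7 - ∑ j ∈ range K, savingDensity j + ε) * n := by
  have hpsi : Tendsto (fun n : ℕ => Chebyshev.psi (7 * n : ℕ) / n) atTop (𝓝 7) := by
    have h := (tendsto_psi_div_self.comp (tendsto_natCast_atTop_atTop.const_mul_atTop
      (show (0 : ℝ) < 7 by norm_num))).mul_const 7
    rw [one_mul] at h
    refine h.congr fun n => ?_
    rw [Function.comp_apply, Nat.cast_mul, Nat.cast_ofNat]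
    field_simp
  have hlim := hpsi.sub (((tendsto_arcTheta_div K (a := 1 / 6) (b := 3 / 7) (by norm_num)
    (by norm_num)).add (tendsto_arcTheta_div K (a := 1 / 2) (b := 5 / 7) (by norm_num)
      (by norm_num))).add (tendsto_arcTheta_div K (a := 3 / 4) (b := 6 / 7) (by norm_num)
        (by norm_num)))
  simp only [← sum_add_distrib, ← add_div, ← sub_div] at hlim
  filter_upwards [hlim.eventually_lt_const (lt_add_of_pos_right _ hε), eventually_gt_atTop 0]
    with n hn hpos
  rw [div_lt_iff₀ (Nat.cast_pos.2 hpos)] at hn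
  simp only [log_reducedDenom, savingDensity]
  linarith [arcTheta_add_le_sum_log_savedPrimes n K]

/-- A minorant of `∑_{i ≥ 0} arcDensity a b (x + i)` for large `x`. The leading shift
`(a + b - 1) / 2` makes the differences agree with `arcDensity a b` to second order, and `1 / 240`
absorbs the error. -/
noncomputable def arcTail (a b x : ℝ) : ℝ := (b - a) / (x + ((a + b - 1) / 2 + 1 / 240))

lemma arcTail_sub_le {a b x : ℝ} (ha : 0 < a) (hab : a ≤ b) (hx : 30 ≤ x) :
    arcTail a b x - arcTail a b (x + 1) ≤ arcDensity a b x := by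
  set d := (a + b - 1) / 2 + 1 / 240 with hd
  have h₁ : 0 < x + d := by linarith
  have h₂ : 0 < x + 1 + d := by linarith
  have hmul : (x + a) * (x + b) ≤ (x + d) * (x + 1 + d) := by
    rw [hd]
    nlinarith [sq_nonneg (a - b)]
  rw [arcTail, arcTail, arcDensity, ← hd, div_sub_div _ _ h₁.ne' h₂.ne',
    div_sub_div _ _ (by linarith) (by linarith),
    show (b - a) * (x + 1 + d) - (x + d) * (b - a) = b - a by ring,
    show 1 * (x + b) - (x + a) * 1 = b - a by ring]
  exact div_le_div_of_nonneg_left (by linarith)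
    (mul_pos (by linarith) (by linarith)) hmul

lemma sub_le_sum_range_of_sub_le {f g : ℕ → ℝ} {m K : ℕ} (hK : m ≤ K)
    (h : ∀ j, m ≤ j → g j - g (j + 1) ≤ f j) :
    ∑ j ∈ range m, f j + (g m - g K) ≤ ∑ j ∈ range K, f j := by
  induction K, hK using Nat.le_induction with
  | base => simp
  | succ K hK ih =>
    rw [sum_range_succ]
    linarith [h K hK]

/-- The minorant of `∑_{i ≥ 0} savingDensity (x + i)` obtained from `arcTail`. -/
noncomputable def savingTail (x : ℝ) : ℝ :=
  arcTail (1 / 6) (3 / 7) x + arcTail (1 / 2) (5 / 7) x + arcTail (3 / 4) (6 / 7) x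

lemma savingTail_sub_le {x : ℝ} (hx : 30 ≤ x) :
    savingTail x - savingTail (x + 1) ≤ savingDensity x := by
  have h₁ := arcTail_sub_le (a := 1 / 6) (b := 3 / 7) (by norm_num) (by norm_num) hx
  have h₂ := arcTail_sub_le (a := 1 / 2) (b := 5 / 7) (by norm_num) (by norm_num) hx
  have h₃ := arcTail_sub_le (a := 3 / 4) (b := 6 / 7) (by norm_num) (by norm_num) hx
  simp only [savingTail, savingDensity]
  linarith

lemma exists_le_sum_savingDensity : ∃ K : ℕ, 4.9951 ≤ ∑ j ∈ range K, savingDensity j := by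
  have hhead : 4.9951013 ≤ ∑ j ∈ range 30, savingDensity j + savingTail 30 := by
    simp only [sum_range_succ, sum_range_zero, savingDensity, arcDensity, savingTail, arcTail]
    norm_num
  obtain ⟨K, hK, htail⟩ : ∃ K : ℕ, 30 ≤ K ∧ savingTail K ≤ 1e-6 := by
    refine ⟨10 ^ 7, by norm_num, ?_⟩
    simp only [savingTail, arcTail]
    norm_num
  have htele := sub_le_sum_range_of_sub_le (f := fun j : ℕ => savingDensity j)
    (g := fun j => savingTail j) hK fun j hj => by
      rw [Nat.cast_succ]
      exact savingTail_sub_le (by exact_mod_cast hj)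
  rw [Nat.cast_ofNat] at htele
  exact ⟨K, by linarith⟩

theorem eventually_log_reducedDenom_le {ε : ℝ} (hε : 0 < ε) :
    ∀ᶠ n : ℕ in atTop, log (reducedDenom n) ≤ (2.0049 + ε) * n := by
  obtain ⟨K, hK⟩ := exists_le_sum_savingDensity
  filter_upwards [eventually_log_reducedDenom_le_sum K hε] with n hn
  exact hn.trans (by gcongr; linarith)

end DenominatorAsymptotics

section CoefficientGrowth

open Real Filter Topology Polynomial

lemma choose_le_one_add_pow_div_pow (N m : ℕ) {y : ℝ} (hy : 0 < y) :
    (N.choose m : ℝ) ≤ (1 + y) ^ N / y ^ m := by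
  rw [le_div_iff₀ (by positivity)]
  rcases le_or_gt m N with h | h
  · have hterm := Finset.single_le_sum (f := fun k => y ^ k * 1 ^ (N - k) * (N.choose k : ℝ))
      (fun _ _ => by positivity) (Finset.mem_range.2 (Nat.lt_succ_of_le h))
    rw [add_comm, add_pow]
    simpa only [one_pow, mul_one, mul_comm] using hterm
  · rw [Nat.choose_eq_zero_of_lt h, Nat.cast_zero, zero_mul]
    positivity

lemma summable_add_one_pow_mul_geometric (k : ℕ) {ρ : ℝ} (hρ₀ : 0 < ρ) (hρ₁ : ρ < 1) :
    Summable fun j : ℕ => ((j : ℝ) + 1) ^ k * ρ ^ j := by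
  have hgeom : Summable fun j : ℕ => (j : ℝ) ^ k * ρ ^ j :=
    summable_pow_mul_geometric_of_norm_lt_one k (by rwa [norm_of_nonneg hρ₀.le])
  refine (((summable_nat_add_iff 1).2 hgeom).mul_right ρ⁻¹).congr fun j => ?_
  rw [pow_succ, Nat.cast_succ]
  field_simp

/-- The exponential growth rate, in `n`, of the product of binomial coefficients in
`auxPoly n k` bounded by means of the weights `y₇`, `y₅`, `y₃`. -/
noncomputable def binomGrowth (y₇ y₅ y₃ : ℝ) : ℝ :=
  (1 + y₇) ^ 6 * (1 + y₅) ^ 5 * (1 + y₃) ^ 4 / (y₇ ^ 7 * y₅ ^ 5 * y₃ ^ 3)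

lemma cast_reducedDenom_mul_eval_auxPoly (n k j : ℕ) :
    ((reducedDenom n * (auxPoly n k).eval ((6 * n + j : ℕ) : ℚ) : ℚ) : ℝ) =
      reducedDenom n * ((6 * n + j).choose (7 * n) * (5 * n + j).choose (5 * n) *
        (4 * n + j).choose (3 * n)) * (5 * n + 2 * j + 1) ^ k := by
  rw [auxPoly, eval_mul, eval_pow, eval_natCast_binomTriple (by lia), eval_centeredLinear,
    show 6 * n + j - n = 5 * n + j by lia, show 6 * n + j - 2 * n = 4 * n + j by lia]
  push_cast
  ring

lemma reducedDenom_mul_eval_auxPoly_mul_pow_le {r y₇ y₅ y₃ : ℝ} (hr₀ : 0 < r) (hr₁ : r < 1)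
    (h₇ : 0 < y₇) (h₅ : 0 < y₅) (h₃ : 0 < y₃) (n k j : ℕ) :
    ((reducedDenom n * (auxPoly n k).eval ((6 * n + j : ℕ) : ℚ) : ℚ) : ℝ) *
        r ^ (2 * j + 5 * n + 1) ≤
      reducedDenom n * (12 * (n + 1)) ^ k * (r ^ 5 * binomGrowth y₇ y₅ y₃) ^ n *
        (((j : ℝ) + 1) ^ k * (r ^ 2 * ((1 + y₇) * (1 + y₅) * (1 + y₃))) ^ j) := by
  have hlin : (5 * n + 2 * j + 1 : ℝ) ≤ 12 * (n + 1) * (j + 1) := by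
    have : (0 : ℝ) ≤ n * j := by positivity
    linarith [n.cast_nonneg (α := ℝ), j.cast_nonneg (α := ℝ)]
  rw [cast_reducedDenom_mul_eval_auxPoly]
  calc _ ≤ reducedDenom n * ((1 + y₇) ^ (6 * n + j) / y₇ ^ (7 * n) *
          ((1 + y₅) ^ (5 * n + j) / y₅ ^ (5 * n)) * ((1 + y₃) ^ (4 * n + j) / y₃ ^ (3 * n))) *
          (12 * (n + 1) * (j + 1)) ^ k * r ^ (2 * j + 5 * n) := by
        gcongr ?_ * (?_ * ?_ * ?_) * ?_ ^ k * ?_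
        · exact choose_le_one_add_pow_div_pow _ _ h₇
        · exact choose_le_one_add_pow_div_pow _ _ h₅
        · exact choose_le_one_add_pow_div_pow _ _ h₃
        · exact pow_le_pow_of_le_one hr₀.le hr₁.le (Nat.le_succ _)
    _ = _ := by
        rw [binomGrowth]
        simp only [mul_pow, div_pow, pow_add, pow_mul]
        field_simp

theorem exists_abs_le_of_hasSum_auxPoly {r c s y₇ y₅ y₃ : ℝ} (hr₀ : 0 < r) (hr₁ : r < 1)
    (hc : 1 ≤ c) (hs : 1 ≤ s) (h₇ : 0 < y₇) (h₅ : 0 < y₅) (h₃ : 0 < y₃)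
    (hρ : r ^ 2 * ((1 + y₇) * (1 + y₅) * (1 + y₃)) < 1) (k : ℕ) :
    ∃ C : ℝ, ∀ (n : ℕ) (B : ℤ),
      HasSum (fun j : ℕ =>
        ((reducedDenom n * (auxPoly n k).eval ((6 * n + j : ℕ) : ℚ) : ℚ) : ℝ) *
          r ^ (2 * j + 5 * n + 1)) ((if Even k then 1 else s) * c ^ (5 * n + 1) * B) →
      |(B : ℝ)| ≤ C * (n + 1) ^ k * reducedDenom n *
        ((r / c) ^ 5 * binomGrowth y₇ y₅ y₃) ^ n := by
  have hsum := summable_add_one_pow_mul_geometric k (by positivity) hρ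
  set S := ∑' j : ℕ, ((j : ℝ) + 1) ^ k * (r ^ 2 * ((1 + y₇) * (1 + y₅) * (1 + y₃))) ^ j
  refine ⟨12 ^ k * S, fun n B hB => ?_⟩
  set u : ℝ := (if Even k then 1 else s) * c ^ (5 * n + 1)
  have hu : c ^ (5 * n) ≤ u := by
    have hsign : 1 ≤ if Even k then 1 else s := by split_ifs <;> linarith
    calc c ^ (5 * n) = 1 * c ^ (5 * n) := (one_mul _).symm
      _ ≤ u := mul_le_mul hsign (pow_le_pow_right₀ hc (Nat.le_succ _)) (by positivity)
        (by positivity)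
  have hupper : u * B ≤ _ := hasSum_le
    (reducedDenom_mul_eval_auxPoly_mul_pow_le hr₀ hr₁ h₇ h₅ h₃ n k) hB (hsum.hasSum.mul_left _)
  have hcpos : 0 < c ^ (5 * n) := by positivity
  have hB₀ : 0 ≤ (B : ℝ) := by
    refine nonneg_of_mul_nonneg_right (hB.nonneg fun j => ?_) (hcpos.trans_le hu)
    rw [cast_reducedDenom_mul_eval_auxPoly]
    positivity
  rw [abs_of_nonneg hB₀]
  calc (B : ℝ) ≤ reducedDenom n * (12 * (n + 1)) ^ k * (r ^ 5 * binomGrowth y₇ y₅ y₃) ^ n * S /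
        c ^ (5 * n) := by
        rw [le_div_iff₀' hcpos]
        exact (mul_le_mul_of_nonneg_right hu hB₀).trans hupper
    _ = _ := by
        rw [div_pow, mul_pow, mul_pow (r ^ 5), mul_pow (_ / _), div_pow, pow_mul c]
        ring

end CoefficientGrowth

section GammaBound

open Complex Set Filter Topology MeasureTheory
open scoped Real

lemma norm_cpow_sub_one_mul_exp_neg_mul (a w : ℂ) {t : ℝ} (ht : 0 < t) :
    ‖(t : ℂ) ^ (a - 1) * exp (-(w * t))‖ = t ^ (a.re - 1) * Real.exp (-(w.re * t)) := by
  rw [norm_mul, norm_cpow_eq_rpow_re_of_pos ht, norm_exp]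
  simp only [sub_re, one_re, neg_re, re_mul_ofReal]

lemma integrableOn_rpow_sub_one_mul_exp_neg_mul {x c : ℝ} (hx : 0 < x) (hc : 0 < c) :
    IntegrableOn (fun t : ℝ => t ^ (x - 1) * Real.exp (-(c * t))) (Ioi 0) := by
  simpa only [neg_mul, Real.rpow_one] using
    integrableOn_rpow_mul_exp_neg_mul_rpow (p := 1) (s := x - 1) (by linarith) one_pos hc

lemma differentiableAt_integral_cpow_mul_exp_neg_mul {a w : ℂ} (ha : 0 < a.re) (hw : 0 < w.re) :
    DifferentiableAt ℂ (fun w : ℂ => ∫ t in Ioi (0 : ℝ), (t : ℂ) ^ (a - 1) * exp (-(w * t))) w := by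
  have hhalf : {z : ℂ | w.re / 2 < z.re} ∈ 𝓝 w :=
    (isOpen_lt continuous_const continuous_re).mem_nhds (half_lt_self hw)
  have hmeas (z : ℂ) : AEStronglyMeasurable (fun t : ℝ => (t : ℂ) ^ (a - 1) * exp (-(z * t)))
      (volume.restrict (Ioi 0)) := by
    refine ContinuousOn.aestronglyMeasurable (fun t (ht : 0 < t) => ?_) measurableSet_Ioi
    exact ((continuous_ofReal.continuousAt.cpow continuousAt_const
      (Or.inl (by simpa only [ofReal_re] using ht))).mul (by fun_prop)).continuousWithinAt
  refine (hasDerivAt_integral_of_dominated_loc_of_deriv_le (μ := volume.restrict (Ioi (0 : ℝ)))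
    (F := fun z t => (t : ℂ) ^ (a - 1) * exp (-(z * t)))
    (F' := fun z t => (t : ℂ) ^ (a - 1) * exp (-(z * t)) * (-t : ℂ))
    (bound := fun t => t ^ (a.re + 1 - 1) * Real.exp (-(w.re / 2 * t))) hhalf
    (Eventually.of_forall hmeas) ?_ ?_ ?_
    (integrableOn_rpow_sub_one_mul_exp_neg_mul (by linarith) (half_pos hw))
    (Eventually.of_forall fun t z _ => ?_)).2.differentiableAt
  · refine Integrable.mono' (integrableOn_rpow_sub_one_mul_exp_neg_mul ha hw) (hmeas w) ?_
    filter_upwards [ae_restrict_mem measurableSet_Ioi] with t ht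
    rw [norm_cpow_sub_one_mul_exp_neg_mul a w ht]
  · exact (hmeas w).mul measurable_ofReal.neg.aestronglyMeasurable
  · filter_upwards [ae_restrict_mem measurableSet_Ioi] with t (ht : 0 < t) z (hz : _ < z.re)
    rw [norm_mul, norm_cpow_sub_one_mul_exp_neg_mul a z ht, norm_neg, norm_real,
      Real.norm_of_nonneg ht.le, mul_right_comm, ← Real.rpow_add_one ht.ne',
      show a.re - 1 + 1 = a.re + 1 - 1 by ring]
    gcongr
  · have hexp := (((hasDerivAt_id z).mul_const (t : ℂ)).neg.cexp).const_mul ((t : ℂ) ^ (a - 1))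
    simpa only [Pi.neg_apply, id, one_mul, ← mul_assoc] using hexp

theorem integral_cpow_mul_exp_neg_mul_Ioi_of_re_pos {a w : ℂ} (ha : 0 < a.re) (hw : 0 < w.re) :
    ∫ t in Ioi (0 : ℝ), (t : ℂ) ^ (a - 1) * exp (-(w * t)) = (1 / w) ^ a * Gamma a := by
  have hopen : IsOpen {z : ℂ | 0 < z.re} := isOpen_lt continuous_const continuous_re
  have hleft : AnalyticOnNhd ℂ
      (fun z : ℂ => ∫ t in Ioi (0 : ℝ), (t : ℂ) ^ (a - 1) * exp (-(z * t))) {z | 0 < z.re} :=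
    DifferentiableOn.analyticOnNhd (fun z hz =>
      (differentiableAt_integral_cpow_mul_exp_neg_mul ha hz).differentiableWithinAt) hopen
  have hright : AnalyticOnNhd ℂ (fun z : ℂ => (1 / z) ^ a * Gamma a) {z | 0 < z.re} := by
    refine DifferentiableOn.analyticOnNhd (fun z (hz : 0 < z.re) => ?_) hopen
    have hz₀ : z ≠ 0 := ne_of_apply_ne re (by simpa only [zero_re] using hz.ne')
    refine ((DifferentiableAt.cpow (by fun_prop (disch := exact hz₀)) (by fun_prop)
      (Or.inl ?_)).mul_const _).differentiableWithinAt
    rw [one_div, inv_re]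
    exact div_pos hz (normSq_pos.2 hz₀)
  refine hleft.eqOn_of_preconnected_of_frequently_eq hright
    (convex_halfSpace_re_gt 0).isPreconnected (z₀ := 1) (by simp) ?_ hw
  have htendsto : Tendsto (fun n : ℕ => (1 : ℂ) + 1 / ((n : ℂ) + 1)) atTop (𝓝[≠] 1) := by
    refine tendsto_nhdsWithin_iff.2 ⟨?_, Eventually.of_forall fun n => ?_⟩
    · simpa only [add_zero] using (tendsto_one_div_add_atTop_nhds_zero_nat (𝕜 := ℂ)).const_add 1
    · simpa only [mem_compl_iff, mem_singleton_iff, add_eq_left] using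
        one_div_ne_zero (Nat.cast_add_one_ne_zero n)
  refine htendsto.frequently (Eventually.of_forall fun n => ?_).frequently
  have hreal := integral_cpow_mul_exp_neg_mul_Ioi (r := 1 + 1 / ((n : ℝ) + 1)) ha (by positivity)
  push_cast at hreal
  exact hreal

-- Rotating the ray of integration in Euler's integral by `φ` gains the factor `exp (-φ * im a)`.
lemma norm_Gamma_le_exp_mul_Gamma_re_div_cos_rpow {a : ℂ} (ha : 0 < a.re) {φ : ℝ}
    (hφ : φ ∈ Ioo (-(π / 2)) (π / 2)) :
    ‖Gamma a‖ ≤ Real.exp (-(φ * a.im)) * (Real.Gamma a.re / Real.cos φ ^ a.re) := by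
  have hcos : 0 < Real.cos φ := Real.cos_pos_of_mem_Ioo hφ
  have hre : (exp (φ * I)).re = Real.cos φ := exp_ofReal_mul_I_re φ
  have hrot := integral_cpow_mul_exp_neg_mul_Ioi_of_re_pos ha (hre ▸ hcos)
  have hpow : ‖(1 / exp (φ * I)) ^ a‖ = Real.exp (φ * a.im) := by
    have hlog : log (exp (-(φ * I))) = -(φ * I) :=
      log_exp (by simp; linarith [hφ.2, Real.pi_pos]) (by simp; linarith [hφ.1, Real.pi_pos])
    rw [one_div, ← exp_neg, cpow_def_of_ne_zero (exp_ne_zero _), hlog, norm_exp]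
    simp
  have hint : ‖∫ t in Ioi (0 : ℝ), (t : ℂ) ^ (a - 1) * exp (-(exp (φ * I) * t))‖ ≤
      Real.Gamma a.re / Real.cos φ ^ a.re := by
    refine (norm_integral_le_integral_norm _).trans (le_of_eq ?_)
    rw [setIntegral_congr_fun measurableSet_Ioi fun t ht =>
      norm_cpow_sub_one_mul_exp_neg_mul a _ ht, hre, Real.integral_rpow_mul_exp_neg_mul_Ioi ha hcos,
      one_div, Real.inv_rpow hcos.le, inv_mul_eq_div]
  rw [hrot, norm_mul, hpow] at hint
  rwa [Real.exp_neg, inv_mul_eq_div, le_div_iff₀' (Real.exp_pos _)]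

theorem norm_Gamma_le_exp_neg_arctan_mul {a : ℂ} (ha : 0 < a.re) (t : ℝ) :
    ‖Gamma a‖ ≤ Real.exp (-(Real.arctan t * |a.im|)) *
      (Real.Gamma a.re * √(1 + t ^ 2) ^ a.re) := by
  have hcos : Real.Gamma a.re / Real.cos (Real.arctan t) ^ a.re =
      Real.Gamma a.re * √(1 + t ^ 2) ^ a.re := by
    rw [Real.cos_arctan, one_div, Real.inv_rpow (Real.sqrt_nonneg _), div_inv_eq_mul]
  have harctan := Real.arctan_mem_Ioo t
  rw [← hcos]
  rcases le_total 0 a.im with him | him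
  · rw [abs_of_nonneg him]
    exact norm_Gamma_le_exp_mul_Gamma_re_div_cos_rpow ha harctan
  · rw [abs_of_nonpos him, mul_neg, ← neg_mul, ← Real.cos_neg]
    exact norm_Gamma_le_exp_mul_Gamma_re_div_cos_rpow ha
      ⟨neg_lt_neg harctan.2, by linarith [harctan.1]⟩

lemma norm_Gamma_le_exp_mul_factorial_mul_sqrt_pow {z : ℂ} {c : ℕ} (hc : 2 ≤ c)
    (hz : z.re = c + 1 / 2) (t : ℝ) :
    ‖Gamma z‖ ≤ Real.exp (-(Real.arctan t * |z.im|)) *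
      (c.factorial * √(1 + t ^ 2) ^ (c + 1)) := by
  have hc' : (2 : ℝ) ≤ c := by exact_mod_cast hc
  have hGamma : Real.Gamma z.re ≤ c.factorial := by
    rw [hz, ← Real.Gamma_nat_eq_factorial]
    exact Real.Gamma_strictMonoOn_Ici.monotoneOn (mem_Ici.2 (by linarith))
      (mem_Ici.2 (by linarith)) (by linarith)
  have hsqrt : √(1 + t ^ 2) ^ z.re ≤ √(1 + t ^ 2) ^ (c + 1) := by
    rw [← Real.rpow_natCast _ (c + 1)]
    refine Real.rpow_le_rpow_of_exponent_le ?_ (by push_cast; linarith)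
    rw [Real.one_le_sqrt]
    linarith [sq_nonneg t]
  refine (norm_Gamma_le_exp_neg_arctan_mul (by linarith) t).trans ?_
  gcongr

end GammaBound

section BinomialBound

open Polynomial Complex
open scoped Real

lemma aeval_binomPoly (m : ℕ) (s : ℂ) :
    aeval s (binomPoly m) = (m.factorial : ℂ)⁻¹ * (descPochhammer ℂ m).eval s := by
  rw [binomPoly, map_mul, aeval_C, map_inv₀, map_natCast,
    ← descPochhammer_map (algebraMap ℚ ℂ), eval_map_algebraMap]

lemma norm_sin_pi_mul_of_re_eq {k : ℤ} {z : ℂ} (hz : z.re = k + 1 / 2) :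
    ‖sin (π * z)‖ = Real.cosh (π * z.im) := by
  have hsplit : π * z = (((π * z.im : ℝ) : ℂ) * I + π / 2) + ((k * π : ℝ) : ℂ) := by
    refine Complex.ext ?_ ?_
    · simp [hz]; ring
    · simp
  have hsin : sin ((k * π : ℝ) : ℂ) = 0 := by rw [← ofReal_sin, Real.sin_int_mul_pi, ofReal_zero]
  rw [hsplit, sin_add, hsin, mul_zero, add_zero, sin_add_pi_div_two, cos_mul_I, ← ofReal_cosh,
    ← ofReal_cos, norm_mul, norm_real, norm_real, Real.norm_eq_abs, Real.norm_eq_abs,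
    Real.abs_cos_int_mul_pi, mul_one, abs_of_pos (Real.cosh_pos _)]

-- Euler's reflection formula turns `1 / Γ(s + 1 - m)` into `Γ(m - s)`, where `m = a + b`.
lemma norm_descPochhammer_mul_pi_div_cosh {a b : ℕ} {s : ℂ} (hs : s.re = a - 1 / 2) :
    ‖(descPochhammer ℂ (a + b)).eval s‖ * (π / Real.cosh (π * s.im)) =
      ‖Gamma (s + 1)‖ * ‖Gamma ((a + b : ℕ) - s)‖ := by
  set w : ℂ := s - (a + b : ℕ) + 1 with hw
  have hre : w.re = ((-b : ℤ) : ℝ) + 1 / 2 := by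
    simp only [hw, add_re, sub_re, natCast_re, one_re, hs]
    push_cast
    ring
  have him : w.im = s.im := by simp [hw]
  have hne (k : ℕ) : w ≠ -k := fun h => by
    have hk : -(b : ℝ) + 1 / 2 = -k := by simpa [hre] using congrArg re h
    have : 2 * k + 1 = 2 * b := by exact_mod_cast (by linarith : (2 : ℝ) * k + 1 = 2 * b)
    lia
  have hshift := Gamma_add_nat_div_Gamma_eq (n := a + b) w hne
  rw [div_eq_iff (Gamma_ne_zero hne), show w + (a + b : ℕ) = s + 1 by rw [hw]; ring] at hshift
  have hreflect := congrArg norm (Gamma_mul_Gamma_one_sub w)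
  rw [norm_mul, norm_div, norm_sin_pi_mul_of_re_eq hre, norm_real, Real.norm_of_nonneg
    Real.pi_pos.le, him, show 1 - w = (a + b : ℕ) - s by rw [hw]; ring] at hreflect
  rw [descPochhammer_eval_eq_ascPochhammer, hshift, norm_mul, mul_assoc, hreflect]

lemma factorial_le_three_mul_mul_div_exp_pow {n : ℕ} (hn : 1 ≤ n) :
    (n.factorial : ℝ) ≤ 3 * n * (n / Real.exp 1) ^ n := by
  obtain ⟨k, rfl⟩ := Nat.exists_eq_add_of_le' hn
  have hanti := Stirling.stirlingSeq'_antitone (Nat.zero_le k)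
  simp only [Function.comp, Nat.succ_eq_add_one, zero_add, Stirling.stirlingSeq_one] at hanti
  rw [Stirling.stirlingSeq, div_le_iff₀ (by positivity), Real.sqrt_mul zero_le_two, ← mul_assoc,
    ← mul_assoc, div_mul_cancel₀ _ (by positivity)] at hanti
  refine hanti.trans ?_
  gcongr
  · linarith [Real.exp_one_lt_d9]
  · exact Real.sqrt_le_iff.2 ⟨by positivity, le_self_pow₀ (by exact_mod_cast hn) two_ne_zero⟩

lemma div_exp_pow_le_factorial (n : ℕ) : ((n : ℝ) / Real.exp 1) ^ n ≤ n.factorial := by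
  have h := Real.pow_div_factorial_le_exp (n : ℝ) n.cast_nonneg n
  rw [div_le_iff₀ (by positivity)] at h
  rwa [div_pow, ← Real.exp_nat_mul, mul_one, div_le_iff₀' (Real.exp_pos _)]

lemma factorial_mul_factorial_div_factorial_le {a b N : ℕ} (ha : 1 ≤ a) (hb : 1 ≤ b)
    (hN : 1 ≤ N) :
    ((a * N).factorial : ℝ) * (b * N).factorial / ((a + b) * N).factorial ≤
      9 * a * b * N ^ 2 * ((a : ℝ) ^ a * b ^ b / (a + b) ^ (a + b)) ^ N := by
  have hab : (0 : ℝ) < a + b := by positivity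
  have : (0 : ℝ) < (((a + b) * N : ℕ) / Real.exp 1) ^ ((a + b) * N) := by
    push_cast
    positivity
  calc _ ≤ (3 * (a * N : ℕ) * ((a * N : ℕ) / Real.exp 1) ^ (a * N)) *
          (3 * (b * N : ℕ) * ((b * N : ℕ) / Real.exp 1) ^ (b * N)) /
          (((a + b) * N : ℕ) / Real.exp 1) ^ ((a + b) * N) := by
        gcongr
        · exact factorial_le_three_mul_mul_div_exp_pow (Nat.mul_pos ha hN)
        · exact factorial_le_three_mul_mul_div_exp_pow (Nat.mul_pos hb hN)
        · exact div_exp_pow_le_factorial _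
    _ = _ := by
        push_cast
        generalize (a : ℝ) + b = c at hab ⊢
        rw [add_mul, pow_add]
        simp only [div_pow, mul_pow, pow_mul, pow_add]
        field_simp
        ring

/-- The exponential growth rate, in `N`, of the bound for `binomPoly ((a + b) * N)` on the line
`re s = a * N - 1 / 2` obtained by rotating the integrals for the two Gamma factors by the angles
`arctan (t / a)` and `arctan (t / b)`. -/
noncomputable def verticalGrowth (t : ℝ) (a b : ℕ) : ℝ :=
  (a : ℝ) ^ a * b ^ b / (a + b) ^ (a + b) * (√(1 + (t / a) ^ 2) ^ a * √(1 + (t / b) ^ 2) ^ b)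

lemma verticalGrowth_nonneg (t : ℝ) (a b : ℕ) : 0 ≤ verticalGrowth t a b := by
  unfold verticalGrowth
  positivity

theorem exists_norm_aeval_binomPoly_mul_le (t : ℝ) {a b : ℕ} (ha : 2 ≤ a) (hb : 2 ≤ b) :
    ∃ C ≥ 0, ∀ N : ℕ, 1 ≤ N → ∀ s : ℂ, s.re = a * N - 1 / 2 →
      ‖aeval s (binomPoly ((a + b) * N))‖ * (π / Real.cosh (π * s.im)) ≤
        Real.exp (-((Real.arctan (t / a) + Real.arctan (t / b)) * |s.im|)) *
          (C * N ^ 2 * verticalGrowth t a b ^ N) := by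
  refine ⟨9 * a * b * (√(1 + (t / a) ^ 2) * √(1 + (t / b) ^ 2)), by positivity,
    fun N hN s hs => ?_⟩
  have hline := norm_descPochhammer_mul_pi_div_cosh (a := a * N) (b := b * N) (s := s)
    (by rw [hs]; push_cast; rfl)
  have hΓa := norm_Gamma_le_exp_mul_factorial_mul_sqrt_pow (z := s + 1)
    (Nat.le_mul_of_pos_right a hN |>.trans' ha) (by simp [hs]; ring) (t / a)
  have hΓb := norm_Gamma_le_exp_mul_factorial_mul_sqrt_pow (z := (a * N + b * N : ℕ) - s)
    (Nat.le_mul_of_pos_right b hN |>.trans' hb) (by simp [hs]) (t / b)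
  simp only [add_im, one_im, add_zero] at hΓa
  simp only [sub_im, natCast_im, zero_sub, abs_neg] at hΓb
  rw [aeval_binomPoly, norm_mul, norm_inv, Complex.norm_natCast, mul_assoc, add_mul, hline]
  calc _ ≤ ((a * N + b * N).factorial : ℝ)⁻¹ *
        (Real.exp (-(Real.arctan (t / a) * |s.im|)) *
            ((a * N).factorial * √(1 + (t / a) ^ 2) ^ (a * N + 1)) *
          (Real.exp (-(Real.arctan (t / b) * |s.im|)) *
            ((b * N).factorial * √(1 + (t / b) ^ 2) ^ (b * N + 1)))) := by
        gcongr
    _ = Real.exp (-((Real.arctan (t / a) + Real.arctan (t / b)) * |s.im|)) *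
        ((((a * N).factorial : ℝ) * (b * N).factorial / ((a + b) * N).factorial) *
          (√(1 + (t / a) ^ 2) ^ (a * N + 1) * √(1 + (t / b) ^ 2) ^ (b * N + 1))) := by
        rw [add_mul (Real.arctan _), neg_add, Real.exp_add, add_mul a b N]
        field_simp
    _ ≤ Real.exp (-((Real.arctan (t / a) + Real.arctan (t / b)) * |s.im|)) *
        ((9 * a * b * N ^ 2 * ((a : ℝ) ^ a * b ^ b / (a + b) ^ (a + b)) ^ N) *
          (√(1 + (t / a) ^ 2) ^ (a * N + 1) * √(1 + (t / b) ^ 2) ^ (b * N + 1))) := by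
        gcongr
        exact factorial_mul_factorial_div_factorial_le (by lia) (by lia) hN
    _ = _ := by
        rw [verticalGrowth, mul_pow, mul_pow, pow_succ _ (a * N), pow_succ _ (b * N),
          pow_mul _ a N, pow_mul _ b N]
        ring

end BinomialBound

section ExponentialSums

open Polynomial Filter Topology

/-- The generating series `∑ ν ≥ k, Q(ν) * exp (ν * x)`. -/
noncomputable def polyExpSum (k : ℕ) (Q : ℚ[X]) (x : ℂ) : ℂ :=
  ∑' j : ℕ, aeval ((k + j : ℕ) : ℂ) Q * Complex.exp ((k + j : ℕ) * x)

/-- The series `∑ ν ≥ k, d/dν (Q(ν) * exp (ν * x))`. -/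
noncomputable def polyExpDerivSum (k : ℕ) (Q : ℚ[X]) (x : ℂ) : ℂ :=
  x * polyExpSum k Q x + polyExpSum k (derivative Q) x

lemma aeval_natCast_eq_ratCast_eval (Q : ℚ[X]) (ν : ℕ) :
    aeval (ν : ℂ) Q = ((Q.eval (ν : ℚ) : ℚ) : ℂ) := by
  simpa only [map_natCast, eq_ratCast] using
    aeval_algebraMap_apply_eq_algebraMap_eval (A := ℂ) (ν : ℚ) Q

lemma norm_cexp_lt_one {x : ℂ} (hx : x.re < 0) : ‖Complex.exp x‖ < 1 := by
  rw [Complex.norm_exp]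
  exact Real.exp_lt_one_iff.2 hx

lemma summable_norm_aeval_natCast_mul_cexp (Q : ℚ[X]) {x : ℂ} (hx : x.re < 0) :
    Summable fun ν : ℕ => ‖aeval (ν : ℂ) Q * Complex.exp (ν * x)‖ := by
  have hterm (ν : ℕ) : aeval (ν : ℂ) Q * Complex.exp (ν * x) =
      ∑ i ∈ Finset.range (Q.natDegree + 1),
        (Q.coeff i : ℂ) * ((ν : ℂ) ^ i * Complex.exp x ^ ν) := by
    rw [aeval_eq_sum_range, Finset.sum_mul, Complex.exp_nat_mul]
    simp only [Algebra.smul_def, eq_ratCast, mul_assoc]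
  simp only [hterm]
  refine Summable.of_nonneg_of_le (fun _ => norm_nonneg _) (fun _ => norm_sum_le _ _)
    (summable_sum fun i _ => ?_)
  simp only [norm_mul (Q.coeff i : ℂ)]
  exact (summable_norm_pow_mul_geometric_of_norm_lt_one i (norm_cexp_lt_one hx)).mul_left _

lemma summable_norm_polyExpSum (k : ℕ) (Q : ℚ[X]) {x : ℂ} (hx : x.re < 0) :
    Summable fun j : ℕ => ‖aeval ((k + j : ℕ) : ℂ) Q * Complex.exp ((k + j : ℕ) * x)‖ := by
  simpa only [add_comm] using
    (summable_nat_add_iff k).2 (summable_norm_aeval_natCast_mul_cexp Q hx)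

lemma polyExpSum_zero (k : ℕ) (x : ℂ) : polyExpSum k 0 x = 0 := by
  simp only [polyExpSum, map_zero, zero_mul, tsum_zero]

lemma polyExpSum_add (k : ℕ) (P Q : ℚ[X]) {x : ℂ} (hx : x.re < 0) :
    polyExpSum k (P + Q) x = polyExpSum k P x + polyExpSum k Q x := by
  simp only [polyExpSum, map_add, add_mul]
  exact (summable_norm_polyExpSum k P hx).of_norm.tsum_add
    (summable_norm_polyExpSum k Q hx).of_norm

lemma polyExpSum_C_mul (k : ℕ) (c : ℚ) (Q : ℚ[X]) (x : ℂ) :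
    polyExpSum k (C c * Q) x = c * polyExpSum k Q x := by
  simp only [polyExpSum, map_mul, aeval_C, eq_ratCast, mul_assoc, tsum_mul_left]

lemma polyExpSum_one (k : ℕ) {x : ℂ} (hx : x.re < 0) :
    polyExpSum k 1 x = Complex.exp (k * x) / (1 - Complex.exp x) := by
  have hterm (j : ℕ) : aeval ((k + j : ℕ) : ℂ) (1 : ℚ[X]) * Complex.exp ((k + j : ℕ) * x) =
      Complex.exp (k * x) * Complex.exp x ^ j := by
    rw [map_one, one_mul, ← Complex.exp_nat_mul, ← Complex.exp_add, Nat.cast_add, add_mul]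
  simp only [polyExpSum, hterm]
  rw [tsum_mul_left, tsum_geometric_of_norm_lt_one (norm_cexp_lt_one hx), div_eq_mul_inv]

lemma hasDerivAt_polyExpSum (k : ℕ) (Q : ℚ[X]) {x : ℂ} (hx : x.re < 0) :
    HasDerivAt (polyExpSum k Q) (polyExpSum k (X * Q) x) x := by
  have hmem : x ∈ {w : ℂ | w.re < x.re / 2} := show x.re < x.re / 2 by linarith
  refine hasDerivAt_tsum_of_isPreconnected
    (g := fun (j : ℕ) w => aeval ((k + j : ℕ) : ℂ) Q * Complex.exp ((k + j : ℕ) * w))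
    (g' := fun (j : ℕ) w => aeval ((k + j : ℕ) : ℂ) (X * Q) * Complex.exp ((k + j : ℕ) * w))
    (summable_norm_polyExpSum k (X * Q) (x := ((x.re / 2 : ℝ) : ℂ))
      (by rw [Complex.ofReal_re]; linarith))
    (isOpen_lt Complex.continuous_re continuous_const)
    (convex_halfSpace_re_lt (x.re / 2)).isPreconnected (fun j w _ => ?_)
    (fun j w (hw : w.re < x.re / 2) => ?_) hmem (summable_norm_polyExpSum k Q hx).of_norm hmem
  · refine (((hasDerivAt_id w).const_mul ((k + j : ℕ) : ℂ)).cexp.const_mul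
      (aeval ((k + j : ℕ) : ℂ) Q)).congr_deriv ?_
    rw [map_mul, aeval_X, id, mul_one]
    ring
  · rw [norm_mul, norm_mul, Complex.norm_exp, Complex.norm_exp, Complex.re_mul_ofReal,
      Complex.natCast_re, Complex.mul_re, Complex.natCast_re, Complex.natCast_im, zero_mul,
      sub_zero]
    gcongr

lemma polyExpSum_eq_of_eval_eq_zero {k l : ℕ} (hkl : k ≤ l) (Q : ℚ[X]) {x : ℂ} (hx : x.re < 0)
    (hQ : ∀ ν : ℕ, k ≤ ν → ν < l → Q.eval (ν : ℚ) = 0) : polyExpSum k Q x = polyExpSum l Q x := by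
  obtain ⟨d, rfl⟩ := Nat.exists_eq_add_of_le hkl
  rw [polyExpSum, ← (summable_norm_polyExpSum k Q hx).of_norm.sum_add_tsum_nat_add d,
    Finset.sum_eq_zero fun i hi => ?_, zero_add, polyExpSum]
  · simp only [add_right_comm, ← add_assoc]
  · rw [aeval_natCast_eq_ratCast_eval, hQ (k + i) (Nat.le_add_right k i)
      (Nat.add_lt_add_left (Finset.mem_range.1 hi) k), Rat.cast_zero, zero_mul]

lemma polyExpDerivSum_add (k : ℕ) (P Q : ℚ[X]) {x : ℂ} (hx : x.re < 0) :
    polyExpDerivSum k (P + Q) x = polyExpDerivSum k P x + polyExpDerivSum k Q x := by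
  simp only [polyExpDerivSum, derivative_add, polyExpSum_add k _ _ hx]
  ring

lemma polyExpDerivSum_C_mul (k : ℕ) (c : ℚ) (Q : ℚ[X]) (x : ℂ) :
    polyExpDerivSum k (C c * Q) x = c * polyExpDerivSum k Q x := by
  simp only [polyExpDerivSum, derivative_C_mul, polyExpSum_C_mul]
  ring

lemma hasDerivAt_polyExpDerivSum (k : ℕ) (Q : ℚ[X]) {x : ℂ} (hx : x.re < 0) :
    HasDerivAt (polyExpDerivSum k Q) (polyExpDerivSum k (X * Q) x) x := by
  refine (((hasDerivAt_id x).mul (hasDerivAt_polyExpSum k Q hx)).add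
    (hasDerivAt_polyExpSum k (derivative Q) hx)).congr_deriv ?_
  simp only [polyExpDerivSum, derivative_mul, derivative_X, one_mul, polyExpSum_add k _ _ hx,
    id_eq]
  ring

end ExponentialSums

section HyperbolicSecant

open MeasureTheory Filter Asymptotics Set

lemma integrable_one_add_abs_pow_mul_exp_neg_mul_abs (d : ℕ) {b : ℝ} (hb : 0 < b) :
    Integrable fun y : ℝ => (1 + |y|) ^ d * Real.exp (-(b * |y|)) := by
  have hpow : (fun y : ℝ => (1 + |y|) ^ d) =O[atTop] fun y => Real.exp (b / 2 * y) := by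
    have hadd : (fun y : ℝ => 1 + |y|) =O[atTop] id :=
      (isLittleO_const_id_atTop (1 : ℝ)).isBigO.add (isBigO_refl _ _).abs_left
    exact (hadd.pow d).trans (isLittleO_pow_exp_pos_mul_atTop d (half_pos hb)).isBigO
  have hexp : (fun y : ℝ => Real.exp (-(b * |y|))) =ᶠ[atTop] fun y => Real.exp (-(b * y)) := by
    filter_upwards [eventually_ge_atTop 0] with y hy
    rw [abs_of_nonneg hy]
  refine LocallyIntegrable.integrable_of_isBigO_atTop_of_norm_isNegInvariant
    (g := fun y => Real.exp (-(b / 2) * y)) (Continuous.locallyIntegrable (by fun_prop))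
    (ae_of_all _ fun y => by simp only [Function.comp_apply, abs_neg])
    ((hpow.mul hexp.isBigO).congr_right fun y => ?_)
    ⟨Ioi 0, Ioi_mem_atTop 0, exp_neg_integrableOn_Ioi 0 (half_pos hb)⟩
  rw [← Real.exp_add]
  ring_nf

lemma inv_cosh_sq_le (u : ℝ) : (Real.cosh u ^ 2)⁻¹ ≤ 4 * Real.exp (-(2 * |u|)) := by
  have hcosh : Real.exp |u| / 2 ≤ Real.cosh u := by
    rw [Real.cosh_eq]
    gcongr
    exact Real.exp_abs_le u
  calc (Real.cosh u ^ 2)⁻¹ ≤ ((Real.exp |u| / 2) ^ 2)⁻¹ := by gcongr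
    _ = 4 * Real.exp (-(2 * |u|)) := by
      rw [div_pow, ← Real.exp_nat_mul, inv_div, Real.exp_neg, Nat.cast_two, div_eq_mul_inv]
      norm_num

lemma betaIntegral_one_add_mul_I {w : ℝ} (hw : w ≠ 0) :
    Complex.betaIntegral (w * Complex.I + 1) (1 - w * Complex.I) =
      ((Real.pi * w / Real.sinh (Real.pi * w) : ℝ) : ℂ) := by
  have hwI : (w : ℂ) * Complex.I ≠ 0 :=
    mul_ne_zero (Complex.ofReal_ne_zero.2 hw) Complex.I_ne_zero
  have hprod := Complex.Gamma_mul_Gamma_eq_betaIntegral (s := w * Complex.I + 1)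
    (t := 1 - w * Complex.I) (by simp) (by simp)
  have hGamma : Complex.Gamma ((w : ℂ) * Complex.I + 1 + (1 - w * Complex.I)) = 1 := by
    rw [add_assoc, add_left_comm, add_sub_cancel, Complex.Gamma_add_one 1 one_ne_zero,
      Complex.Gamma_one, one_mul]
  rw [Complex.Gamma_add_one _ hwI, mul_assoc, Complex.Gamma_mul_Gamma_one_sub, hGamma,
    one_mul, ← mul_assoc (Real.pi : ℂ), Complex.sin_mul_I] at hprod
  rw [← hprod, mul_div_assoc', mul_right_comm, mul_div_mul_right _ _ Complex.I_ne_zero,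
    mul_comm (w : ℂ)]
  push_cast
  rfl

lemma sigmoid_cpow_mul_one_sub_sigmoid_cpow_neg (u : ℝ) (z : ℂ) :
    (Real.sigmoid u : ℂ) ^ z * (1 - (Real.sigmoid u : ℂ)) ^ (-z) = Complex.exp (u * z) := by
  have hpos := Real.sigmoid_pos u
  have hneg := Real.sigmoid_pos (-u)
  have hlog : Real.log (Real.sigmoid (-u)) = Real.log (Real.sigmoid u) - u := by
    rw [← Real.sigmoid_mul_rexp_neg, Real.log_mul hpos.ne' (Real.exp_ne_zero _), Real.log_exp,
      sub_eq_add_neg]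
  rw [← Complex.ofReal_one, ← Complex.ofReal_sub, ← Real.sigmoid_neg,
    Complex.cpow_def_of_ne_zero (Complex.ofReal_ne_zero.2 hpos.ne'),
    Complex.cpow_def_of_ne_zero (Complex.ofReal_ne_zero.2 hneg.ne'), ← Complex.exp_add,
    ← Complex.ofReal_log hpos.le, ← Complex.ofReal_log hneg.le, hlog]
  push_cast
  ring_nf

lemma integral_sigmoid_mul_one_sub_sigmoid_mul_cexp {w : ℝ} (hw : w ≠ 0) :
    ∫ u : ℝ, ((Real.sigmoid u * (1 - Real.sigmoid u) : ℝ) : ℂ) *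
      Complex.exp (u * (w * Complex.I)) = ((Real.pi * w / Real.sinh (Real.pi * w) : ℝ) : ℂ) := by
  rw [← betaIntegral_one_add_mul_I hw, Complex.betaIntegral,
    intervalIntegral.integral_of_le zero_le_one, integral_Ioc_eq_integral_Ioo,
    ← Real.range_sigmoid, ← image_univ, integral_image_eq_integral_abs_deriv_smul MeasurableSet.univ
      (fun u _ => (Real.hasDerivAt_sigmoid u).hasDerivWithinAt) Real.sigmoid_injective.injOn,
    setIntegral_univ]
  refine integral_congr_ae (ae_of_all _ fun u => ?_)
  simp only
  rw [add_sub_cancel_right, sub_right_comm, sub_self, zero_sub,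
    sigmoid_cpow_mul_one_sub_sigmoid_cpow_neg, abs_of_nonneg
      (mul_nonneg (Real.sigmoid_nonneg u) (sub_nonneg.2 (Real.sigmoid_le_one u))),
    Complex.real_smul]

lemma inv_cosh_sq_eq_sigmoid (u : ℝ) :
    (Real.cosh u ^ 2)⁻¹ = 4 * (Real.sigmoid (2 * u) * (1 - Real.sigmoid (2 * u))) := by
  have hexp : Real.exp (-(2 * u)) = Real.exp (-u) ^ 2 := by
    rw [← Real.exp_nat_mul, Nat.cast_two, mul_neg]
  rw [← Real.sigmoid_neg, ← Real.sigmoid_mul_rexp_neg, Real.sigmoid_def, hexp, Real.cosh_eq,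
    ← inv_inv (Real.exp u), ← Real.exp_neg]
  have := Real.exp_pos (-u)
  field_simp
  norm_num1

lemma integral_inv_cosh_sq_mul_cexp {x : ℝ} (hx : x ≠ 0) :
    ∫ y : ℝ, (((Real.cosh (Real.pi * y) ^ 2)⁻¹ : ℝ) : ℂ) * Complex.exp (y * x * Complex.I) =
      ((x / (Real.pi * Real.sinh (x / 2)) : ℝ) : ℂ) := by
  have hpi := Real.pi_ne_zero
  have hscale (y : ℝ) : (((Real.cosh (Real.pi * y) ^ 2)⁻¹ : ℝ) : ℂ) *
      Complex.exp (y * x * Complex.I) =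
      4 * (((Real.sigmoid (2 * Real.pi * y) * (1 - Real.sigmoid (2 * Real.pi * y)) : ℝ) : ℂ) *
        Complex.exp ((2 * Real.pi * y : ℝ) * ((x / (2 * Real.pi) : ℝ) * Complex.I))) := by
    rw [inv_cosh_sq_eq_sigmoid, ← mul_assoc 2]
    push_cast
    field_simp
  simp only [hscale, integral_const_mul]
  rw [Measure.integral_comp_mul_left (fun u : ℝ => ((Real.sigmoid u * (1 - Real.sigmoid u) : ℝ) : ℂ)
      * Complex.exp (u * ((x / (2 * Real.pi) : ℝ) * Complex.I))) (2 * Real.pi),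
    integral_sigmoid_mul_one_sub_sigmoid_mul_cexp (div_ne_zero hx (by positivity)),
    Complex.real_smul, abs_of_pos (by positivity),
    show Real.pi * (x / (2 * Real.pi)) = x / 2 by field_simp]
  push_cast
  field_simp
  norm_num

end HyperbolicSecant

section SechIntegral

open Polynomial Filter Topology MeasureTheory

lemma exists_norm_aeval_add_mul_I_le (Q : ℚ[X]) (c : ℝ) :
    ∃ M ≥ 0, ∀ y : ℝ, ‖aeval ((c : ℂ) + y * Complex.I) Q‖ ≤ M * (1 + |y|) ^ Q.natDegree := by
  refine ⟨∑ i ∈ Finset.range (Q.natDegree + 1), ‖(Q.coeff i : ℂ)‖ * (1 + |c|) ^ i,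
    by positivity, fun y => ?_⟩
  have hnorm : ‖(c : ℂ) + y * Complex.I‖ ≤ (1 + |c|) * (1 + |y|) := by
    refine (norm_add_le _ _).trans ?_
    rw [norm_mul, Complex.norm_I, mul_one, Complex.norm_real, Complex.norm_real, Real.norm_eq_abs,
      Real.norm_eq_abs]
    nlinarith [abs_nonneg c, abs_nonneg y]
  have hone : 1 ≤ 1 + |y| := le_add_of_nonneg_right (abs_nonneg y)
  rw [aeval_eq_sum_range, Finset.sum_mul]
  refine (norm_sum_le _ _).trans (Finset.sum_le_sum fun i hi => ?_)
  rw [Algebra.smul_def, eq_ratCast, norm_mul, norm_pow]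
  calc ‖(Q.coeff i : ℂ)‖ * ‖(c : ℂ) + y * Complex.I‖ ^ i
      ≤ ‖(Q.coeff i : ℂ)‖ * ((1 + |c|) * (1 + |y|)) ^ i := by gcongr
    _ = ‖(Q.coeff i : ℂ)‖ * (1 + |c|) ^ i * (1 + |y|) ^ i := by rw [mul_pow, mul_assoc]
    _ ≤ ‖(Q.coeff i : ℂ)‖ * (1 + |c|) ^ i * (1 + |y|) ^ Q.natDegree := by
      gcongr
      exact Nat.lt_succ_iff.1 (Finset.mem_range.1 hi)

/-- The integrand, on the line `Re s = c`, of the integral of `Q(s) * exp (s * x)` against the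
kernel `1 / cosh (π * Im s) ^ 2`. -/
noncomputable def sechIntegrand (c : ℝ) (Q : ℚ[X]) (x y : ℝ) : ℂ :=
  (((Real.cosh (Real.pi * y) ^ 2)⁻¹ : ℝ) : ℂ) *
    (aeval ((c : ℂ) + y * Complex.I) Q * Complex.exp ((c + y * Complex.I) * x))

/-- The integral of `Q(s) * exp (s * x) / cosh (π * Im s) ^ 2` over the line `Re s = c`. For
`c = k - 1 / 2` the kernel is `(π / sin (π * s)) ^ 2` up to a constant, so that this integral is
the sum of the residues at the integers `ν ≥ k`. -/
noncomputable def sechIntegral (c : ℝ) (Q : ℚ[X]) (x : ℝ) : ℂ :=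
  ∫ y : ℝ, sechIntegrand c Q x y

lemma continuous_sechIntegrand (c : ℝ) (Q : ℚ[X]) (x : ℝ) : Continuous (sechIntegrand c Q x) := by
  have hkernel : Continuous fun y : ℝ => (Real.cosh (Real.pi * y) ^ 2)⁻¹ :=
    Continuous.inv₀ (by fun_prop) fun y => pow_ne_zero 2 (Real.cosh_pos _).ne'
  have haeval : Continuous fun y : ℝ => aeval ((c : ℂ) + y * Complex.I) Q :=
    Q.continuous_aeval.comp (by fun_prop)
  exact (Complex.continuous_ofReal.comp hkernel).mul (haeval.mul (by fun_prop))

lemma norm_sechIntegrand (c : ℝ) (Q : ℚ[X]) (x y : ℝ) :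
    ‖sechIntegrand c Q x y‖ = (Real.cosh (Real.pi * y) ^ 2)⁻¹ *
      (‖aeval ((c : ℂ) + y * Complex.I) Q‖ * Real.exp (c * x)) := by
  have hre : (((c : ℂ) + y * Complex.I) * x).re = c * x := by simp
  rw [sechIntegrand, norm_mul, norm_mul, Complex.norm_exp, hre, Complex.norm_real,
    Real.norm_of_nonneg (by positivity)]

lemma exists_norm_sechIntegrand_le (c : ℝ) (Q : ℚ[X]) :
    ∃ M ≥ 0, ∀ x y : ℝ, ‖sechIntegrand c Q x y‖ ≤
      M * Real.exp (c * x) * ((1 + |y|) ^ Q.natDegree * Real.exp (-(2 * Real.pi * |y|))) := by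
  obtain ⟨M, hM, hQ⟩ := exists_norm_aeval_add_mul_I_le Q c
  refine ⟨4 * M, by positivity, fun x y => ?_⟩
  have hkernel := inv_cosh_sq_le (Real.pi * y)
  rw [abs_mul, abs_of_pos Real.pi_pos, ← mul_assoc] at hkernel
  calc ‖sechIntegrand c Q x y‖
      ≤ 4 * Real.exp (-(2 * Real.pi * |y|)) *
        (M * (1 + |y|) ^ Q.natDegree * Real.exp (c * x)) := by
        rw [norm_sechIntegrand]
        gcongr
        exact hQ y
    _ = _ := by ring

lemma integrable_sechIntegrand (c : ℝ) (Q : ℚ[X]) (x : ℝ) : Integrable (sechIntegrand c Q x) := by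
  obtain ⟨M, -, hM⟩ := exists_norm_sechIntegrand_le c Q
  exact ((integrable_one_add_abs_pow_mul_exp_neg_mul_abs _ Real.two_pi_pos).const_mul _).mono'
    (continuous_sechIntegrand c Q x).aestronglyMeasurable (ae_of_all _ (hM x))

lemma hasDerivAt_sechIntegrand (c : ℝ) (Q : ℚ[X]) (x y : ℝ) :
    HasDerivAt (fun w => sechIntegrand c Q w y) (sechIntegrand c (X * Q) x y) x := by
  have hlin : HasDerivAt (fun w : ℝ => ((c : ℂ) + y * Complex.I) * (w : ℂ))
      ((c + y * Complex.I) * 1) x :=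
    ((hasDerivAt_id x).ofReal_comp).const_mul _
  refine ((hlin.cexp.const_mul _).const_mul _).congr_deriv ?_
  rw [sechIntegrand, map_mul, aeval_X]
  ring

lemma hasDerivAt_sechIntegral (c : ℝ) (Q : ℚ[X]) (x : ℝ) :
    HasDerivAt (sechIntegral c Q) (sechIntegral c (X * Q) x) x := by
  obtain ⟨M, hM, hbound⟩ := exists_norm_sechIntegrand_le c (X * Q)
  refine (hasDerivAt_integral_of_dominated_loc_of_deriv_le
    (bound := fun y => M * Real.exp (|c| * (|x| + 1)) *
      ((1 + |y|) ^ (X * Q).natDegree * Real.exp (-(2 * Real.pi * |y|))))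
    (Metric.ball_mem_nhds x one_pos)
    (Eventually.of_forall fun w => (continuous_sechIntegrand c Q w).aestronglyMeasurable)
    (integrable_sechIntegrand c Q x) (continuous_sechIntegrand c (X * Q) x).aestronglyMeasurable
    (ae_of_all _ fun y w hw => (hbound w y).trans ?_)
    ((integrable_one_add_abs_pow_mul_exp_neg_mul_abs _ Real.two_pi_pos).const_mul _)
    (ae_of_all _ fun y w _ => hasDerivAt_sechIntegrand c Q w y)).2
  have hw' : |w| ≤ |x| + 1 := by
    rw [Metric.mem_ball, Real.dist_eq] at hw
    linarith [abs_sub_abs_le_abs_sub w x]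
  have hexp : c * w ≤ |c| * (|x| + 1) :=
    calc c * w ≤ |c| * |w| := abs_mul c w ▸ le_abs_self _
      _ ≤ |c| * (|x| + 1) := by gcongr
  gcongr

lemma sechIntegral_add (c : ℝ) (P Q : ℚ[X]) (x : ℝ) :
    sechIntegral c (P + Q) x = sechIntegral c P x + sechIntegral c Q x := by
  rw [sechIntegral, sechIntegral, sechIntegral,
    ← integral_add (integrable_sechIntegrand c P x) (integrable_sechIntegrand c Q x)]
  simp only [sechIntegrand, map_add, add_mul, mul_add]

lemma sechIntegral_C_mul (c : ℝ) (a : ℚ) (Q : ℚ[X]) (x : ℝ) :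
    sechIntegral c (C a * Q) x = a * sechIntegral c Q x := by
  rw [sechIntegral, sechIntegral, ← integral_const_mul]
  simp only [sechIntegrand, map_mul, aeval_C, eq_ratCast, mul_assoc, mul_left_comm]

lemma exp_mul_div_sinh {x : ℝ} (hx : x < 0) (k : ℕ) :
    Real.exp ((k - 1 / 2) * x) * (x / (Real.pi * Real.sinh (x / 2))) =
      -(2 / Real.pi) * (x * (Real.exp (k * x) / (1 - Real.exp x))) := by
  have hshift : Real.exp ((k - 1 / 2) * x) = Real.exp (k * x) * (Real.exp (x / 2))⁻¹ := by
    rw [← Real.exp_neg, ← Real.exp_add]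
    ring_nf
  have hsq : Real.exp x = Real.exp (x / 2) ^ 2 := by
    rw [← Real.exp_nat_mul, Nat.cast_two, mul_div_cancel₀ _ two_ne_zero]
  have hlt : Real.exp (x / 2) < 1 := Real.exp_lt_one_iff.2 (by linarith)
  have hpos := Real.exp_pos (x / 2)
  have hden : 1 - Real.exp (x / 2) ^ 2 ≠ 0 := by nlinarith
  have hden' : Real.exp (x / 2) ^ 2 - 1 ≠ 0 := by nlinarith
  have hsinh : Real.sinh (x / 2) = (Real.exp (x / 2) ^ 2 - 1) / (2 * Real.exp (x / 2)) := by
    rw [Real.sinh_eq, Real.exp_neg]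
    field_simp
  rw [hsinh, hshift, hsq]
  field_simp
  ring

lemma sechIntegral_one (k : ℕ) {x : ℝ} (hx : x < 0) :
    sechIntegral (k - 1 / 2) 1 x = -(2 / Real.pi : ℝ) * polyExpDerivSum k 1 x := by
  have hfactor (y : ℝ) : sechIntegrand (k - 1 / 2) 1 x y =
      (Real.exp ((k - 1 / 2) * x) : ℂ) * ((((Real.cosh (Real.pi * y) ^ 2)⁻¹ : ℝ) : ℂ) *
        Complex.exp (y * x * Complex.I)) := by
    rw [sechIntegrand, map_one, one_mul, add_mul, Complex.exp_add, mul_right_comm (y : ℂ)]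
    push_cast
    ring
  simp only [sechIntegral, hfactor, integral_const_mul]
  rw [integral_inv_cosh_sq_mul_cexp hx.ne, polyExpDerivSum, derivative_one, polyExpSum_zero,
    add_zero, polyExpSum_one k (by rwa [Complex.ofReal_re]), ← Complex.ofReal_mul,
    exp_mul_div_sinh hx k]
  push_cast
  rfl

lemma sechIntegral_X_pow (k i : ℕ) {x : ℝ} (hx : x < 0) :
    sechIntegral (k - 1 / 2) (X ^ i) x = -(2 / Real.pi : ℝ) * polyExpDerivSum k (X ^ i) x := by
  induction i generalizing x with
  | zero => simpa only [pow_zero] using sechIntegral_one k hx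
  | succ i ih =>
    have hseries := ((hasDerivAt_polyExpDerivSum k (X ^ i)
      (x := (x : ℂ)) (by rwa [Complex.ofReal_re])).comp_ofReal).const_mul (-(2 / Real.pi : ℝ) : ℂ)
    rw [pow_succ']
    refine (hasDerivAt_sechIntegral _ (X ^ i) x).unique (hseries.congr_of_eventuallyEq ?_)
    filter_upwards [Iio_mem_nhds hx] with w hw using ih hw

theorem sechIntegral_eq (k : ℕ) (Q : ℚ[X]) {x : ℝ} (hx : x < 0) :
    sechIntegral (k - 1 / 2) Q x = -(2 / Real.pi : ℝ) * polyExpDerivSum k Q x := by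
  induction Q using Polynomial.induction_on' with
  | add P Q hP hQ =>
    rw [sechIntegral_add, polyExpDerivSum_add k P Q (by rwa [Complex.ofReal_re]), hP, hQ, mul_add]
  | monomial i a =>
    rw [← C_mul_X_pow_eq_monomial, sechIntegral_C_mul, polyExpDerivSum_C_mul,
      sechIntegral_X_pow k i hx, mul_left_comm]

end SechIntegral

section LineDecay

open Polynomial MeasureTheory

/-- The exponential rate in `|Im s|` at which `π ^ 3 / cosh (π * Im s) ^ 3` times
`binomTriple (17 * N)` decays on the line `Re s = 64 * N - 1 / 2`. The parameter `t` is the height,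
in units of `N`, at which the bound is sharp. -/
noncomputable def lineDecay (t : ℝ) : ℝ :=
  (Real.arctan (t / 64) + Real.arctan (t / 55)) + (Real.arctan (t / 47) + Real.arctan (t / 38)) +
    (Real.arctan (t / 30) + Real.arctan (t / 21))

/-- The exponential rate in `N` of the bound for `binomTriple (17 * N)` on the line
`Re s = 64 * N - 1 / 2` that goes with `lineDecay t`. -/
noncomputable def lineGrowth (t : ℝ) : ℝ :=
  verticalGrowth t 64 55 * verticalGrowth t 47 38 * verticalGrowth t 30 21

lemma lineGrowth_nonneg (t : ℝ) : 0 ≤ lineGrowth t :=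
  mul_nonneg (mul_nonneg (verticalGrowth_nonneg ..) (verticalGrowth_nonneg ..))
    (verticalGrowth_nonneg ..)

lemma aeval_binomTriple_seventeen_mul (N : ℕ) (s : ℂ) :
    aeval s (binomTriple (17 * N)) = aeval s (binomPoly ((64 + 55) * N)) *
      aeval (s - 17 * N) (binomPoly ((47 + 38) * N)) *
        aeval (s - 34 * N) (binomPoly ((30 + 21) * N)) := by
  simp only [binomTriple, map_mul, aeval_comp, map_sub, aeval_X, aeval_C, eq_ratCast]
  push_cast
  ring_nf

lemma exists_norm_aeval_binomTriple_mul_le (t : ℝ) :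
    ∃ C ≥ 0, ∀ N : ℕ, 1 ≤ N → ∀ s : ℂ, s.re = 64 * N - 1 / 2 →
      ‖aeval s (binomTriple (17 * N))‖ * (Real.pi / Real.cosh (Real.pi * s.im)) ^ 3 ≤
        Real.exp (-(lineDecay t * |s.im|)) * (C * N ^ 6 * lineGrowth t ^ N) := by
  obtain ⟨C₇, hC₇, h₇⟩ :=
    exists_norm_aeval_binomPoly_mul_le t (a := 64) (b := 55) (by norm_num1) (by norm_num1)
  obtain ⟨C₅, hC₅, h₅⟩ :=
    exists_norm_aeval_binomPoly_mul_le t (a := 47) (b := 38) (by norm_num1) (by norm_num1)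
  obtain ⟨C₃, hC₃, h₃⟩ :=
    exists_norm_aeval_binomPoly_mul_le t (a := 30) (b := 21) (by norm_num1) (by norm_num1)
  refine ⟨C₇ * C₅ * C₃, by positivity, fun N hN s hs => ?_⟩
  have him₅ : (s - 17 * N).im = s.im := by simp
  have him₃ : (s - 34 * N).im = s.im := by simp
  have hbound₇ := h₇ N hN s hs
  have hbound₅ := h₅ N hN (s - 17 * N) (by simp [hs]; ring)
  have hbound₃ := h₃ N hN (s - 34 * N) (by simp [hs]; ring)
  rw [him₅] at hbound₅
  rw [him₃] at hbound₃
  have hnonneg (z : ℂ) : 0 ≤ ‖z‖ * (Real.pi / Real.cosh (Real.pi * s.im)) :=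
    mul_nonneg (norm_nonneg z) (div_nonneg Real.pi_nonneg (Real.cosh_pos _).le)
  have hexp (a b c u : ℝ) : Real.exp (-((a + b + c) * u)) =
      Real.exp (-(a * u)) * Real.exp (-(b * u)) * Real.exp (-(c * u)) := by
    rw [← Real.exp_add, ← Real.exp_add]
    ring_nf
  rw [aeval_binomTriple_seventeen_mul, norm_mul, norm_mul, pow_succ, pow_two, mul_mul_mul_comm,
    mul_mul_mul_comm ‖_‖]
  refine (mul_le_mul (mul_le_mul hbound₇ hbound₅ (hnonneg _) ((hnonneg _).trans hbound₇)) hbound₃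
    (hnonneg _) (mul_nonneg ((hnonneg _).trans hbound₇) ((hnonneg _).trans hbound₅))).trans_eq ?_
  rw [lineDecay, lineGrowth, hexp, mul_pow, mul_pow]
  push_cast
  ring

lemma norm_aeval_centeredLinear_le (N : ℕ) (y : ℝ) :
    ‖aeval (((64 * N - 1 / 2 : ℝ) : ℂ) + y * Complex.I) (centeredLinear (17 * N))‖ ≤
      9 * (N + 1) * (1 + |y|) := by
  have hvalue : aeval (((64 * N - 1 / 2 : ℝ) : ℂ) + y * Complex.I) (centeredLinear (17 * N)) =
      ((9 * N : ℝ) : ℂ) + ((2 * y : ℝ) : ℂ) * Complex.I := by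
    simp only [centeredLinear, map_sub, map_mul, aeval_X, aeval_C, eq_ratCast]
    push_cast
    ring
  have hN : (0 : ℝ) ≤ N := N.cast_nonneg
  rw [hvalue]
  refine (norm_add_le _ _).trans ?_
  rw [norm_mul, Complex.norm_I, mul_one, Complex.norm_real, Complex.norm_real,
    Real.norm_of_nonneg (by positivity), Real.norm_eq_abs, abs_mul, abs_two]
  nlinarith [abs_nonneg y, mul_nonneg hN (abs_nonneg y)]

lemma cosh_le_exp_abs (u : ℝ) : Real.cosh u ≤ Real.exp |u| := by
  have hneg : Real.exp (-|u|) ≤ Real.exp |u| :=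
    Real.exp_le_exp.2 (neg_le_self (abs_nonneg u))
  rw [← Real.cosh_abs, Real.cosh_eq]
  linarith

lemma exists_inv_cosh_sq_mul_norm_aeval_binomTriple_le (t : ℝ) :
    ∃ C ≥ 0, ∀ N : ℕ, 1 ≤ N → ∀ y : ℝ, (Real.cosh (Real.pi * y) ^ 2)⁻¹ *
      ‖aeval (((64 * N - 1 / 2 : ℝ) : ℂ) + y * Complex.I) (binomTriple (17 * N))‖ ≤
        C * N ^ 6 * lineGrowth t ^ N * Real.exp (-((lineDecay t - Real.pi) * |y|)) := by
  obtain ⟨C, hC, hbound⟩ := exists_norm_aeval_binomTriple_mul_le t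
  refine ⟨C, hC, fun N hN y => ?_⟩
  have := lineGrowth_nonneg t
  have hline := hbound N hN (((64 * N - 1 / 2 : ℝ) : ℂ) + y * Complex.I) (by simp)
  have him : (((64 * N - 1 / 2 : ℝ) : ℂ) + y * Complex.I).im = y := by
    rw [Complex.add_im, Complex.ofReal_im, Complex.im_ofReal_mul, Complex.I_im, mul_one, zero_add]
  rw [him] at hline
  set c := Real.cosh (Real.pi * y)
  set R := ‖aeval (((64 * N - 1 / 2 : ℝ) : ℂ) + y * Complex.I) (binomTriple (17 * N))‖
  have hcpos : 0 < c := Real.cosh_pos _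
  have hcle : c ≤ Real.exp (Real.pi * |y|) := by
    simpa only [abs_mul, abs_of_pos Real.pi_pos] using cosh_le_exp_abs (Real.pi * y)
  calc (c ^ 2)⁻¹ * R = c * (R * (1 / c) ^ 3) := by field_simp
    _ ≤ c * (R * (Real.pi / c) ^ 3) := by
      gcongr
      linarith [Real.pi_gt_three]
    _ ≤ Real.exp (Real.pi * |y|) *
        (Real.exp (-(lineDecay t * |y|)) * (C * N ^ 6 * lineGrowth t ^ N)) := by gcongr
    _ = C * N ^ 6 * lineGrowth t ^ N * Real.exp (-((lineDecay t - Real.pi) * |y|)) := by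
      rw [← mul_assoc, ← Real.exp_add, mul_comm]
      ring_nf

lemma exists_norm_sechIntegrand_auxPoly_le (t x : ℝ) (k : ℕ) :
    ∃ C ≥ 0, ∀ N : ℕ, 1 ≤ N → ∀ y : ℝ,
      ‖sechIntegrand (64 * N - 1 / 2) (auxPoly (17 * N) k) x y‖ ≤
        C * (N + 1) ^ (6 + k) * (lineGrowth t * Real.exp (64 * x)) ^ N *
          ((1 + |y|) ^ k * Real.exp (-((lineDecay t - Real.pi) * |y|))) := by
  obtain ⟨C, hC, hbound⟩ := exists_inv_cosh_sq_mul_norm_aeval_binomTriple_le t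
  refine ⟨C * 9 ^ k * Real.exp (-(x / 2)), by positivity, fun N hN y => ?_⟩
  have := lineGrowth_nonneg t
  have hbinom := hbound N hN y
  have hlinear := norm_aeval_centeredLinear_le N y
  have hexp : Real.exp ((64 * N - 1 / 2) * x) = Real.exp (64 * x) ^ N * Real.exp (-(x / 2)) := by
    rw [← Real.exp_nat_mul, ← Real.exp_add]
    ring_nf
  rw [norm_sechIntegrand, auxPoly, map_mul, map_pow, norm_mul, norm_pow, ← mul_assoc, ← mul_assoc,
    hexp]
  calc _ ≤ C * N ^ 6 * lineGrowth t ^ N * Real.exp (-((lineDecay t - Real.pi) * |y|)) *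
        (9 * (N + 1) * (1 + |y|)) ^ k * (Real.exp (64 * x) ^ N * Real.exp (-(x / 2))) := by
        gcongr
    _ ≤ C * (N + 1) ^ 6 * lineGrowth t ^ N * Real.exp (-((lineDecay t - Real.pi) * |y|)) *
        (9 * (N + 1) * (1 + |y|)) ^ k * (Real.exp (64 * x) ^ N * Real.exp (-(x / 2))) := by
        gcongr
        exact le_add_of_nonneg_right zero_le_one
    _ = _ := by
        rw [mul_pow, mul_pow, mul_pow, pow_add]
        ring

theorem exists_norm_polyExpDerivSum_auxPoly_le {t x : ℝ} (ht : Real.pi < lineDecay t) (hx : x < 0)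
    (k : ℕ) : ∃ C : ℝ, ∀ N : ℕ, 1 ≤ N → ‖polyExpDerivSum (64 * N) (auxPoly (17 * N) k) x‖ ≤
      C * (N + 1) ^ (6 + k) * (lineGrowth t * Real.exp (64 * x)) ^ N := by
  obtain ⟨C, -, hbound⟩ := exists_norm_sechIntegrand_auxPoly_le t x k
  set I := ∫ y : ℝ, (1 + |y|) ^ k * Real.exp (-((lineDecay t - Real.pi) * |y|)) with hI
  refine ⟨Real.pi / 2 * (C * I), fun N hN => ?_⟩
  have hintegral : ‖sechIntegral (64 * N - 1 / 2) (auxPoly (17 * N) k) x‖ ≤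
      C * (N + 1) ^ (6 + k) * (lineGrowth t * Real.exp (64 * x)) ^ N * I := by
    rw [sechIntegral, hI, ← integral_const_mul]
    exact norm_integral_le_of_norm_le ((integrable_one_add_abs_pow_mul_exp_neg_mul_abs k
      (sub_pos.2 ht)).const_mul _) (ae_of_all _ (hbound N hN))
  have heq := sechIntegral_eq (64 * N) (auxPoly (17 * N) k) hx
  push_cast at heq
  rw [heq, norm_mul, norm_neg, ← Complex.ofReal_ofNat, ← Complex.ofReal_div, Complex.norm_real,
    Real.norm_of_nonneg (by positivity)] at hintegral
  calc ‖polyExpDerivSum (64 * N) (auxPoly (17 * N) k) x‖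
      = Real.pi / 2 * (2 / Real.pi * ‖polyExpDerivSum (64 * N) (auxPoly (17 * N) k) x‖) := by
        field_simp
    _ ≤ Real.pi / 2 *
        (C * (N + 1) ^ (6 + k) * (lineGrowth t * Real.exp (64 * x)) ^ N * I) := by gcongr
    _ = _ := by ring

end LineDecay

section Shift

open Polynomial

lemma cexp_mul_polyExpSum_comp (k : ℕ) {Q : ℚ[X]} {x : ℂ} (hx : x.re < 0)
    (hQ : Q.eval (k : ℚ) = 0) :
    Complex.exp x * polyExpSum k (Q.comp (X + C 1)) x = polyExpSum k Q x := by
  rw [polyExpSum_eq_of_eval_eq_zero k.le_succ Q hx fun ν h1 h2 => by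
      rwa [show ν = k by lia], polyExpSum, polyExpSum, ← tsum_mul_left]
  refine tsum_congr fun j => ?_
  have hvalue : aeval ((k + j : ℕ) : ℂ) (Q.comp (X + C 1)) = aeval ((k + 1 + j : ℕ) : ℂ) Q := by
    rw [aeval_comp, map_add, aeval_X, aeval_C, map_one]
    push_cast
    rw [add_right_comm]
  rw [hvalue, mul_left_comm, ← Complex.exp_add]
  push_cast
  ring_nf

lemma cexp_mul_polyExpDerivSum_comp (k : ℕ) {Q : ℚ[X]} {x : ℂ} (hx : x.re < 0)
    (hQ : Q.eval (k : ℚ) = 0) (hQ' : (derivative Q).eval (k : ℚ) = 0) :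
    Complex.exp x * polyExpDerivSum k (Q.comp (X + C 1)) x = polyExpDerivSum k Q x := by
  have hderiv : derivative (Q.comp (X + C 1)) = (derivative Q).comp (X + C 1) := by
    rw [derivative_comp, derivative_add, derivative_X, derivative_C, add_zero, one_mul]
  rw [polyExpDerivSum, polyExpDerivSum, ← cexp_mul_polyExpSum_comp k hx hQ,
    ← cexp_mul_polyExpSum_comp k hx hQ', hderiv]
  ring

/-- A linear form in the two series attached to `Q`. Its vanishing for several `Q` at once expresses
a linear dependence between the corresponding forms in `1` and `α`. -/
noncomputable def polyExpForm (k : ℕ) (a b : ℂ) (Q : ℚ[X]) (x : ℂ) : ℂ :=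
  a * polyExpSum k Q x + b * polyExpDerivSum k Q x

lemma polyExpForm_add (k : ℕ) (a b : ℂ) (P Q : ℚ[X]) {x : ℂ} (hx : x.re < 0) :
    polyExpForm k a b (P + Q) x = polyExpForm k a b P x + polyExpForm k a b Q x := by
  rw [polyExpForm, polyExpForm, polyExpForm, polyExpSum_add k _ _ hx, polyExpDerivSum_add k _ _ hx]
  ring

lemma polyExpForm_C_mul (k : ℕ) (a b : ℂ) (c : ℚ) (Q : ℚ[X]) (x : ℂ) :
    polyExpForm k a b (C c * Q) x = c * polyExpForm k a b Q x := by
  rw [polyExpForm, polyExpForm, polyExpSum_C_mul, polyExpDerivSum_C_mul]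
  ring

lemma cexp_mul_polyExpForm_comp (k : ℕ) (a b : ℂ) {Q : ℚ[X]} {x : ℂ} (hx : x.re < 0)
    (hQ : Q.eval (k : ℚ) = 0) (hQ' : (derivative Q).eval (k : ℚ) = 0) :
    Complex.exp x * polyExpForm k a b (Q.comp (X + C 1)) x = polyExpForm k a b Q x := by
  rw [polyExpForm, polyExpForm, ← cexp_mul_polyExpSum_comp k hx hQ,
    ← cexp_mul_polyExpDerivSum_comp k hx hQ hQ']
  ring

end Shift

section Recurrence

open Polynomial

variable {k m : ℕ} {a b x : ℂ} {R U V : ℚ[X]}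

lemma polyExpForm_mul_eq_of_monic (hx : x.re < 0) {P Q : ℚ[X]} (hP : P.Monic) (hQ : Q.Monic)
    (hPQ : P.degree = Q.degree)
    (hvanish : ∀ G : ℚ[X], G.degree < Q.degree → polyExpForm k a b (R * G) x = 0) :
    polyExpForm k a b (R * P) x = polyExpForm k a b (R * Q) x := by
  have hlt : (P - Q).degree < Q.degree :=
    hPQ ▸ degree_sub_lt_left hPQ hP.ne_zero (by rw [hP.leadingCoeff, hQ.leadingCoeff])
  rw [show R * P = R * Q + R * (P - Q) by ring, polyExpForm_add _ _ _ _ _ hx, hvanish _ hlt,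
    add_zero]

-- The shift `ν ↦ ν + 1` multiplies the form by `exp x ≠ 1`, while the recurrence shows that it
-- does not change the contribution of the leading term.
lemma polyExpForm_mul_X_pow_eq_zero (hx : x.re < 0) (hR : R.eval (k : ℚ) = 0)
    (hR' : (derivative R).eval (k : ℚ) = 0) (hU : U.Monic) (hV : V.Monic) (hUm : U.natDegree = m)
    (hVm : V.natDegree = m) (hrec : (R * V).comp (X + C 1) = R * U) (d : ℕ)
    (hvanish : ∀ G : ℚ[X], G.degree < (d + m : ℕ) → polyExpForm k a b (R * G) x = 0) :
    polyExpForm k a b (R * X ^ (d + m)) x = 0 := by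
  have hmonic {P Q : ℚ[X]} (hP : P.Monic) (hPm : P.natDegree = m) (hQ : Q.Monic)
      (hQd : Q.natDegree = d) :
      polyExpForm k a b (R * (P * Q)) x = polyExpForm k a b (R * X ^ (d + m)) x := by
    refine polyExpForm_mul_eq_of_monic hx (hP.mul hQ) (monic_X_pow _) ?_ ?_
    · rw [degree_X_pow, degree_eq_natDegree (hP.mul hQ).ne_zero, hP.natDegree_mul hQ, hPm, hQd,
        add_comm]
    · rwa [degree_X_pow]
  have hshift := cexp_mul_polyExpForm_comp k a b (Q := R * (V * X ^ d)) hx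
    (by rw [eval_mul, hR, zero_mul])
    (by simp only [derivative_mul, eval_add, eval_mul, hR, hR', zero_mul, add_zero])
  rw [← mul_assoc, mul_comp, hrec, X_pow_comp, mul_assoc, mul_assoc,
    hmonic hU hUm ((monic_X_add_C _).pow d) (by
      rw [(monic_X_add_C _).natDegree_pow, natDegree_X_add_C, mul_one]),
    hmonic hV hVm (monic_X_pow d) (natDegree_X_pow d)] at hshift
  have hexp : Complex.exp x ≠ 1 := fun h => by
    simpa only [h, norm_one, lt_self_iff_false] using norm_cexp_lt_one hx
  exact (mul_left_eq_self₀.1 hshift).resolve_left hexp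

theorem polyExpForm_mul_eq_zero (hx : x.re < 0) (hR : R.eval (k : ℚ) = 0)
    (hR' : (derivative R).eval (k : ℚ) = 0) (hU : U.Monic) (hV : V.Monic) (hUm : U.natDegree = m)
    (hVm : V.natDegree = m) (hrec : (R * V).comp (X + C 1) = R * U)
    (hvanish : ∀ G : ℚ[X], G.degree < m → polyExpForm k a b (R * G) x = 0) (G : ℚ[X]) :
    polyExpForm k a b (R * G) x = 0 := by
  suffices h : ∀ d : ℕ, ∀ G : ℚ[X], G.degree < (d + m : ℕ) → polyExpForm k a b (R * G) x = 0 from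
    h (G.natDegree + 1) G (degree_le_natDegree.trans_lt (by exact_mod_cast (by lia)))
  intro d
  induction d with
  | zero => simpa only [zero_add] using hvanish
  | succ d ih =>
    intro G hG
    have hlead := polyExpForm_mul_X_pow_eq_zero hx hR hR' hU hV hUm hVm hrec d ih
    set c := G.coeff (d + m)
    have hlt : (G - C c * X ^ (d + m)).degree < ((d + m : ℕ) : WithBot ℕ) := by
      rw [degree_lt_iff_coeff_zero] at hG ⊢
      intro i hi
      rcases eq_or_lt_of_le hi with rfl | hi
      · rw [coeff_sub, coeff_C_mul_X_pow, if_pos rfl, sub_self]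
      · rw [coeff_sub, coeff_C_mul_X_pow, hG i (by lia), if_neg hi.ne', sub_zero]
    rw [show R * G = C c * (R * X ^ (d + m)) + R * (G - C c * X ^ (d + m)) by ring,
      polyExpForm_add _ _ _ _ _ hx, polyExpForm_C_mul, hlead, ih _ hlt, mul_zero, add_zero]

end Recurrence

section Periodicity

open Polynomial Filter Topology

lemma hasDerivAt_polyExpForm (k : ℕ) (a b : ℂ) (Q : ℚ[X]) {x : ℂ} (hx : x.re < 0) :
    HasDerivAt (polyExpForm k a b Q) (polyExpForm k a b (X * Q) x) x :=
  ((hasDerivAt_polyExpSum k Q hx).const_mul a).add ((hasDerivAt_polyExpDerivSum k Q hx).const_mul b)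

lemma iteratedDeriv_polyExpForm (k : ℕ) (a b : ℂ) (Q : ℚ[X]) (i : ℕ) {x : ℂ} (hx : x.re < 0) :
    iteratedDeriv i (polyExpForm k a b Q) x = polyExpForm k a b (X ^ i * Q) x := by
  induction i generalizing x with
  | zero => rw [iteratedDeriv_zero, pow_zero, one_mul]
  | succ i ih =>
    have hnear : iteratedDeriv i (polyExpForm k a b Q) =ᶠ[𝓝 x] polyExpForm k a b (X ^ i * Q) := by
      filter_upwards [(isOpen_lt Complex.continuous_re continuous_const).mem_nhds hx] with w hw
      exact ih hw
    rw [iteratedDeriv_succ, hnear.deriv_eq, (hasDerivAt_polyExpForm k a b _ hx).deriv, pow_succ',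
      mul_assoc]

lemma polyExpSum_add_two_pi_mul_I (k : ℕ) (Q : ℚ[X]) (x : ℂ) :
    polyExpSum k Q (x + 2 * Real.pi * Complex.I) = polyExpSum k Q x := by
  refine tsum_congr fun j => ?_
  rw [mul_add, Complex.exp_add, Complex.exp_nat_mul_two_pi_mul_I, mul_one]

lemma polyExpForm_eqOn_zero {k : ℕ} {a b : ℂ} {Q : ℚ[X]} {x : ℂ} (hx : x.re < 0)
    (hQ : ∀ i : ℕ, polyExpForm k a b (X ^ i * Q) x = 0) :
    Set.EqOn (polyExpForm k a b Q) 0 {w : ℂ | w.re < 0} := by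
  have hopen : IsOpen {w : ℂ | w.re < 0} := isOpen_lt Complex.continuous_re continuous_const
  have hdiff : DifferentiableOn ℂ (polyExpForm k a b Q) {w : ℂ | w.re < 0} := fun w hw =>
    (hasDerivAt_polyExpForm k a b _ hw).differentiableAt.differentiableWithinAt
  obtain ⟨ε, hε, hball⟩ := Metric.isOpen_iff.1 hopen x hx
  refine (hdiff.analyticOnNhd hopen).eqOn_zero_of_preconnected_of_eventuallyEq_zero
    (convex_halfSpace_re_lt 0).isPreconnected hx ?_
  filter_upwards [Metric.ball_mem_nhds x hε] with w hw
  rw [← Complex.taylorSeries_eq_on_ball' hw (hdiff.mono hball)]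
  simp only [iteratedDeriv_polyExpForm k a b Q _ hx, hQ, mul_zero, zero_mul, tsum_zero,
    Pi.zero_apply]

-- Translating by `2πi` changes the form by `b * 2πi * polyExpSum k Q x`.
theorem eq_zero_of_polyExpForm_X_pow_mul_eq_zero {k : ℕ} {a b : ℂ} {Q : ℚ[X]} {x : ℂ}
    (hx : x.re < 0) (hQ : ∀ i : ℕ, polyExpForm k a b (X ^ i * Q) x = 0)
    (hne : polyExpSum k Q x ≠ 0) : b = 0 := by
  have hzero := polyExpForm_eqOn_zero hx hQ
  have hx' : (x + 2 * Real.pi * Complex.I).re < 0 := by simpa using hx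
  have hbase : polyExpForm k a b Q x = 0 := hzero hx
  have htranslate : polyExpForm k a b Q (x + 2 * Real.pi * Complex.I) = 0 := hzero hx'
  rw [polyExpForm, polyExpDerivSum] at hbase htranslate
  rw [polyExpSum_add_two_pi_mul_I, polyExpSum_add_two_pi_mul_I] at htranslate
  have hproduct : b * (2 * Real.pi * Complex.I) * polyExpSum k Q x = 0 := by
    linear_combination htranslate - hbase
  exact (mul_eq_zero.1 ((mul_eq_zero.1 hproduct).resolve_right hne)).resolve_right
    Complex.two_pi_I_ne_zero

end Periodicity

section NonVanishing

open Polynomial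

lemma eval_add_one_binomPoly_mul (m : ℕ) (x : ℚ) :
    (binomPoly m).eval (x + 1) * (x + 1 - m) = (binomPoly m).eval x * (x + 1) := by
  have h := congrArg (eval (x + 1)) ((descPochhammer_succ_right ℚ m).symm.trans
    (descPochhammer_succ_left ℚ m))
  simp only [eval_mul, eval_sub, eval_natCast, eval_X, eval_comp, eval_one,
    add_sub_cancel_right] at h
  rw [binomPoly, eval_mul, eval_mul, eval_C, eval_C, mul_assoc, h]
  ring

lemma binomTriple_recurrence (n : ℕ) :
    (binomTriple n * ((X - C (5 * n : ℚ)) * (X - C (6 * n : ℚ)) * (X - C (7 * n : ℚ)))).comp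
      (X + C 1) = binomTriple n * ((X + C 1) * (X + C (1 - n : ℚ)) * (X + C (1 - 2 * n : ℚ))) := by
  refine Polynomial.funext fun x => ?_
  have h₇ := eval_add_one_binomPoly_mul (7 * n) x
  have h₅ := eval_add_one_binomPoly_mul (5 * n) (x - n)
  have h₃ := eval_add_one_binomPoly_mul (3 * n) (x - 2 * n)
  push_cast at h₇ h₅ h₃
  simp only [binomTriple, eval_comp, eval_mul, eval_add, eval_X, eval_C, eval_sub]
  rw [show x + 1 - (n : ℚ) = x - n + 1 by ring, show x + 1 - 2 * (n : ℚ) = x - 2 * n + 1 by ring]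
  set y₇ := (binomPoly (7 * n)).eval (x + 1)
  set y₅ := (binomPoly (5 * n)).eval (x - n + 1)
  set y₃ := (binomPoly (3 * n)).eval (x - 2 * n + 1)
  calc _ = (y₇ * (x + 1 - 7 * n)) * (y₅ * (x - n + 1 - 5 * n)) *
        (y₃ * (x - 2 * n + 1 - 3 * n)) := by ring
    _ = _ := by
      rw [h₇, h₅, h₃]
      ring

lemma polyExpSum_binomTriple_ne_zero (n : ℕ) {x : ℝ} (hx : x < 0) :
    polyExpSum (6 * n) (binomTriple n) x ≠ 0 := by
  set f : ℕ → ℝ := fun j => ((6 * n + j).choose (7 * n) * (6 * n + j - n).choose (5 * n) *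
    (6 * n + j - 2 * n).choose (3 * n) : ℕ) * Real.exp ((6 * n + j : ℕ) * x) with hf
  have hterm (j : ℕ) : aeval ((6 * n + j : ℕ) : ℂ) (binomTriple n) *
      Complex.exp ((6 * n + j : ℕ) * x) = f j := by
    rw [aeval_natCast_eq_ratCast_eval, eval_natCast_binomTriple (by lia), hf]
    push_cast
    rfl
  have hsummable := (summable_norm_polyExpSum (6 * n) (binomTriple n) (x := x)
    (by simpa only [Complex.ofReal_re] using hx)).of_norm
  simp only [hterm, Complex.summable_ofReal] at hsummable
  have hn : 0 < (6 * n + n).choose (7 * n) * (6 * n + n - n).choose (5 * n) *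
      (6 * n + n - 2 * n).choose (3 * n) :=
    Nat.mul_pos (Nat.mul_pos (Nat.choose_pos (by lia)) (Nat.choose_pos (by lia)))
      (Nat.choose_pos (by lia))
  have hpos : 0 < ∑' j, f j :=
    hsummable.tsum_pos (fun j => by positivity) n (mul_pos (Nat.cast_pos.2 hn) (Real.exp_pos _))
  simp only [polyExpSum, hterm, ← Complex.ofReal_tsum]
  exact Complex.ofReal_ne_zero.2 hpos.ne'

lemma polyExpForm_binomTriple_mul_eq_zero {n k : ℕ} {a b x : ℂ} (hx : x.re < 0)
    (hvanish : ∀ j ≤ 2, polyExpForm k a b (auxPoly n j) x = 0) {G : ℚ[X]} (hG : G.degree < 3) :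
    polyExpForm k a b (binomTriple n * G) x = 0 := by
  obtain ⟨g₀, g₁, g₂, rfl⟩ : ∃ g₀ g₁ g₂ : ℚ, G = C g₀ + C g₁ * X + C g₂ * X ^ 2 := by
    refine ⟨G.coeff 0, G.coeff 1, G.coeff 2, ?_⟩
    have hnatDegree : G.natDegree < 3 := by
      rcases eq_or_ne G 0 with rfl | hne
      · rw [natDegree_zero]
        exact three_pos
      · exact (natDegree_lt_iff_degree_lt hne).2 hG
    conv_lhs => rw [G.as_sum_range_C_mul_X_pow' hnatDegree]
    simp only [Finset.sum_range_succ, Finset.sum_range_zero, zero_add, pow_zero, mul_one, pow_one]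
  have hspan : binomTriple n * (C g₀ + C g₁ * X + C g₂ * X ^ 2) =
      C (g₀ + g₁ * (7 * n - 1) / 2 + g₂ * (7 * n - 1) ^ 2 / 4) * auxPoly n 0 +
        C (g₁ / 2 + g₂ * (7 * n - 1) / 2) * auxPoly n 1 + C (g₂ / 4) * auxPoly n 2 := by
    refine Polynomial.funext fun y => ?_
    simp only [auxPoly, eval_add, eval_mul, eval_pow, eval_C, eval_X, eval_centeredLinear]
    ring
  rw [hspan, polyExpForm_add _ _ _ _ _ hx, polyExpForm_add _ _ _ _ _ hx, polyExpForm_C_mul,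
    polyExpForm_C_mul, polyExpForm_C_mul, hvanish 0 (by lia), hvanish 1 (by lia),
    hvanish 2 le_rfl, mul_zero, mul_zero, mul_zero, add_zero, add_zero]

theorem exists_polyExpForm_auxPoly_ne_zero {n k : ℕ} (hnk : n ≤ k) (hkn : k < 6 * n) {b : ℂ}
    (hb : b ≠ 0) (a : ℂ) {x : ℝ} (hx : x < 0) :
    ∃ j ≤ 2, polyExpForm k a b (auxPoly n j) x ≠ 0 := by
  by_contra! hvanish
  have hx' : (x : ℂ).re < 0 := by simpa only [Complex.ofReal_re] using hx
  have hauxPoly : auxPoly n 0 = binomTriple n := by rw [auxPoly, pow_zero, mul_one]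
  have hzero {ν : ℕ} (h1 : n ≤ ν) (h2 : ν < 6 * n) := eval_natCast_auxPoly_eq_zero 0 h1 h2
  rw [hauxPoly] at hzero
  refine hb (eq_zero_of_polyExpForm_X_pow_mul_eq_zero (k := k) (a := a) (Q := binomTriple n) hx'
    (fun i => ?_) ?_)
  · rw [mul_comm]
    exact polyExpForm_mul_eq_zero hx' (hzero hnk hkn).1 (hzero hnk hkn).2 (by monicity!)
      (by monicity!) (by compute_degree!) (by compute_degree!) (binomTriple_recurrence n)
      (fun G hG => polyExpForm_binomTriple_mul_eq_zero hx' hvanish hG) _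
  · rw [polyExpSum_eq_of_eval_eq_zero hkn.le _ hx' fun ν h1 h2 => (hzero (hnk.trans h1) h2).1]
    exact polyExpSum_binomTriple_ne_zero n hx

end NonVanishing

section LinearForms

open Polynomial

variable {r s : ℝ} {c : ℤ}

lemma natCast_mul_polyExpSum_eq_of_hasSum (hr₀ : 0 < r) (hr₁ : r < 1) {D k l d e : ℕ}
    (hkl : k ≤ l) (hde : d + e = 2 * l) {Q : ℚ[X]}
    (hQ : ∀ ν : ℕ, k ≤ ν → ν < l → Q.eval (ν : ℚ) = 0) {V : ℝ}
    (hV : HasSum (fun j : ℕ => ((D * Q.eval ((l + j : ℕ) : ℚ) : ℚ) : ℝ) * r ^ (2 * j + d)) V) :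
    D * polyExpSum k Q (2 * Real.log r : ℝ) = (V * r ^ e : ℝ) := by
  have hx : ((2 * Real.log r : ℝ) : ℂ).re < 0 :=
    (Complex.ofReal_re _).trans_lt (mul_neg_of_pos_of_neg two_pos (Real.log_neg hr₀ hr₁))
  rw [polyExpSum_eq_of_eval_eq_zero hkl Q hx hQ, polyExpSum, ← tsum_mul_left,
    ← (Complex.hasSum_ofReal.2 (hV.mul_right (r ^ e))).tsum_eq]
  refine tsum_congr fun j => ?_
  have hexp : Complex.exp ((l + j : ℕ) * (2 * Real.log r : ℝ)) = (r ^ (2 * j + d + e) : ℝ) := by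
    rw [add_assoc, hde, ← mul_add, add_comm j, ← Real.exp_log (pow_pos hr₀ _), Real.log_pow]
    push_cast
    ring_nf
  rw [aeval_natCast_eq_ratCast_eval, hexp, pow_add]
  push_cast
  ring

lemma sq_eq_one_add_four_mul_sq {K : Type*} [Field K] {r s c : K} (hr : 1 - r ^ 2 ≠ 0)
    (hrc : r / (1 - r ^ 2) = c) (hrs : (1 + r ^ 2) / (1 - r ^ 2) = s) :
    s ^ 2 = 1 + 4 * c ^ 2 := by
  rw [← hrc, ← hrs]
  field_simp
  ring

lemma exists_polyExpForm_auxPoly_eq (hr₀ : 0 < r) (hr₁ : r < 1) (hrc : r / (1 - r ^ 2) = c)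
    (hrs : (1 + r ^ 2) / (1 - r ^ 2) = s) {n k : ℕ} (hnk : n ≤ k) (hkn : k < 6 * n) (j : ℕ) :
    ∃ A B : ℤ,
      HasSum (fun i : ℕ =>
        ((reducedDenom n * (auxPoly n j).eval ((6 * n + i : ℕ) : ℚ) : ℚ) : ℝ) *
          r ^ (2 * i + 5 * n + 1)) ((if Even j then 1 else s) * c ^ (5 * n + 1) * B) ∧
      ∀ a b : ℂ,
        s * reducedDenom n * polyExpForm k a b (auxPoly n j) (2 * Real.log r : ℝ) =
          ((if Even j then 1 else s) * (c ^ (5 * n + 1) * r ^ (7 * n - 1)) : ℝ) *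
            ((a + b * (2 * Real.log r : ℝ)) * s * B + b * A) := by
  have hrsq : r ^ 2 < 1 := pow_lt_one₀ hr₀.le hr₁ two_ne_zero
  have hs : (s : ℂ) ^ 2 = 1 + 4 * c ^ 2 := by
    exact_mod_cast sq_eq_one_add_four_mul_sq (sub_pos.2 hrsq).ne' hrc hrs
  obtain ⟨A, B, hB, hA⟩ := exists_hasSum_auxPoly hrsq hrc hrs n j
  have hvalue := natCast_mul_polyExpSum_eq_of_hasSum hr₀ hr₁ hkn.le (d := 5 * n + 1)
    (e := 7 * n - 1) (by lia)
    (fun ν h1 h2 => (eval_natCast_auxPoly_eq_zero j (hnk.trans h1) h2).1) hB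
  have hderiv := natCast_mul_polyExpSum_eq_of_hasSum hr₀ hr₁ hkn.le (d := 5 * n + 1)
    (e := 7 * n - 1) (by lia)
    (fun ν h1 h2 => (eval_natCast_auxPoly_eq_zero j (hnk.trans h1) h2).2) hA
  refine ⟨if Even j then (1 + 4 * c ^ 2) * A else A, B, hB, fun a b => ?_⟩
  rw [polyExpForm, polyExpDerivSum]
  split_ifs at hvalue hderiv ⊢ <;> push_cast at hvalue hderiv ⊢
  · linear_combination s * (a + b * (2 * Real.log r)) * hvalue + s * b * hderiv +
      b * c ^ (5 * n + 1) * r ^ (7 * n - 1) * A * hs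
  · linear_combination s * (a + b * (2 * Real.log r)) * hvalue + s * b * hderiv

-- The nonvanishing form is the one attached to `p / q`, namely `a + b * 2 log r = p` and `b = s q`.
theorem exists_linear_form (hr₀ : 0 < r) (hr₁ : r < 1) (hrc : r / (1 - r ^ 2) = c)
    (hrs : (1 + r ^ 2) / (1 - r ^ 2) = s) {n k : ℕ} (hnk : n ≤ k) (hkn : k < 6 * n) (p : ℤ)
    (q : ℕ+) :
    ∃ j ≤ 2, ∃ A B : ℤ, A * (q : ℤ) + B * p ≠ 0 ∧
      HasSum (fun i : ℕ =>
        ((reducedDenom n * (auxPoly n j).eval ((6 * n + i : ℕ) : ℚ) : ℚ) : ℝ) *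
          r ^ (2 * i + 5 * n + 1)) ((if Even j then 1 else s) * c ^ (5 * n + 1) * B) ∧
      |A + B * (s * (2 * Real.log r))| * (c ^ (5 * n + 1) * r ^ (7 * n - 1)) ≤
        s * (reducedDenom n * ‖polyExpDerivSum k (auxPoly n j) (2 * Real.log r : ℝ)‖) := by
  have hrsq : 0 < 1 - r ^ 2 := sub_pos.2 (pow_lt_one₀ hr₀.le hr₁ two_ne_zero)
  have hs : 1 ≤ s := by
    rw [← hrs, one_le_div hrsq]
    linarith [sq_nonneg r]
  have hs₀ : (s : ℂ) ≠ 0 := Complex.ofReal_ne_zero.2 (zero_lt_one.trans_le hs).ne'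
  have hc : (0 : ℝ) < c := hrc ▸ div_pos hr₀ hrsq
  have hW : 0 < (c : ℝ) ^ (5 * n + 1) * r ^ (7 * n - 1) := by positivity
  obtain ⟨j, hj, hne⟩ := exists_polyExpForm_auxPoly_ne_zero hnk hkn (b := s * (q : ℕ))
    (mul_ne_zero hs₀ (Nat.cast_ne_zero.2 q.ne_zero))
    (p - s * (q : ℕ) * (2 * Real.log r : ℝ)) (mul_neg_of_pos_of_neg two_pos (Real.log_neg hr₀ hr₁))
  obtain ⟨A, B, hB, hform⟩ := exists_polyExpForm_auxPoly_eq hr₀ hr₁ hrc hrs hnk hkn j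
  have hunit : 1 ≤ if Even j then 1 else s := by split_ifs <;> first | exact le_rfl | exact hs
  refine ⟨j, hj, A, B, fun h => ?_, hB, ?_⟩
  · have h' : (A * (q : ℕ) + B * p : ℂ) = 0 := by exact_mod_cast h
    have hzero := hform (p - s * (q : ℕ) * (2 * Real.log r : ℝ)) (s * (q : ℕ))
    rw [sub_add_cancel, show (p * s * B + s * (q : ℕ) * A : ℂ) = s * (A * (q : ℕ) + B * p) by ring,
      h', mul_zero, mul_zero] at hzero
    exact mul_ne_zero (mul_ne_zero hs₀ (Nat.cast_ne_zero.2 (reducedDenom_ne_zero n))) hne hzero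
  · have hderiv := congrArg norm (hform 0 1)
    rw [polyExpForm, zero_mul, zero_add, one_mul, zero_add, one_mul, one_mul,
      show ((2 * Real.log r : ℝ) * s * B + A : ℂ) = (A + B * (s * (2 * Real.log r)) : ℝ) by
        push_cast
        ring, norm_mul, norm_mul, norm_mul, Complex.norm_real, Complex.norm_real,
      Complex.norm_real, Complex.norm_natCast, Real.norm_of_nonneg (zero_le_one.trans hs),
      Real.norm_of_nonneg (mul_nonneg (zero_le_one.trans hunit) hW.le), Real.norm_eq_abs] at hderiv
    rw [← mul_assoc s (reducedDenom n : ℝ), hderiv, mul_right_comm]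
    exact mul_le_mul_of_nonneg_right (le_mul_of_one_le_left (abs_nonneg _) hunit) hW.le

end LinearForms

section Numerics

open Finset

variable {v t L : ℝ} {k : ℕ}

lemma log_le_of_mul_one_sub_le (hv : 0 < v) (ht₀ : 0 ≤ t) (ht₁ : t < 1)
    (hvt : v * (1 - t) ≤ 2 ^ k * (1 + t))
    (hL : k * 0.6931471808 + 2 * ((∑ i ∈ range 8, t ^ (2 * i + 1) / (2 * i + 1)) +
      t ^ (2 * 8 + 1) / (1 - t ^ 2)) ≤ L) : Real.log v ≤ L := by
  have hsub : 0 < 1 - t := sub_pos.2 ht₁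
  have hseries := Real.log_div_le_sum_range_add ht₀ ht₁ 8
  have hlog : Real.log v ≤ Real.log (2 ^ k * ((1 + t) / (1 - t))) := by
    rw [← mul_div_assoc]
    exact Real.log_le_log hv ((le_div_iff₀ hsub).2 hvt)
  rw [Real.log_mul (by positivity) (by positivity), Real.log_pow] at hlog
  have htwo : k * Real.log 2 ≤ k * 0.6931471808 := by
    gcongr
    exact Real.log_two_lt_d9.le
  linarith

lemma le_log_of_le_mul_one_sub (ht₀ : 0 ≤ t) (ht₁ : t < 1)
    (hvt : 2 ^ k * (1 + t) ≤ v * (1 - t))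
    (hL : L ≤ k * 0.6931471803 + 2 * ∑ i ∈ range 8, t ^ (2 * i + 1) / (2 * i + 1)) :
    L ≤ Real.log v := by
  have hsub : 0 < 1 - t := sub_pos.2 ht₁
  have hseries := Real.sum_range_le_log_div ht₀ ht₁ 8
  have hlog : Real.log (2 ^ k * ((1 + t) / (1 - t))) ≤ Real.log v := by
    rw [← mul_div_assoc]
    exact Real.log_le_log (by positivity) ((div_le_iff₀ hsub).2 hvt)
  rw [Real.log_mul (by positivity) (by positivity), Real.log_pow] at hlog
  have htwo : k * 0.6931471803 ≤ k * Real.log 2 := by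
    gcongr
    exact Real.log_two_gt_d9.le
  linarith

/-- The root in `(0, 1)` of `r / (1 - r ^ 2) = 2`. Its square is `(√17 - 1) / (√17 + 1)`, the
argument of the logarithm under study. -/
noncomputable def baseRatio : ℝ :=
  (√17 - 1) / 4

lemma sqrt_seventeen_gt : 4.1231056256 < √17 := Real.lt_sqrt_of_sq_lt (by norm_num1)

lemma sqrt_seventeen_lt : √17 < 4.12310562565 := by
  rw [Real.sqrt_lt' (by norm_num1)]
  norm_num1

lemma baseRatio_pos : 0 < baseRatio := by
  unfold baseRatio
  linarith [sqrt_seventeen_gt]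

lemma baseRatio_lt_one : baseRatio < 1 := by
  unfold baseRatio
  linarith [sqrt_seventeen_lt]

lemma baseRatio_sq : baseRatio ^ 2 = (9 - √17) / 8 := by
  rw [baseRatio, div_pow, sub_sq, Real.sq_sqrt (by norm_num1)]
  ring

lemma baseRatio_div_one_sub_sq : baseRatio / (1 - baseRatio ^ 2) = 2 := by
  rw [baseRatio_sq, div_eq_iff (by linarith [sqrt_seventeen_gt]), baseRatio]
  ring

lemma one_add_baseRatio_sq_div : (1 + baseRatio ^ 2) / (1 - baseRatio ^ 2) = √17 := by
  rw [baseRatio_sq, div_eq_iff (by linarith [sqrt_seventeen_gt])]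
  linarith [Real.mul_self_sqrt (show (0 : ℝ) ≤ 17 by norm_num1)]

lemma log_sqrt_seventeen_sub_one_div :
    Real.log ((√17 - 1) / (√17 + 1)) = 2 * Real.log baseRatio := by
  rw [← Nat.cast_two, ← Real.log_pow, baseRatio_sq]
  congr 1
  rw [div_eq_iff (by linarith [sqrt_seventeen_gt])]
  linarith [Real.mul_self_sqrt (show (0 : ℝ) ≤ 17 by norm_num1)]

lemma log_baseRatio_le : Real.log baseRatio ≤ 0.445680720 - Real.log 2 := by
  rw [le_sub_iff_add_le', ← Real.log_mul two_ne_zero baseRatio_pos.ne']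
  refine log_le_of_mul_one_sub_le (t := 0.2192235937) (k := 0)
    (mul_pos two_pos baseRatio_pos) ?_ ?_ ?_ ?_
  · norm_num1
  · norm_num1
  · rw [baseRatio]
    linarith [sqrt_seventeen_lt]
  · norm_num [sum_range_succ]

end Numerics

section FormGrowth

open Finset

lemma verticalGrowth_pos (t : ℝ) {a b : ℕ} (ha : 0 < a) (hb : 0 < b) :
    0 < verticalGrowth t a b := by
  unfold verticalGrowth
  positivity

lemma log_natCast_pow_mul_sqrt_pow (t : ℝ) {a : ℕ} (ha : 0 < a) :
    Real.log ((a : ℝ) ^ a * √(1 + (t / a) ^ 2) ^ a) = a / 2 * Real.log (a ^ 2 + t ^ 2) := by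
  have hsqrt : a * √(1 + (t / a) ^ 2) = √(a ^ 2 + t ^ 2) := by
    nth_rw 1 [← Real.sqrt_sq (Nat.cast_nonneg (α := ℝ) a)]
    rw [← Real.sqrt_mul (by positivity)]
    congr 1
    field_simp
  rw [← mul_pow, hsqrt, Real.log_pow, Real.log_sqrt (by positivity)]
  ring

lemma log_verticalGrowth (t : ℝ) {a b : ℕ} (ha : 0 < a) (hb : 0 < b) :
    Real.log (verticalGrowth t a b) =
      a / 2 * Real.log (a ^ 2 + t ^ 2) + b / 2 * Real.log (b ^ 2 + t ^ 2) -
        (a + b) * Real.log (a + b) := by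
  rw [← log_natCast_pow_mul_sqrt_pow t ha, ← log_natCast_pow_mul_sqrt_pow t hb, ← Nat.cast_add,
    ← Real.log_pow, ← Real.log_mul (by positivity) (by positivity),
    ← Real.log_div (by positivity) (by positivity), verticalGrowth, Nat.cast_add]
  congr 1
  ring

lemma lineGrowth_pos (t : ℝ) : 0 < lineGrowth t := by
  unfold lineGrowth
  refine mul_pos (mul_pos ?_ ?_) ?_ <;> exact verticalGrowth_pos t (by norm_num1) (by norm_num1)

-- The height `22.2346` is the solution of `lineDecay t = π`, rounded up.
lemma pi_lt_lineDecay : Real.pi < lineDecay 22.2346 := by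
  rw [lineDecay, Real.arctan_add (x := 22.2346 / 64) (by norm_num1),
    Real.arctan_add (x := 22.2346 / 47) (by norm_num1),
    Real.arctan_add (x := 22.2346 / 30) (by norm_num1),
    Real.arctan_add_eq_add_pi (by norm_num1) (by norm_num1)]
  have hpos : ∀ {x y : ℝ}, -x < y → Real.pi < Real.arctan x + Real.pi + Real.arctan y := by
    intro x y hxy
    have harctan := Real.arctan_strictMono hxy
    rw [Real.arctan_neg] at harctan
    linarith
  exact hpos (by norm_num1)

lemma log_lineGrowth_le : Real.log (lineGrowth 22.2346) ≤ -142.52452 := by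
  have h64 : Real.log (64 ^ 2 + 22.2346 ^ 2) ≤ 8.431717533 := by
    apply log_le_of_mul_one_sub_le (t := 0.0569141096) (k := 12) <;> norm_num [sum_range_succ]
  have h55 : Real.log (55 ^ 2 + 22.2346 ^ 2) ≤ 8.166039392 := by
    apply log_le_of_mul_one_sub_le (t := 0.2642855553) (k := 11) <;> norm_num [sum_range_succ]
  have h47 : Real.log (47 ^ 2 + 22.2346 ^ 2) ≤ 7.902257176 := by
    apply log_le_of_mul_one_sub_le (t := 0.1379341983) (k := 11) <;> norm_num [sum_range_succ]
  have h38 : Real.log (38 ^ 2 + 22.2346 ^ 2) ≤ 7.569606537 := by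
    apply log_le_of_mul_one_sub_le (t := 0.3086633816) (k := 10) <;> norm_num [sum_range_succ]
  have h30 : Real.log (30 ^ 2 + 22.2346 ^ 2) ≤ 7.240203316 := by
    apply log_le_of_mul_one_sub_le (t := 0.1531512127) (k := 10) <;> norm_num [sum_range_succ]
  have h21 : Real.log (21 ^ 2 + 22.2346 ^ 2) ≤ 6.840950128 := by
    apply log_le_of_mul_one_sub_le (t := 0.2925134981) (k := 9) <;> norm_num [sum_range_succ]
  have h119 : 4.779123491 ≤ Real.log (64 + 55) := by
    apply le_log_of_le_mul_one_sub (t := 0.3005464480) (k := 6) <;> norm_num [sum_range_succ]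
  have h85 : 4.442651254 ≤ Real.log (47 + 38) := by
    apply le_log_of_le_mul_one_sub (t := 0.1409395973) (k := 6) <;> norm_num [sum_range_succ]
  have h51 : 3.931825631 ≤ Real.log (30 + 21) := by
    apply le_log_of_le_mul_one_sub (t := 0.2289156626) (k := 5) <;> norm_num [sum_range_succ]
  have hpos : ∀ {a b : ℕ}, 0 < a → 0 < b → verticalGrowth 22.2346 a b ≠ 0 :=
    fun ha hb => (verticalGrowth_pos _ ha hb).ne'
  rw [lineGrowth, Real.log_mul (mul_ne_zero (hpos (by norm_num1) (by norm_num1))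
      (hpos (by norm_num1) (by norm_num1))) (hpos (by norm_num1) (by norm_num1)),
    Real.log_mul (hpos (by norm_num1) (by norm_num1)) (hpos (by norm_num1) (by norm_num1)),
    log_verticalGrowth _ (by norm_num1) (by norm_num1),
    log_verticalGrowth _ (by norm_num1) (by norm_num1),
    log_verticalGrowth _ (by norm_num1) (by norm_num1)]
  simp only [Nat.cast_ofNat]
  linarith

/-- The exponential growth rate in `n` of the bound for the coefficient of the logarithm. The
weights `7 / (μ - 1)`, `5 / μ`, `3 / (μ + 1)` minimise `binomGrowth` subject to
`baseRatio ^ 2 * ((1 + y₇) * (1 + y₅) * (1 + y₃)) = 1`; the multiplier is `μ = 27.89794`, rounded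
up so that the product stays below `1`. -/
noncomputable def coeffGrowth : ℝ :=
  (baseRatio / 2) ^ 5 * binomGrowth (7 / 26.89794) (5 / 27.89794) (3 / 28.89794)

lemma baseRatio_sq_mul_weights_lt_one :
    baseRatio ^ 2 * ((1 + 7 / 26.89794) * (1 + 5 / 27.89794) * (1 + 3 / 28.89794)) < 1 := by
  rw [baseRatio_sq]
  linarith [sqrt_seventeen_gt]

lemma coeffGrowth_eq : coeffGrowth = (baseRatio / 2) ^ 5 *
    (33.89794 ^ 6 * 32.89794 ^ 5 * 31.89794 ^ 4 * 26.89794 /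
      (7 ^ 7 * 5 ^ 5 * 3 ^ 3 * 28.89794)) := by
  rw [coeffGrowth, binomGrowth]
  congr 1
  norm_num1

lemma coeffGrowth_pos : 0 < coeffGrowth := by
  have := baseRatio_pos
  rw [coeffGrowth_eq]
  positivity

lemma log_coeffGrowth_eq : Real.log coeffGrowth =
    5 * (Real.log baseRatio - Real.log 2) +
      (6 * Real.log 33.89794 + 5 * Real.log 32.89794 + 4 * Real.log 31.89794 +
        Real.log 26.89794 -
          (7 * Real.log 7 + 5 * Real.log 5 + 3 * Real.log 3 + Real.log 28.89794)) := by
  have hr := baseRatio_pos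
  rw [coeffGrowth_eq, Real.log_mul (by positivity) (by positivity),
    Real.log_div (by positivity) (by positivity), Real.log_pow, Real.log_div hr.ne' two_ne_zero]
  repeat rw [Real.log_mul (by norm_num1) (by norm_num1)]
  simp only [Real.log_pow, Nat.cast_ofNat]

lemma log_coeffGrowth_le : Real.log coeffGrowth ≤ 22.718156 := by
  have h33 : Real.log 33.89794 ≤ 3.523354247 := by
    apply log_le_of_mul_one_sub_le (t := 0.0288012039) (k := 5) <;> norm_num [sum_range_succ]
  have h32 : Real.log 32.89794 ≤ 3.493410044 := by
    apply log_le_of_mul_one_sub_le (t := 0.0138361865) (k := 5) <;> norm_num [sum_range_succ]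
  have h31 : Real.log 31.89794 ≤ 3.462541448 := by
    apply log_le_of_mul_one_sub_le (t := 0.3319128130) (k := 4) <;> norm_num [sum_range_succ]
  have h26 : Real.log 26.89794 ≤ 3.292049705 := by
    apply log_le_of_mul_one_sub_le (t := 0.2540434343) (k := 4) <;> norm_num [sum_range_succ]
  have h28 : 3.363770311 ≤ Real.log 28.89794 := by
    apply le_log_of_le_mul_one_sub (t := 0.2872724227) (k := 4) <;> norm_num [sum_range_succ]
  have h7 : 1.945910148 ≤ Real.log 7 := by
    apply le_log_of_le_mul_one_sub (t := 0.2727272727) (k := 2) <;> norm_num [sum_range_succ]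
  have h5 : 1.609437911 ≤ Real.log 5 := by
    apply le_log_of_le_mul_one_sub (t := 0.1111111111) (k := 2) <;> norm_num [sum_range_succ]
  have h3 : 1.098612288 ≤ Real.log 3 := by
    apply le_log_of_le_mul_one_sub (t := 0.2) (k := 1) <;> norm_num [sum_range_succ]
  rw [log_coeffGrowth_eq]
  linarith [log_baseRatio_le, Real.log_two_gt_d9]

end FormGrowth

section Main

open Filter Asymptotics

lemma eventually_mul_add_one_pow_le_exp (C : ℝ) (d : ℕ) {δ : ℝ} (hδ : 0 < δ) :
    ∀ᶠ N : ℕ in atTop, C * ((N : ℝ) + 1) ^ d ≤ Real.exp (δ * N) := by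
  have hshift : Tendsto (fun N : ℕ => (N : ℝ) + 1) atTop atTop :=
    tendsto_atTop_add_const_right _ _ tendsto_natCast_atTop_atTop
  have hexp : (fun N : ℕ => Real.exp (δ * ((N : ℝ) + 1))) =O[atTop]
      fun N : ℕ => Real.exp (δ * N) :=
    (isBigO_const_mul_self (Real.exp δ) _ _).congr_left fun N => by
      rw [← Real.exp_add, mul_add_one, add_comm]
  have hpow := (((isLittleO_pow_exp_pos_mul_atTop d hδ).comp_tendsto hshift).const_mul_left
    C).trans_isBigO hexp
  filter_upwards [hpow.bound one_pos] with N hN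
  rw [one_mul, Real.norm_of_nonneg (Real.exp_pos _).le] at hN
  exact (le_abs_self _).trans hN

lemma pow_le_exp_mul_of_log_le {b L : ℝ} (hb : 0 < b) (h : Real.log b ≤ L) (n : ℕ) :
    b ^ n ≤ Real.exp (L * n) := by
  rw [mul_comm, Real.exp_nat_mul]
  exact pow_le_pow_left₀ hb.le ((Real.log_le_iff_le_exp hb).1 h) n

lemma eventually_reducedDenom_le_exp :
    ∀ᶠ n : ℕ in atTop, (reducedDenom n : ℝ) ≤ Real.exp (2.004901 * n) := by
  filter_upwards [eventually_log_reducedDenom_le (ε := 1e-6) (by norm_num1)] with n hn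
  rw [← Real.log_le_iff_le_exp (Nat.cast_pos.2 (Nat.pos_of_ne_zero (reducedDenom_ne_zero n)))]
  exact hn.trans_eq (by norm_num)

lemma eventually_abs_le_exp_of_hasSum_auxPoly (k : ℕ) : ∀ᶠ n : ℕ in atTop, ∀ B : ℤ,
    HasSum (fun j : ℕ =>
      ((reducedDenom n * (auxPoly n k).eval ((6 * n + j : ℕ) : ℚ) : ℚ) : ℝ) *
        baseRatio ^ (2 * j + 5 * n + 1)) ((if Even k then 1 else √17) * 2 ^ (5 * n + 1) * B) →
    |(B : ℝ)| ≤ Real.exp (24.723058 * n) := by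
  obtain ⟨C, hC⟩ := exists_abs_le_of_hasSum_auxPoly (c := 2) baseRatio_pos baseRatio_lt_one
    one_le_two (s := √17) (by linarith [sqrt_seventeen_gt]) (by norm_num1) (by norm_num1)
    (by norm_num1) baseRatio_sq_mul_weights_lt_one k
  filter_upwards [eventually_mul_add_one_pow_le_exp C k (δ := 1e-6) (by norm_num1),
    eventually_reducedDenom_le_exp] with n hpoly hdenom B hB
  have hpow := pow_le_exp_mul_of_log_le coeffGrowth_pos log_coeffGrowth_le n
  have := coeffGrowth_pos
  calc |(B : ℝ)| ≤ C * (n + 1) ^ k * reducedDenom n * coeffGrowth ^ n := hC n B hB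
    _ ≤ Real.exp (1e-6 * n) * Real.exp (2.004901 * n) * Real.exp (22.718156 * n) := by gcongr
    _ = Real.exp (24.723058 * n) := by
      rw [← Real.exp_add, ← Real.exp_add]
      ring_nf

lemma lineGrowth_mul_exp_pow_le (N : ℕ) :
    (lineGrowth 22.2346 * Real.exp (64 * (2 * Real.log baseRatio))) ^ N ≤
      Real.exp (-(11.980542 * 17) * N) *
        (2 ^ (5 * (17 * N) + 1) * baseRatio ^ (7 * (17 * N) - 1)) := by
  have hr := baseRatio_pos
  have hgrowth := lineGrowth_pos 22.2346
  have hlog : Real.log (lineGrowth 22.2346 * Real.exp (64 * (2 * Real.log baseRatio)) /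
      (2 ^ 85 * baseRatio ^ 119)) ≤ -(11.980542 * 17) := by
    rw [Real.log_div (by positivity) (by positivity), Real.log_mul (by positivity)
      (by positivity), Real.log_exp, Real.log_mul (by positivity) (by positivity), Real.log_pow,
      Real.log_pow]
    push_cast
    linarith [log_lineGrowth_le, log_baseRatio_le, Real.log_two_gt_d9]
  have hpow := pow_le_exp_mul_of_log_le (by positivity) hlog N
  rw [div_pow, div_le_iff₀ (by positivity), mul_pow (2 ^ 85), ← pow_mul, ← pow_mul] at hpow
  refine hpow.trans ?_
  gcongr ?_ * (?_ * ?_)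
  · exact pow_le_pow_right₀ one_le_two (by lia)
  · exact pow_le_pow_of_le_one hr.le baseRatio_lt_one.le (by lia)

lemma eventually_norm_polyExpDerivSum_le_exp (k : ℕ) : ∀ᶠ N : ℕ in atTop,
    √17 * (reducedDenom (17 * N) *
      ‖polyExpDerivSum (64 * N) (auxPoly (17 * N) k) (2 * Real.log baseRatio : ℝ)‖) ≤
      Real.exp (-(9.97564 * 17 * N)) *
        (2 ^ (5 * (17 * N) + 1) * baseRatio ^ (7 * (17 * N) - 1)) := by
  obtain ⟨C, hC⟩ := exists_norm_polyExpDerivSum_auxPoly_le pi_lt_lineDecay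
    (mul_neg_of_pos_of_neg two_pos (Real.log_neg baseRatio_pos baseRatio_lt_one)) k
  have h17 : Tendsto (fun N : ℕ => 17 * N) atTop atTop :=
    tendsto_id.const_mul_atTop' (by norm_num1)
  filter_upwards [eventually_mul_add_one_pow_le_exp (√17 * C) (6 + k) (δ := 17e-6) (by norm_num1),
    h17.eventually eventually_reducedDenom_le_exp, eventually_ge_atTop 1] with N hpoly hdenom hN
  set b := lineGrowth 22.2346 * Real.exp (64 * (2 * Real.log baseRatio))
  have hb : 0 ≤ b := mul_nonneg (lineGrowth_nonneg _) (Real.exp_pos _).le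
  set W := 2 ^ (5 * (17 * N) + 1) * baseRatio ^ (7 * (17 * N) - 1)
  have hpow : b ^ N ≤ Real.exp (-(11.980542 * 17) * N) * W := lineGrowth_mul_exp_pow_le N
  calc _ ≤ √17 * (reducedDenom (17 * N) * (C * (N + 1) ^ (6 + k) * b ^ N)) := by
        gcongr
        exact hC N hN
    _ = √17 * C * (N + 1) ^ (6 + k) * reducedDenom (17 * N) * b ^ N := by ring
    _ ≤ Real.exp (17e-6 * N) * Real.exp (2.004901 * (17 * N : ℕ)) *
        (Real.exp (-(11.980542 * 17) * N) * W) :=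
        mul_le_mul (mul_le_mul hpoly hdenom (Nat.cast_nonneg _) (Real.exp_pos _).le) hpow
          (pow_nonneg hb N) (by positivity)
    _ = Real.exp (-(9.97564 * 17 * N)) * W := by
        rw [← mul_assoc, ← Real.exp_add, ← Real.exp_add]
        push_cast
        ring_nf

end Main

theorem irrationality_measure_alpha_4 :
    ∀ κ : ℝ, κ > 3.47835 →
      {pq : ℤ × ℕ+ |
        |Real.sqrt 17 * Real.log ((Real.sqrt 17 - 1) / (Real.sqrt 17 + 1)) -
            (pq.1 : ℝ) / ((pq.2 : ℕ) : ℝ)| <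
          ((pq.2 : ℕ) : ℝ) ^ (-κ)}.Finite := by
  intro κ hκ
  rw [log_sqrt_seventeen_sub_one_div]
  refine finite_setOf_abs_sub_div_lt_of_linear_forms (σ := 24.723058 * 17) (τ := 9.97564 * 17)
    (by norm_num1) (by norm_num1) (lt_trans (by norm_num1) hκ) ?_
  have h17 : Filter.Tendsto (fun N : ℕ => 17 * N) .atTop .atTop :=
    Filter.tendsto_id.const_mul_atTop' (by norm_num1)
  filter_upwards [h17.eventually ((Filter.eventually_all_finite (Set.finite_Iic 2)).2
      fun j _ => eventually_abs_le_exp_of_hasSum_auxPoly j),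
    (Filter.eventually_all_finite (Set.finite_Iic 2)).2
      fun j _ => eventually_norm_polyExpDerivSum_le_exp j,
    Filter.eventually_ge_atTop 1] with N hcoeff hform hN p q
  obtain ⟨j, hj, A, B, hne, hsum, hbound⟩ := exists_linear_form (c := 2) (n := 17 * N)
    (k := 64 * N) baseRatio_pos baseRatio_lt_one (by exact_mod_cast baseRatio_div_one_sub_sq)
    one_add_baseRatio_sq_div (by lia) (by lia) p q
  rw [Int.cast_ofNat] at hsum hbound
  have hW : 0 < 2 ^ (5 * (17 * N) + 1) * baseRatio ^ (7 * (17 * N) - 1) :=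
    mul_pos (by positivity) (pow_pos baseRatio_pos _)
  refine ⟨A, B, hne, (hcoeff j hj B hsum).trans_eq ?_,
    le_of_mul_le_mul_right (hbound.trans (hform j hj)) hW⟩
  push_cast
  rw [mul_assoc]
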